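/- arXiv:1803.03369 — 2 statements merged into one kernel-verified Lean document; each statement's English description precedes it below -/
import Mathlib

section
/- Let n ≥ 1 be an integer and let s > n/2. Suppose F : (0,∞) → ℂ is a bounded function admitting the representation F(λ) = ∫_ℝ h(u) λ^{iu} du for all λ > 0, where h : ℝ → ℂ is measurable with C_{h,s} = ∫_ℝ (1+|u|)^s |h(u)| du < ∞. Then for every 1 < r < ∞ there exists a constant C = C(n,r,s) such that for every Schwartz function f on ℝⁿ, ‖ sup_{t>0} | ∫_{ℝⁿ} F(t|ξ|²) f̂(ξ) e^{2πi⟨x,ξ⟩} dξ | ‖_{L^r(ℝⁿ, dx)} ≤ C · C_{h,s} · ‖f‖_{L^r(ℝⁿ)}. -/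
open MeasureTheory Complex Filter
open scoped FourierTransform RealInnerProductSpace ENNReal Topology

/-!
Normalise `Δ` so that `-Δ` has symbol `‖ξ‖ ^ 2`. Then
`F (-tΔ) f = ∫ h u * t ^ (iu) * (-Δ) ^ (iu) f du` with `|t ^ (iu)| = 1`, so the maximal function is
pointwise at most `∫ |h u| |(-Δ) ^ (iu) f| du`, and Minkowski's inequality reduces the theorem to
the bound `O((1 + |u|) ^ s)`, `s > n / 2`, for the norms of the imaginary powers `(-Δ) ^ (iu)` on
`L ^ r`.

The imaginary powers are contractions on `L ^ 2`. For `Re a > 0` the operator `(-Δ) ^ (-a)` is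
convolution with the Riesz kernel `c(n, a) ‖x‖ ^ (2a - n)`, obtained by subordination to the heat
kernel; the reflection formula for the Gamma function gives
`|c(n, a)| = O((1 + |Im a|) ^ (n / 2))` on the imaginary axis, and the kernel satisfies Hörmander's
condition with an arbitrarily small additional power of `|Im a|`. Letting `Re a → 0` in the
Calderón–Zygmund argument gives the weak type `(1, 1)` bound for `(-Δ) ^ (iu)`, hence the `L ^ r`
bound by Marcinkiewicz interpolation for `r < 2` and by duality for `r > 2`.
-/

namespace MellinMaximal

open Module
open scoped Convolution

/-! ### Gamma factors on vertical lines -/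

lemma norm_Gamma_half_add_I_mul_sq (u : ℝ) :
    ‖Gamma (1 / 2 + I * u)‖ ^ 2 * Real.cosh (Real.pi * u) = Real.pi := by
  have reflection := Complex.Gamma_mul_Gamma_one_sub (1 / 2 + I * u)
  have hconj : (1 - (1 / 2 + I * u) : ℂ) = (starRingEnd ℂ) (1 / 2 + I * u) := by
    simp only [map_add, map_mul, map_div₀, map_one, map_ofNat, Complex.conj_I, Complex.conj_ofReal]
    ring
  have hsin : sin (Real.pi * (1 / 2 + I * u)) = Real.cosh (Real.pi * u) := by
    rw [show (Real.pi * (1 / 2 + I * u) : ℂ) = (Real.pi * u) * I + Real.pi / 2 by ring,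
      Complex.sin_add_pi_div_two, Complex.cos_mul_I]
    push_cast
    rfl
  rw [hconj, Complex.Gamma_conj, Complex.mul_conj, hsin, eq_div_iff
    (by exact_mod_cast (Real.cosh_pos _).ne'), Complex.normSq_eq_norm_sq] at reflection
  exact_mod_cast reflection

lemma norm_Gamma_I_mul_sq {u : ℝ} (hu : u ≠ 0) :
    ‖Gamma (I * u)‖ ^ 2 * (u * Real.sinh (Real.pi * u)) = Real.pi := by
  have reflection := Complex.Gamma_mul_Gamma_one_sub (I * u)
  have hu' : -(I * u : ℂ) ≠ 0 := neg_ne_zero.2 (mul_ne_zero I_ne_zero (by exact_mod_cast hu))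
  have hsin : sin (Real.pi * (I * u)) = Real.sinh (Real.pi * u) * I := by
    rw [show (Real.pi * (I * u) : ℂ) = (Real.pi * u) * I by ring, Complex.sin_mul_I]
    push_cast
    rfl
  have hsinh : (Real.sinh (Real.pi * u) : ℂ) ≠ 0 := by
    exact_mod_cast Real.sinh_eq_zero.not.2 (mul_ne_zero Real.pi_ne_zero hu)
  rw [show (1 - I * u : ℂ) = -(I * u) + 1 by ring, Complex.Gamma_add_one _ hu',
    show (-(I * u) : ℂ) = (starRingEnd ℂ) (I * u) by simp, Complex.Gamma_conj, hsin,
    eq_div_iff (mul_ne_zero hsinh I_ne_zero)] at reflection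
  have key : ((‖Gamma (I * u)‖ ^ 2 * (u * Real.sinh (Real.pi * u)) : ℝ) : ℂ) = Real.pi := by
    rw [← reflection, map_mul, Complex.conj_I, Complex.conj_ofReal, ofReal_mul, ofReal_pow,
      ← Complex.mul_conj', ofReal_mul]
    linear_combination (Gamma (I * u) * (starRingEnd ℂ) (Gamma (I * u)) * u *
      Real.sinh (Real.pi * u)) * Complex.I_sq
  exact_mod_cast key

lemma norm_Gamma_half_add_I_mul_le {u : ℝ} (hu : u ≠ 0) :
    ‖Gamma (1 / 2 + I * u)‖ ≤ (1 + |u|) ^ (1 / 2 : ℝ) * ‖Gamma (I * u)‖ := by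
  have hsinh : u * Real.sinh (Real.pi * u) ≤ (1 + |u|) * Real.cosh (Real.pi * u) := by
    have : |Real.sinh (Real.pi * u)| ≤ Real.cosh (Real.pi * u) := by
      rw [← abs_of_pos (Real.cosh_pos _), ← sq_le_sq, Real.cosh_sq]
      linarith
    calc u * Real.sinh (Real.pi * u) ≤ |u| * |Real.sinh (Real.pi * u)| := by
          rw [← abs_mul]; exact le_abs_self _
      _ ≤ (1 + |u|) * Real.cosh (Real.pi * u) := by gcongr; linarith
  have hsq : ‖Gamma (1 / 2 + I * u)‖ ^ 2 ≤ (1 + |u|) * ‖Gamma (I * u)‖ ^ 2 := by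
    refine le_of_mul_le_mul_right ?_ (Real.cosh_pos (Real.pi * u))
    calc ‖Gamma (1 / 2 + I * u)‖ ^ 2 * Real.cosh (Real.pi * u)
        = ‖Gamma (I * u)‖ ^ 2 * (u * Real.sinh (Real.pi * u)) := by
          rw [norm_Gamma_half_add_I_mul_sq, norm_Gamma_I_mul_sq hu]
      _ ≤ ‖Gamma (I * u)‖ ^ 2 * ((1 + |u|) * Real.cosh (Real.pi * u)) := by gcongr
      _ = (1 + |u|) * ‖Gamma (I * u)‖ ^ 2 * Real.cosh (Real.pi * u) := by ring
  refine le_of_sq_le_sq ?_ (by positivity)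
  rwa [mul_pow, ← Real.sqrt_eq_rpow, Real.sq_sqrt (by positivity)]

lemma exists_norm_Gamma_half_nat_add_I_mul_le (n : ℕ) : ∃ C : ℝ, 0 < C ∧ ∀ u : ℝ, u ≠ 0 →
    ‖Gamma (n / 2 + I * u)‖ ≤ C * (1 + |u|) ^ (n / 2 : ℝ) * ‖Gamma (I * u)‖ := by
  induction n using Nat.twoStepInduction with
  | zero => exact ⟨1, one_pos, fun u _ => by simp⟩
  | one => exact ⟨1, one_pos, fun u hu => by simpa using norm_Gamma_half_add_I_mul_le hu⟩
  | more n ih _ =>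
    obtain ⟨C, hC, bound⟩ := ih
    refine ⟨(n / 2 + 1) * C, by positivity, fun u hu => ?_⟩
    have hz : (n / 2 + I * u : ℂ) ≠ 0 := fun h0 => hu (by simpa using congrArg Complex.im h0)
    have hfactor : ‖(n / 2 + I * u : ℂ)‖ ≤ (n / 2 + 1) * (1 + |u|) := by
      refine (norm_add_le _ _).trans ?_
      simp only [norm_div, Complex.norm_natCast, norm_mul, Complex.norm_I, Complex.norm_real,
        Real.norm_eq_abs, Complex.norm_ofNat]
      nlinarith [abs_nonneg u, mul_nonneg (Nat.cast_nonneg (α := ℝ) n) (abs_nonneg u)]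
    calc ‖Gamma ((n + 2 : ℕ) / 2 + I * u)‖
        = ‖(n / 2 + I * u : ℂ)‖ * ‖Gamma (n / 2 + I * u)‖ := by
          rw [← norm_mul, ← Complex.Gamma_add_one _ hz]
          push_cast
          ring_nf
      _ ≤ (n / 2 + 1) * (1 + |u|) * (C * (1 + |u|) ^ (n / 2 : ℝ) * ‖Gamma (I * u)‖) := by
          gcongr
          exact bound u hu
      _ = (n / 2 + 1) * C * (1 + |u|) ^ ((n + 2 : ℕ) / 2 : ℝ) * ‖Gamma (I * u)‖ := by
          rw [show ((n + 2 : ℕ) / 2 : ℝ) = n / 2 + 1 by push_cast; ring,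
            Real.rpow_add_one (by positivity)]
          ring

/-- The constant `π ^ (2a - n/2) Γ(n/2 - a) / Γ(a)` whose product with `‖x‖ ^ (2a - n)` has Fourier
transform `‖ξ‖ ^ (-2a)` in dimension `n`. -/
noncomputable def rieszConst (n : ℕ) (a : ℂ) : ℂ :=
  (Real.pi : ℂ) ^ (2 * a - n / 2) * (Gamma (n / 2 - a) * (Gamma a)⁻¹)

lemma exists_norm_rieszConst_le (n : ℕ) : ∃ C : ℝ, 0 < C ∧ ∀ u : ℝ,
    ‖rieszConst n (-(I * u))‖ ≤ C * (1 + |u|) ^ (n / 2 : ℝ) := by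
  obtain ⟨C, hC, bound⟩ := exists_norm_Gamma_half_nat_add_I_mul_le n
  refine ⟨Real.pi ^ (-(n / 2) : ℝ) * C, by positivity, fun u => ?_⟩
  rcases eq_or_ne u 0 with rfl | hu
  · simp only [rieszConst, ofReal_zero, mul_zero, neg_zero, Complex.Gamma_zero, inv_zero, norm_zero]
    positivity
  have hGamma : 0 < ‖Gamma (I * u)‖ := norm_pos_iff.2 <| Complex.Gamma_ne_zero fun m h0 =>
    hu (by simpa using congrArg Complex.im h0)
  have hconj : ‖Gamma (-(I * u))‖ = ‖Gamma (I * u)‖ := by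
    rw [show (-(I * u) : ℂ) = (starRingEnd ℂ) (I * u) by simp, Complex.Gamma_conj,
      RCLike.norm_conj]
  have hpi : ‖(Real.pi : ℂ) ^ (2 * -(I * u) - n / 2 : ℂ)‖ = Real.pi ^ (-(n / 2) : ℝ) := by
    rw [Complex.norm_cpow_eq_rpow_re_of_pos Real.pi_pos]
    simp
  rw [rieszConst, norm_mul, norm_mul, sub_neg_eq_add, norm_inv, hconj, hpi, mul_assoc,
    ← div_eq_mul_inv]
  gcongr
  exact (div_le_iff₀ hGamma).2 (bound u hu)

lemma continuousAt_rieszConst {n : ℕ} {a : ℂ} (ha : a.re < n / 2) :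
    ContinuousAt (rieszConst n) a := by
  have hGamma : ContinuousAt Gamma (n / 2 - a) := by
    refine (Complex.differentiableAt_Gamma _ fun m h0 => ?_).continuousAt
    have hre := congrArg Complex.re h0
    simp only [sub_re, div_ofNat_re, natCast_re, neg_re] at hre
    linarith [Nat.cast_nonneg (α := ℝ) m]
  refine (ContinuousAt.const_cpow (by fun_prop) (Or.inl ?_)).mul
    ((hGamma.comp (f := fun a : ℂ => (n / 2 - a : ℂ)) (by fun_prop)).mul
      Complex.differentiable_one_div_Gamma.continuous.continuousAt)
  exact_mod_cast Real.pi_ne_zero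

/-! ### Riesz kernels and powers of the Laplacian -/

section Subordination

lemma integrableOn_cpow_mul_cexp_neg_mul {c : ℂ} (hc : 0 < c.re) {b : ℝ} (hb : 0 < b) :
    IntegrableOn (fun t : ℝ => (t : ℂ) ^ (c - 1) * cexp (-(b * t))) (Set.Ioi 0) := by
  have hmeas : Measurable fun t : ℝ => (t : ℂ) ^ (c - 1) * cexp (-(b * t)) := by fun_prop
  have hnorm : IntegrableOn (fun t : ℝ => t ^ (c.re - 1) * Real.exp (-b * t)) (Set.Ioi 0) := by
    simpa using integrableOn_rpow_mul_exp_neg_mul_rpow (s := c.re - 1) (by linarith) zero_lt_one hb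
  refine hnorm.mono' hmeas.aestronglyMeasurable ?_
  filter_upwards [ae_restrict_mem measurableSet_Ioi] with t ht
  rw [norm_mul, Complex.norm_cpow_eq_rpow_re_of_pos ht, Complex.norm_exp]
  simp

lemma integral_norm_cpow_mul_cexp_neg_mul {c : ℂ} (hc : 0 < c.re) {b : ℝ} (hb : 0 < b) :
    ∫ t in Set.Ioi (0 : ℝ), ‖(t : ℂ) ^ (c - 1) * cexp (-(b * t))‖ =
      b ^ (-c.re) * Real.Gamma c.re := by
  rw [Real.rpow_neg hb.le, ← Real.inv_rpow hb.le, ← one_div,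
    ← Real.integral_rpow_mul_exp_neg_mul_Ioi hc hb]
  refine setIntegral_congr_fun measurableSet_Ioi fun t ht => ?_
  simp only [norm_mul, Complex.norm_cpow_eq_rpow_re_of_pos ht, Complex.norm_exp]
  simp

lemma mellin_integral_cexp_neg_mul {α : Type*} [MeasurableSpace α] {μ : Measure α} [SFinite μ]
    {c : ℂ} (hc : 0 < c.re) {ψ : α → ℂ} (hψ : AEStronglyMeasurable ψ μ)
    {d : α → ℝ} (hd : Measurable d) (hd0 : ∀ᵐ y ∂μ, 0 < d y)
    (hint : Integrable (fun y => d y ^ (-c.re) * ‖ψ y‖) μ) :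
    mellin (fun t => ∫ y, cexp (-(d y * t)) * ψ y ∂μ) c =
      Gamma c * ∫ y, (1 / (d y : ℂ)) ^ c * ψ y ∂μ := by
  have hmeas : AEStronglyMeasurable
      (Function.uncurry fun (t : ℝ) y => (t : ℂ) ^ (c - 1) * cexp (-(d y * t)) * ψ y)
      ((volume.restrict (Set.Ioi 0)).prod μ) := by
    refine AEStronglyMeasurable.mul ?_ hψ.comp_snd
    exact Measurable.aestronglyMeasurable (by fun_prop)
  have hprod : Integrable
      (Function.uncurry fun (t : ℝ) y => (t : ℂ) ^ (c - 1) * cexp (-(d y * t)) * ψ y)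
      ((volume.restrict (Set.Ioi 0)).prod μ) := by
    refine (integrable_prod_iff' hmeas).2 ⟨?_, (hint.const_mul (Real.Gamma c.re)).congr ?_⟩
    · filter_upwards [hd0] with y hy
      exact (integrableOn_cpow_mul_cexp_neg_mul hc hy).mul_const (ψ y)
    · filter_upwards [hd0] with y hy
      simp only [Function.uncurry, norm_mul _ (ψ y)]
      rw [integral_mul_const, integral_norm_cpow_mul_cexp_neg_mul hc hy]
      ring
  calc mellin (fun t => ∫ y, cexp (-(d y * t)) * ψ y ∂μ) c
      = ∫ t in Set.Ioi (0 : ℝ), ∫ y, (t : ℂ) ^ (c - 1) * cexp (-(d y * t)) * ψ y ∂μ := by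
        simp only [mellin, mul_assoc, integral_const_mul, smul_eq_mul]
    _ = ∫ y, (Gamma c) * ((1 / (d y : ℂ)) ^ c * ψ y) ∂μ := by
        rw [integral_integral_swap hprod]
        refine integral_congr_ae ?_
        filter_upwards [hd0] with y hy
        rw [integral_mul_const, Complex.integral_cpow_mul_exp_neg_mul_Ioi hc hy]
        ring
    _ = _ := integral_const_mul _ _

end Subordination

lemma one_div_mul_sq_cpow {b r : ℝ} (hb : 0 < b) (hr : 0 < r) (c : ℂ) :
    (1 / ((b * r ^ 2 : ℝ) : ℂ)) ^ c = (b : ℂ) ^ (-c) * (r : ℂ) ^ (-(2 * c)) := by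
  have hcpow (x : ℝ) (hx : 0 < x) (w : ℂ) : (x : ℂ) ^ w = cexp (Real.log x * w) := by
    rw [cpow_def_of_ne_zero (by exact_mod_cast hx.ne'), ofReal_log hx.le]
  rw [one_div, ← ofReal_inv, hcpow _ (by positivity), hcpow _ hb, hcpow _ hr, ← Complex.exp_add,
    Real.log_inv, Real.log_mul hb.ne' (by positivity), Real.log_pow]
  push_cast
  ring_nf

lemma lintegral_mul_comp_sub_le {G : Type*} [AddCommGroup G] [MeasurableSpace G]
    [MeasurableAdd G] [MeasurableNeg G] {μ : Measure G} [μ.IsAddLeftInvariant] [μ.IsNegInvariant]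
    {w v : G → ℝ≥0∞} {A : Set G} {B M : ℝ≥0∞} (hA : MeasurableSet A) (hB : B ≠ ∞) (hM : M ≠ ∞)
    (hw : Measurable w) (hwM : ∀ x ∉ A, w x ≤ M) (hvB : ∀ x, v x ≤ B) (x : G) :
    ∫⁻ y, v y * w (x - y) ∂μ ≤ B * ∫⁻ y in A, w y ∂μ + M * ∫⁻ y, v y ∂μ := by
  have hcomp : Measurable fun y => A.indicator w (x - y) :=
    (hw.indicator hA).comp (measurable_id.const_sub x)
  have hsub (y : G) : v y * w (x - y) ≤ B * A.indicator w (x - y) + M * v y := by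
    by_cases hy : x - y ∈ A
    · rw [Set.indicator_of_mem hy]
      exact le_add_right (by gcongr; exact hvB y)
    · rw [mul_comm]
      exact le_add_left (by gcongr; exact hwM _ hy)
  calc ∫⁻ y, v y * w (x - y) ∂μ
      ≤ ∫⁻ y, B * A.indicator w (x - y) + M * v y ∂μ := lintegral_mono hsub
    _ = B * ∫⁻ y in A, w y ∂μ + M * ∫⁻ y, v y ∂μ := by
      rw [lintegral_add_left (hcomp.const_mul B),
        lintegral_const_mul' _ _ hB, lintegral_const_mul' _ _ hM,
        lintegral_sub_left_eq_self (μ := μ) (A.indicator w) x, lintegral_indicator hA]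

section Kernel

variable {E : Type*} [NormedAddCommGroup E] [InnerProductSpace ℝ E]

/-- The Riesz kernel of order `2a` on `E`, the convolution kernel of the Fourier multiplier
`‖ξ‖ ^ (-2a)`. -/
noncomputable def rieszKernel (a : ℂ) (x : E) : ℂ :=
  rieszConst (finrank ℝ E) a * (‖x‖ : ℂ) ^ (2 * a - finrank ℝ E)

lemma rieszKernel_neg (a : ℂ) (x : E) : rieszKernel a (-x) = rieszKernel a x := by
  simp only [rieszKernel, norm_neg]

lemma measurable_rieszKernel [MeasurableSpace E] [BorelSpace E] (a : ℂ) :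
    Measurable (rieszKernel (E := E) a) := by
  unfold rieszKernel
  fun_prop

end Kernel

variable {E : Type*} [NormedAddCommGroup E] [InnerProductSpace ℝ E] [FiniteDimensional ℝ E]
  [MeasurableSpace E] [BorelSpace E]

lemma lintegral_ball_norm_rpow_neg_lt_top {s : ℝ} (hn : 1 ≤ finrank ℝ E) (hs : s < finrank ℝ E) :
    ∫⁻ y in Metric.ball (0 : E) 1, ENNReal.ofReal (‖y‖ ^ (-s)) < ∞ := by
  have hmeas : Measurable fun y : E => ‖y‖ ^ (-s) := by fun_prop
  have hint := integrableOn_ball_of_norm_le_rpow (μ := (volume : Measure E)) (r := 1) hn hs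
    (f := fun y : E => ‖y‖ ^ (-s)) (C := 1) (ae_of_all _ fun x => by
      rw [one_mul, Real.norm_of_nonneg (by positivity)]) hmeas.aestronglyMeasurable
  exact (hasFiniteIntegral_iff_ofReal (ae_of_all _ fun x => by positivity)).1 hint.2

lemma integrable_norm_sub_rpow_neg_mul {s M : ℝ} (hs0 : 0 ≤ s) (hs : s < finrank ℝ E)
    {g : E → ℂ} (hg : Integrable g) (hM : ∀ x, ‖g x‖ ≤ M) (x : E) :
    Integrable fun y => ‖x - y‖ ^ (-s) * ‖g y‖ := by
  have hn : 1 ≤ finrank ℝ E := by exact_mod_cast hs0.trans_lt hs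
  have hmeas : Measurable fun y : E => ‖x - y‖ ^ (-s) := by fun_prop
  refine ⟨hmeas.aestronglyMeasurable.mul hg.1.norm, ?_⟩
  rw [hasFiniteIntegral_iff_ofReal (ae_of_all _ fun x => by positivity)]
  calc ∫⁻ y, ENNReal.ofReal (‖x - y‖ ^ (-s) * ‖g y‖)
      = ∫⁻ y, ‖g y‖ₑ * ENNReal.ofReal (‖x - y‖ ^ (-s)) := by
        refine lintegral_congr fun y => ?_
        rw [mul_comm, ENNReal.ofReal_mul (norm_nonneg _), ofReal_norm]
    _ ≤ ENNReal.ofReal M * (∫⁻ y in Metric.ball (0 : E) 1, ENNReal.ofReal (‖y‖ ^ (-s))) +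
          1 * ∫⁻ y, ‖g y‖ₑ := by
        refine lintegral_mul_comp_sub_le (w := fun y : E => ENNReal.ofReal (‖y‖ ^ (-s)))
          measurableSet_ball ENNReal.ofReal_ne_top ENNReal.one_ne_top (by fun_prop)
          (fun z hz => ENNReal.ofReal_le_one.2 ?_) (fun y => ?_) x
        · rw [mem_ball_zero_iff, not_lt] at hz
          exact Real.rpow_le_one_of_one_le_of_nonpos hz (by linarith)
        · exact (ofReal_norm (g y)).symm.trans_le (ENNReal.ofReal_le_ofReal (hM y))
    _ < ∞ := by
        rw [one_mul]
        exact ENNReal.add_lt_top.2 ⟨ENNReal.mul_lt_top ENNReal.ofReal_lt_top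
          (lintegral_ball_norm_rpow_neg_lt_top hn hs), hg.2⟩

lemma ae_norm_sub_pos [Nontrivial E] (x : E) : ∀ᵐ y : E, 0 < ‖x - y‖ := by
  filter_upwards [Measure.ae_ne volume x] with y hy
  exact norm_sub_pos_iff.2 hy.symm

lemma mellin_integral_gaussian_mul {c : ℂ} (hc : 0 < c.re) (hc' : 2 * c.re < finrank ℝ E)
    {ψ : E → ℂ} (hψ : Integrable ψ) {M : ℝ} (hM : ∀ y, ‖ψ y‖ ≤ M) (x : E) :
    mellin (fun t => ∫ y, cexp (-((Real.pi * ‖x - y‖ ^ 2 : ℝ) * t)) * ψ y) c =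
      Real.pi ^ (-c) * Gamma c * ∫ y, ψ y * (‖x - y‖ : ℂ) ^ (-(2 * c)) := by
  have : Nontrivial E := nontrivial_of_finrank_pos (R := ℝ)
    (by exact_mod_cast (by linarith : (0 : ℝ) < finrank ℝ E))
  have hint : Integrable fun y => (Real.pi * ‖x - y‖ ^ 2) ^ (-c.re) * ‖ψ y‖ := by
    refine ((integrable_norm_sub_rpow_neg_mul (by linarith) hc' hψ hM x).const_mul
      (Real.pi ^ (-c.re))).congr (ae_of_all _ fun y => ?_)
    simp only
    rw [Real.mul_rpow Real.pi_pos.le (by positivity), ← Real.rpow_natCast,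
      ← Real.rpow_mul (norm_nonneg _)]
    push_cast
    ring_nf
  rw [mellin_integral_cexp_neg_mul hc hψ.1 (by fun_prop)
    ((ae_norm_sub_pos x).mono fun y hy => by positivity) hint]
  calc Gamma c * ∫ y, (1 / ((Real.pi * ‖x - y‖ ^ 2 : ℝ) : ℂ)) ^ c * ψ y
      = Gamma c * ∫ y, (Real.pi : ℂ) ^ (-c) * (ψ y * (‖x - y‖ : ℂ) ^ (-(2 * c))) := by
        congr 1
        refine integral_congr_ae ((ae_norm_sub_pos x).mono fun y hy => ?_)
        simp only
        rw [one_div_mul_sq_cpow Real.pi_pos hy]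
        ring
    _ = _ := by rw [integral_const_mul]; ring

lemma integral_fourier_mul_eq {f g : E → ℂ} (hf : Integrable f) (hg : Integrable g) :
    ∫ ξ, 𝓕 f ξ * g ξ = ∫ x, f x * 𝓕 g x := by
  simpa using! VectorFourier.integral_fourierIntegral_smul_eq_flip (L := innerₗ E)
    Real.continuous_fourierChar continuous_inner hf hg

lemma integral_gaussian_mul_fourier {f : E → ℂ} (hf : Integrable f) (x : E) {t : ℝ} (ht : 0 < t) :
    ∫ ξ, cexp (-((Real.pi * ‖ξ‖ ^ 2 : ℝ) * t)) * (cexp (2 * Real.pi * I * ⟪x, ξ⟫) * 𝓕 f ξ) =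
      (t : ℂ) ^ (-(finrank ℝ E / 2) : ℂ) •
        ∫ y, cexp (-((Real.pi * ‖x - y‖ ^ 2 : ℝ) * (t⁻¹ : ℝ))) * f y := by
  have hpi : (Real.pi : ℂ) ≠ 0 := by exact_mod_cast Real.pi_ne_zero
  have ht' : (t : ℂ) ≠ 0 := by exact_mod_cast ht.ne'
  have hb : 0 < ((Real.pi * t : ℝ) : ℂ).re := by rw [ofReal_re]; positivity
  have hpow : ((Real.pi : ℂ) / (Real.pi * t : ℝ)) ^ (finrank ℝ E / 2 : ℂ) =
      (t : ℂ) ^ (-(finrank ℝ E / 2) : ℂ) := by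
    rw [ofReal_mul, div_mul_cancel_left₀ hpi, Complex.inv_cpow, Complex.cpow_neg]
    rw [Complex.arg_ofReal_of_nonneg ht.le]
    exact Real.pi_ne_zero.symm
  calc _ = ∫ ξ, 𝓕 f ξ * cexp (-(Real.pi * t : ℝ) * ‖ξ‖ ^ 2 + 2 * Real.pi * I * ⟪x, ξ⟫) := by
        refine integral_congr_ae (ae_of_all _ fun ξ => ?_)
        simp only [Complex.exp_add]
        push_cast
        ring_nf
    _ = ∫ y, f y * ((t : ℂ) ^ (-(finrank ℝ E / 2) : ℂ) *
          cexp (-((Real.pi * ‖x - y‖ ^ 2 : ℝ) * (t⁻¹ : ℝ)))) := by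
        rw [integral_fourier_mul_eq hf (GaussianFourier.integrable_cexp_neg_mul_sq_norm_add hb _ _)]
        refine integral_congr_ae (ae_of_all _ fun y => ?_)
        simp only [fourier_gaussian_innerProductSpace' hb x, hpow]
        congr 3
        push_cast
        field_simp
    _ = _ := by
        rw [← integral_smul]
        refine integral_congr_ae (ae_of_all _ fun y => ?_)
        simp only [smul_eq_mul]
        ring

/-- The Fourier multiplier `(-Δ) ^ w`, normalised so that its symbol is `‖ξ‖ ^ (2w)`. -/
noncomputable def laplacianPow (w : ℂ) (f : E → ℂ) : E → ℂ :=
  𝓕⁻ fun ξ => (‖ξ‖ : ℂ) ^ (2 * w) * 𝓕 f ξ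

lemma mellin_integral_gaussian_mul_fourier {f : E → ℂ} (hf : Integrable f) (x : E) (a : ℂ) :
    mellin (fun t => ∫ ξ, cexp (-((Real.pi * ‖0 - ξ‖ ^ 2 : ℝ) * t)) *
        (cexp (2 * Real.pi * I * ⟪x, ξ⟫) * 𝓕 f ξ)) a =
      mellin (fun t => ∫ y, cexp (-((Real.pi * ‖x - y‖ ^ 2 : ℝ) * t)) * f y)
        (finrank ℝ E / 2 - a) := by
  rw [show (finrank ℝ E / 2 - a : ℂ) = -(a + -(finrank ℝ E / 2 : ℂ)) by ring, ← mellin_comp_inv,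
    ← mellin_cpow_smul]
  refine setIntegral_congr_fun measurableSet_Ioi fun t ht => ?_
  simp only [zero_sub, norm_neg]
  exact congrArg _ (integral_gaussian_mul_fourier hf x ht)

lemma norm_cexp_two_pi_I_mul_mul (y : ℝ) (z : ℂ) :
    ‖cexp (2 * Real.pi * I * y) * z‖ = ‖z‖ := by
  simp [Complex.norm_exp]

lemma integrable_cexp_inner_mul_fourier (φ : SchwartzMap E ℂ) (x : E) :
    Integrable fun ξ => cexp (2 * Real.pi * I * ⟪x, ξ⟫) * 𝓕 (φ : E → ℂ) ξ := by
  refine (integrable_norm_iff ?_).1 ((𝓕 φ).integrable.norm.congr (ae_of_all _ fun ξ => ?_))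
  · exact Continuous.aestronglyMeasurable (.mul (by fun_prop) (𝓕 φ).continuous)
  · exact (norm_cexp_two_pi_I_mul_mul ⟪x, ξ⟫ _).symm

theorem laplacianPow_neg_eq_convolution_rieszKernel {a : ℂ} (ha : 0 < a.re)
    (ha' : 2 * a.re < finrank ℝ E) (φ : SchwartzMap E ℂ) (x : E) :
    laplacianPow (-a) φ x = (φ ⋆[.mul ℂ ℂ] rieszKernel a) x := by
  have hpi : (Real.pi : ℂ) ≠ 0 := by exact_mod_cast Real.pi_ne_zero
  have hGamma : Gamma a ≠ 0 := Complex.Gamma_ne_zero_of_re_pos ha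
  set c : ℂ := finrank ℝ E / 2 - a with hc
  have hcre : c.re = finrank ℝ E / 2 - a.re := by simp [hc]
  have hpow : (Real.pi : ℂ) ^ (-c) = Real.pi ^ (-a) * Real.pi ^ (2 * a - finrank ℝ E / 2) := by
    rw [← Complex.cpow_add _ _ hpi, hc]
    ring_nf
  set ψ : E → ℂ := fun ξ => cexp (2 * Real.pi * I * ⟪x, ξ⟫) * 𝓕 (φ : E → ℂ) ξ with hψ
  have hmellin := mellin_integral_gaussian_mul_fourier φ.integrable x a
  rw [mellin_integral_gaussian_mul ha ha' (integrable_cexp_inner_mul_fourier φ x)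
      (fun ξ => (norm_cexp_two_pi_I_mul_mul ⟪x, ξ⟫ _).trans_le ((𝓕 φ).norm_le_seminorm ℝ ξ)), ← hc,
    mellin_integral_gaussian_mul (by linarith) (by linarith) φ.integrable
      (φ.norm_le_seminorm ℝ), hpow] at hmellin
  have hmultiplier : laplacianPow (-a) φ x = ∫ ξ, ψ ξ * (‖0 - ξ‖ : ℂ) ^ (-(2 * a)) := by
    simp only [laplacianPow, Real.fourierInv_eq', hψ, zero_sub, norm_neg, smul_eq_mul,
      real_inner_comm x]
    refine integral_congr_ae (ae_of_all _ fun ξ => ?_)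
    push_cast
    ring_nf
  have hconvolution : (φ ⋆[.mul ℂ ℂ] rieszKernel a) x =
      rieszConst (finrank ℝ E) a * ∫ y, φ y * (‖x - y‖ : ℂ) ^ (-(2 * c)) := by
    rw [← integral_const_mul]
    refine integral_congr_ae (ae_of_all _ fun y => ?_)
    simp only [ContinuousLinearMap.mul_apply', rieszKernel, hc]
    ring_nf
  rw [hmultiplier, hconvolution]
  refine mul_left_cancel₀ (mul_ne_zero (cpow_ne_zero_iff.2 (Or.inl hpi)) hGamma)
    (hmellin.trans ?_)
  rw [rieszConst, ← hc]
  field_simp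

/-! ### Plancherel identities -/

section Plancherel

variable {E : Type*} [NormedAddCommGroup E] [InnerProductSpace ℝ E] [FiniteDimensional ℝ E]
  [MeasurableSpace E] [BorelSpace E]

lemma eLpNorm_two_eq_of_integral_mul_fourier {w G : E → ℂ} (hw : LocallyIntegrable w)
    (hG : MemLp G 2) (h : ∀ φ : SchwartzMap E ℂ, ∫ x, w x * φ x = ∫ ξ, G ξ * 𝓕 φ ξ) :
    eLpNorm w 2 = eLpNorm G 2 := by
  set W : Lp ℂ 2 (volume : Measure E) := 𝓕 (hG.toLp G) with hW
  have hWw : W =ᵐ[volume] w := by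
    refine ae_eq_of_integral_contDiff_smul_eq ((Lp.memLp W).locallyIntegrable (by norm_num)) hw
      fun g g_smooth g_cpt => ?_
    have hg_cpt : HasCompactSupport (Complex.ofRealCLM ∘ g) := g_cpt.comp_left rfl
    have hg_smooth : ContDiff ℝ (⊤ : ℕ∞) (Complex.ofRealCLM ∘ g) := by fun_prop
    set φ : SchwartzMap E ℂ := hg_cpt.toSchwartzMap hg_smooth
    calc ∫ x, g x • W x = ∫ x, φ x • W x := by simp [φ]
      _ = ∫ ξ, 𝓕 φ ξ • hG.toLp G ξ := by
        rw [← Lp.toTemperedDistribution_apply, ← Lp.toTemperedDistribution_apply, hW,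
          ← Lp.fourier_toTemperedDistribution_eq, TemperedDistribution.fourier_apply]
      _ = ∫ ξ, G ξ * 𝓕 φ ξ := by
        refine integral_congr_ae ?_
        filter_upwards [hG.coeFn_toLp] with ξ hξ
        rw [hξ, smul_eq_mul, mul_comm]
      _ = ∫ x, g x • w x := by
        rw [← h]
        simp [φ, mul_comm]
  rw [← eLpNorm_congr_ae hWw, ← eLpNorm_congr_ae hG.coeFn_toLp]
  have hnorm : ‖W‖ = ‖hG.toLp G‖ := Lp.norm_fourier_eq _
  rwa [Lp.norm_def, Lp.norm_def, ENNReal.toReal_eq_toReal_iff' (Lp.eLpNorm_ne_top _)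
    (Lp.eLpNorm_ne_top _)] at hnorm

lemma continuous_fourier {g : E → ℂ} (hg : Integrable g) : Continuous (𝓕 g) :=
  VectorFourier.fourierIntegral_continuous Real.continuous_fourierChar continuous_inner hg

lemma eLpNorm_two_fourier {g : E → ℂ} (hg : Integrable g) (hg2 : MemLp g 2) :
    eLpNorm (𝓕 g) 2 = eLpNorm g 2 :=
  eLpNorm_two_eq_of_integral_mul_fourier (continuous_fourier hg).locallyIntegrable hg2
    fun φ => integral_fourier_mul_eq hg φ.integrable

lemma integral_fourierInv_mul_eq {f g : E → ℂ} (hf : Integrable f) (hg : Integrable g) :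
    ∫ ξ, 𝓕⁻ f ξ * g ξ = ∫ x, f x * 𝓕⁻ g x := by
  rw [Real.fourierInv_eq_fourier_comp_neg, integral_fourier_mul_eq hf.comp_neg hg,
    ← integral_neg_eq_self]
  simp only [neg_neg, Real.fourierInv_eq_fourier_neg]

lemma fourierInv_eq_fourier_comp_neg' (g : E → ℂ) : 𝓕⁻ g = 𝓕 g ∘ Neg.neg :=
  funext fun x => Real.fourierInv_eq_fourier_neg g x

lemma eLpNorm_two_fourierInv {g : E → ℂ} (hg : Integrable g) (hg2 : MemLp g 2) :
    eLpNorm (𝓕⁻ g) 2 = eLpNorm g 2 := by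
  rw [fourierInv_eq_fourier_comp_neg', ← eLpNorm_two_fourier hg hg2]
  exact eLpNorm_comp_measurePreserving (continuous_fourier hg).aestronglyMeasurable
    (Measure.measurePreserving_neg volume)

end Plancherel
section ImaginaryPower

variable {E : Type*} [NormedAddCommGroup E]

lemma norm_norm_cpow_two_mul_I_mul_le (u : ℝ) (ξ : E) : ‖(‖ξ‖ : ℂ) ^ (2 * (I * u))‖ ≤ 1 := by
  refine (Complex.norm_cpow_le _ _).trans ?_
  simp [Complex.arg_ofReal_of_nonneg (norm_nonneg ξ)]

lemma norm_norm_cpow_two_mul_I_mul (u : ℝ) {ξ : E} (hξ : ξ ≠ 0) :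
    ‖(‖ξ‖ : ℂ) ^ (2 * (I * u))‖ = 1 := by
  rw [Complex.norm_cpow_eq_rpow_re_of_pos (norm_pos_iff.2 hξ)]
  simp

variable [InnerProductSpace ℝ E] [FiniteDimensional ℝ E] [MeasurableSpace E] [BorelSpace E]
  (u : ℝ) (f : SchwartzMap E ℂ)

lemma memLp_norm_cpow_mul_fourier (p : ℝ≥0∞) :
    MemLp (fun ξ => (‖ξ‖ : ℂ) ^ (2 * (I * u)) * 𝓕 (f : E → ℂ) ξ) p := by
  refine ((𝓕 f).memLp p).of_le ?_ (ae_of_all _ fun ξ => ?_)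
  · exact (Measurable.aestronglyMeasurable (by fun_prop)).mul
      (continuous_fourier f.integrable).aestronglyMeasurable
  · rw [norm_mul, SchwartzMap.fourier_coe]
    exact mul_le_of_le_one_left (norm_nonneg _) (norm_norm_cpow_two_mul_I_mul_le u ξ)

lemma continuous_laplacianPow_I_mul : Continuous (laplacianPow (I * u) f) := by
  have hint := memLp_one_iff_integrable.1 (memLp_norm_cpow_mul_fourier u f 1)
  rw [laplacianPow, fourierInv_eq_fourier_comp_neg']
  exact (continuous_fourier hint).comp continuous_neg

lemma norm_laplacianPow_I_mul_le (x : E) :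
    ‖laplacianPow (I * u) f x‖ ≤ ∫ ξ, ‖𝓕 (f : E → ℂ) ξ‖ := by
  rw [laplacianPow, Real.fourierInv_eq_fourier_neg]
  refine (VectorFourier.norm_fourierIntegral_le_integral_norm _ _ _ _ _).trans ?_
  refine integral_mono (memLp_one_iff_integrable.1 (memLp_norm_cpow_mul_fourier u f 1)).norm
    (𝓕 f).integrable.norm fun ξ => ?_
  rw [norm_mul]
  exact mul_le_of_le_one_left (norm_nonneg _) (norm_norm_cpow_two_mul_I_mul_le u ξ)

lemma eLpNorm_two_laplacianPow_I_mul [Nontrivial E] :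
    eLpNorm (laplacianPow (I * u) f) 2 = eLpNorm f 2 := by
  have hint := memLp_one_iff_integrable.1 (memLp_norm_cpow_mul_fourier u f 1)
  rw [laplacianPow, eLpNorm_two_fourierInv hint (memLp_norm_cpow_mul_fourier u f 2),
    ← eLpNorm_two_fourier f.integrable (f.memLp 2)]
  refine eLpNorm_congr_norm_ae ?_
  filter_upwards [Measure.ae_ne volume (0 : E)] with ξ hξ
  rw [norm_mul, norm_norm_cpow_two_mul_I_mul u hξ, one_mul]

lemma integral_laplacianPow_I_mul_mul (φ : SchwartzMap E ℂ) :
    ∫ x, laplacianPow (I * u) f x * φ x = ∫ x, f x * laplacianPow (I * u) φ x := by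
  have hf := memLp_one_iff_integrable.1 (memLp_norm_cpow_mul_fourier u f 1)
  have hφ := memLp_one_iff_integrable.1 (memLp_norm_cpow_mul_fourier u φ 1)
  calc ∫ x, laplacianPow (I * u) f x * φ x
      = ∫ ξ, (‖ξ‖ : ℂ) ^ (2 * (I * u)) * 𝓕 (f : E → ℂ) ξ * 𝓕⁻ (φ : E → ℂ) ξ :=
        integral_fourierInv_mul_eq hf φ.integrable
    _ = ∫ ξ, 𝓕⁻ (f : E → ℂ) ξ * ((‖ξ‖ : ℂ) ^ (2 * (I * u)) * 𝓕 (φ : E → ℂ) ξ) := by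
        rw [← integral_neg_eq_self]
        refine integral_congr_ae (ae_of_all _ fun ξ => ?_)
        simp only [norm_neg, Real.fourierInv_eq_fourier_neg, neg_neg]
        ring
    _ = ∫ x, f x * laplacianPow (I * u) φ x := integral_fourierInv_mul_eq f.integrable hφ

end ImaginaryPower

section Duality

lemma eLpNorm_ofReal_rpow {α F : Type*} [MeasurableSpace α] {μ : Measure α} [NormedAddCommGroup F]
    {r : ℝ} (hr : 0 < r) (g : α → F) : eLpNorm g (.ofReal r) μ ^ r = ∫⁻ x, ‖g x‖ₑ ^ r ∂μ := by
  rw [eLpNorm_eq_lintegral_rpow_enorm_toReal (by simpa using hr) ENNReal.ofReal_ne_top,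
    ENNReal.toReal_ofReal hr.le, one_div, ENNReal.rpow_inv_rpow hr.ne']

lemma enorm_integral_norm_rpow {α : Type*} [MeasurableSpace α] {μ : Measure α} {p : ℝ}
    (hp : 0 < p) {G : α → ℂ} (hG : MemLp G (.ofReal p) μ) :
    ‖∫ x, ((‖G x‖ ^ p : ℝ) : ℂ) ∂μ‖ₑ = eLpNorm G (.ofReal p) μ ^ p := by
  have hint : Integrable (fun x => ‖G x‖ ^ p) μ := by
    simpa [hp.le] using hG.integrable_norm_rpow (by simpa using hp) ENNReal.ofReal_ne_top
  rw [integral_complex_ofReal, eLpNorm_ofReal_rpow hp, ← ofReal_norm, norm_real,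
    Real.norm_of_nonneg (integral_nonneg fun x => by positivity),
    ofReal_integral_eq_lintegral_ofReal hint (ae_of_all _ fun x => by positivity)]
  refine lintegral_congr fun x => ?_
  rw [← ENNReal.ofReal_rpow_of_nonneg (norm_nonneg _) hp.le, ofReal_norm]

lemma exists_memLp_integral_mul_eq_rpow {α : Type*} [MeasurableSpace α] {μ : Measure α} {p q : ℝ}
    (hpq : p.HolderConjugate q) {G : α → ℂ} (hG : MemLp G (.ofReal p) μ) :
    ∃ ψ : α → ℂ, MemLp ψ (.ofReal q) μ ∧
      eLpNorm ψ (.ofReal q) μ = eLpNorm G (.ofReal p) μ ^ (p - 1) ∧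
      ‖∫ x, G x * ψ x ∂μ‖ₑ = eLpNorm G (.ofReal p) μ ^ p := by
  have hp : 1 < p := hpq.lt
  set ψ : α → ℂ := fun x => (starRingEnd ℂ) (G x) * (‖G x‖ ^ (p - 2) : ℝ) with hψ
  have hψ_norm (x : α) : ‖ψ x‖ = ‖G x‖ ^ (p - 1) := by
    rw [norm_mul, RCLike.norm_conj, Complex.norm_real, Real.norm_of_nonneg (by positivity)]
    rcases (norm_nonneg (G x)).eq_or_lt with h0 | h0
    · rw [← h0, zero_mul, Real.zero_rpow (by linarith)]
    · rw [← Real.rpow_one_add' h0.le (by linarith)]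
      ring_nf
  have hψ_mul (x : α) : G x * ψ x = (‖G x‖ ^ p : ℝ) := by
    rw [hψ, ← mul_assoc, Complex.mul_conj, ← ofReal_mul, Complex.normSq_eq_norm_sq]
    rcases (norm_nonneg (G x)).eq_or_lt with h0 | h0
    · simp [← h0, hpq.ne_zero]
    · rw [← Real.rpow_natCast, ← Real.rpow_add h0]
      norm_num
  have hψ_enorm (x : α) : ‖ψ x‖ₑ ^ q = ‖G x‖ₑ ^ p := by
    rw [← ofReal_norm, hψ_norm, ← ENNReal.ofReal_rpow_of_nonneg (norm_nonneg _) (by linarith),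
      ← ENNReal.rpow_mul, ofReal_norm, hpq.sub_one_mul_conj]
  have hψ_eLp : eLpNorm ψ (.ofReal q) μ = eLpNorm G (.ofReal p) μ ^ (p - 1) := by
    refine ENNReal.rpow_left_injective hpq.symm.ne_zero ?_
    simp only
    rw [eLpNorm_ofReal_rpow hpq.symm.pos, ← ENNReal.rpow_mul, hpq.sub_one_mul_conj,
      eLpNorm_ofReal_rpow hpq.pos]
    simp only [hψ_enorm]
  refine ⟨ψ, ⟨?_, ?_⟩, hψ_eLp, ?_⟩
  · exact (Complex.continuous_conj.comp_aestronglyMeasurable hG.1).mul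
      (Complex.continuous_ofReal.comp_aestronglyMeasurable
        (hG.1.norm.aemeasurable.pow_const _).aestronglyMeasurable)
  · rw [hψ_eLp]
    exact ENNReal.rpow_lt_top_of_nonneg (by linarith) hG.2.ne
  · simp only [hψ_mul]
    exact enorm_integral_norm_rpow hpq.pos hG

variable {E : Type*} [NormedAddCommGroup E] [InnerProductSpace ℝ E] [FiniteDimensional ℝ E]
  [MeasurableSpace E] [BorelSpace E]

lemma enorm_integral_mul_le_of_schwartz {p q : ℝ≥0∞} [p.HolderConjugate q] (hq : q ≠ ∞)
    {G : E → ℂ} (hG : MemLp G p) {M : ℝ≥0∞} (hM : M ≠ ∞)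
    (h : ∀ φ : SchwartzMap E ℂ, ‖∫ x, G x * φ x‖ₑ ≤ M * eLpNorm φ q)
    {ψ : E → ℂ} (hψ : MemLp ψ q) : ‖∫ x, G x * ψ x‖ₑ ≤ M * eLpNorm ψ q := by
  have : Fact (1 ≤ p) := ⟨ENNReal.HolderConjugate.one_le p q⟩
  have : Fact (1 ≤ q) := ⟨ENNReal.HolderConjugate.one_le q p⟩
  set Λ := (ContinuousLinearMap.mul ℂ ℂ).lpPairing volume p q (hG.toLp G) with hΛ
  have hΛ_toLp {g : E → ℂ} (hg : MemLp g q) : Λ (hg.toLp g) = ∫ x, G x * g x := by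
    rw [hΛ, ContinuousLinearMap.lpPairing_eq_integral]
    refine integral_congr_ae ?_
    filter_upwards [hG.coeFn_toLp, hg.coeFn_toLp] with x hx hx'
    rw [hx, hx', ContinuousLinearMap.mul_apply']
  have hΛ_le (g : Lp ℂ q (volume : Measure E)) : ‖Λ g‖ₑ ≤ M * ‖g‖ₑ := by
    refine (SchwartzMap.denseRange_toLpCLM (F := ℂ) (μ := volume) hq).induction_on
      (p := fun g => ‖Λ g‖ₑ ≤ M * ‖g‖ₑ) g ?_ fun φ => ?_
    · exact isClosed_le (by fun_prop) ((ENNReal.continuous_const_mul hM).comp continuous_enorm)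
    · have := h φ
      rw [← hΛ_toLp (φ.memLp q), ← Lp.enorm_toLp (μ := volume) (hf := φ.memLp q)] at this
      exact this
  rw [← hΛ_toLp hψ, ← Lp.enorm_toLp (μ := volume) (hf := hψ)]
  exact hΛ_le _

lemma eLpNorm_le_of_schwartz {p q : ℝ} (hpq : p.HolderConjugate q) {G : E → ℂ}
    (hG : MemLp G (.ofReal p)) {M : ℝ≥0∞}
    (h : ∀ φ : SchwartzMap E ℂ, ‖∫ x, G x * φ x‖ₑ ≤ M * eLpNorm φ (.ofReal q)) :
    eLpNorm G (.ofReal p) ≤ M := by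
  rcases eq_or_ne M ∞ with rfl | hM
  · exact le_top
  rcases eq_or_ne (eLpNorm G (.ofReal p)) 0 with h0 | h0
  · exact h0.trans_le zero_le
  have := hpq.ennrealOfReal
  obtain ⟨ψ, hψ, hψ_norm, hψ_int⟩ := exists_memLp_integral_mul_eq_rpow hpq hG
  have hle := enorm_integral_mul_le_of_schwartz ENNReal.ofReal_ne_top hG hM h hψ
  rw [hψ_int, hψ_norm] at hle
  have hpos := ENNReal.rpow_pos (p := p - 1) (pos_iff_ne_zero.2 h0) hG.2.ne
  have hfin : eLpNorm G (.ofReal p) ^ (p - 1) ≠ ∞ :=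
    ENNReal.rpow_ne_top_of_nonneg (by linarith [hpq.lt]) hG.2.ne
  refine (ENNReal.mul_le_mul_iff_left hpos.ne' hfin).1 (le_of_eq_of_le ?_ hle)
  nth_rewrite 1 [← ENNReal.rpow_one (eLpNorm G (.ofReal p) volume)]
  rw [← ENNReal.rpow_add _ _ h0 hG.2.ne, add_sub_cancel]

lemma memLp_of_memLp_of_norm_le {α F : Type*} [MeasurableSpace α] {μ : Measure α}
    [NormedAddCommGroup F] {p q : ℝ} (hp : 0 < p) (hpq : p ≤ q) {g : α → F}
    (hg : MemLp g (.ofReal p) μ) {B : ℝ} (hB : ∀ x, ‖g x‖ ≤ B) : MemLp g (.ofReal q) μ := by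
  refine ⟨hg.1, (ENNReal.rpow_lt_top_iff_of_pos (hp.trans_le hpq)).1 ?_⟩
  rw [eLpNorm_ofReal_rpow (hp.trans_le hpq)]
  calc ∫⁻ x, ‖g x‖ₑ ^ q ∂μ ≤ ∫⁻ x, ENNReal.ofReal B ^ (q - p) * ‖g x‖ₑ ^ p ∂μ := by
        refine lintegral_mono fun x => ?_
        have hx : ‖g x‖ₑ ≤ ENNReal.ofReal B := by
          rw [← ofReal_norm]
          exact ENNReal.ofReal_le_ofReal (hB x)
        calc ‖g x‖ₑ ^ q = ‖g x‖ₑ ^ (q - p) * ‖g x‖ₑ ^ p := by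
              rw [← ENNReal.rpow_add_of_nonneg _ _ (sub_nonneg.2 hpq) hp.le, sub_add_cancel]
          _ ≤ _ := by gcongr
    _ < ∞ := by
        have hfin : ENNReal.ofReal B ^ (q - p) ≠ ∞ :=
          ENNReal.rpow_ne_top_of_nonneg (sub_nonneg.2 hpq) ENNReal.ofReal_ne_top
        rw [lintegral_const_mul' _ _ hfin, ← eLpNorm_ofReal_rpow hp]
        exact ENNReal.mul_lt_top hfin.lt_top (ENNReal.rpow_lt_top_of_nonneg hp.le hg.2.ne)

end Duality

/-! ### Convolution with Riesz kernels -/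

section Convolution

variable {G : Type*} [AddCommGroup G] [MeasurableSpace G] {μ : Measure G} {g k φ : G → ℂ}

lemma enorm_convolution_le (x : G) :
    ‖(g ⋆[.mul ℂ ℂ, μ] k) x‖ₑ ≤ ∫⁻ y, ‖g y‖ₑ * ‖k (x - y)‖ₑ ∂μ := by
  refine (enorm_integral_le_lintegral_enorm _).trans_eq ?_
  simp only [ContinuousLinearMap.mul_apply', enorm_mul]

variable [MeasurableSub₂ G]

lemma convolutionExistsAt_of_lintegral_ne_top (hg : AEStronglyMeasurable g μ) (hk : Measurable k)
    {x : G} (h : ∫⁻ y, ‖g y‖ₑ * ‖k (x - y)‖ₑ ∂μ ≠ ∞) :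
    ConvolutionExistsAt g k x (.mul ℂ ℂ) μ := by
  have hkx : Measurable fun y => k (x - y) := hk.comp (measurable_id.const_sub x)
  refine ⟨hg.mul hkx.aestronglyMeasurable, ?_⟩
  simpa only [HasFiniteIntegral, ContinuousLinearMap.mul_apply', enorm_mul] using h.lt_top

lemma aestronglyMeasurable_mul_comp_sub (hg : AEStronglyMeasurable g μ) (hk : Measurable k) :
    AEStronglyMeasurable (fun z : G × G => g z.2 * k (z.1 - z.2)) (μ.prod μ) :=
  hg.comp_snd.mul (hk.comp measurable_sub).aestronglyMeasurable

variable [SFinite μ]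

lemma aestronglyMeasurable_convolution (hg : AEStronglyMeasurable g μ) (hk : Measurable k) :
    AEStronglyMeasurable (g ⋆[.mul ℂ ℂ, μ] k) μ :=
  (aestronglyMeasurable_mul_comp_sub hg hk).integral_prod_right'

lemma integral_convolution_mul (hg : AEStronglyMeasurable g μ) (hk : Measurable k)
    (hk_even : ∀ x, k (-x) = k x) {B : ℝ≥0∞} (hB : B ≠ ∞)
    (hgk : ∀ x, ∫⁻ y, ‖g y‖ₑ * ‖k (x - y)‖ₑ ∂μ ≤ B) (hφ : Integrable φ μ) :
    ∫ x, (g ⋆[.mul ℂ ℂ, μ] k) x * φ x ∂μ = ∫ y, g y * (φ ⋆[.mul ℂ ℂ, μ] k) y ∂μ := by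
  have hmeas : AEStronglyMeasurable (Function.uncurry fun x y => g y * k (x - y) * φ x)
      (μ.prod μ) := (aestronglyMeasurable_mul_comp_sub hg hk).mul hφ.1.comp_fst
  have hprod : Integrable (Function.uncurry fun x y => g y * k (x - y) * φ x) (μ.prod μ) := by
    refine ⟨hmeas, ?_⟩
    rw [hasFiniteIntegral_iff_enorm, lintegral_prod _ hmeas.enorm]
    calc _ ≤ ∫⁻ x, B * ‖φ x‖ₑ ∂μ := by
          refine lintegral_mono fun x => ?_
          simp only [Function.uncurry_apply_pair, enorm_mul]
          rw [lintegral_mul_const' _ _ enorm_ne_top]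
          gcongr
          exact hgk x
      _ < ∞ := by
          rw [lintegral_const_mul' _ _ hB]
          exact ENNReal.mul_lt_top hB.lt_top hφ.2
  simp only [convolution, ContinuousLinearMap.mul_apply', ← integral_mul_const,
    ← integral_const_mul]
  rw [integral_integral_swap hprod]
  refine integral_congr_ae (ae_of_all _ fun y => integral_congr_ae (ae_of_all _ fun x => ?_))
  simp only
  rw [← hk_even, neg_sub]
  ring

end Convolution

variable {E : Type*} [NormedAddCommGroup E] [InnerProductSpace ℝ E]

lemma norm_rieszKernel {a : ℂ} (ha : 2 * a.re < finrank ℝ E) (x : E) :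
    ‖rieszKernel a x‖ = ‖rieszConst (finrank ℝ E) a‖ * ‖x‖ ^ (-(finrank ℝ E - 2 * a.re)) := by
  have hre : (2 * a - finrank ℝ E : ℂ).re = -(finrank ℝ E - 2 * a.re) := by simp
  rw [rieszKernel, norm_mul, Complex.norm_cpow_eq_rpow_re_of_nonneg (norm_nonneg x), hre]
  rw [hre]
  linarith

variable [FiniteDimensional ℝ E] [MeasurableSpace E] [BorelSpace E]

lemma exists_lintegral_mul_rieszKernel_le {a : ℂ} (ha : 0 < a.re) (ha' : 2 * a.re < finrank ℝ E)
    {g : E → ℂ} (hg : Integrable g) {M : ℝ} (hM : ∀ x, ‖g x‖ ≤ M) :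
    ∃ B : ℝ≥0∞, B ≠ ∞ ∧ ∀ x, ∫⁻ y, ‖g y‖ₑ * ‖rieszKernel a (x - y)‖ₑ ≤ B := by
  set γ := ‖rieszConst (finrank ℝ E) a‖
  have hn : 1 ≤ finrank ℝ E := by exact_mod_cast (by linarith : (0 : ℝ) < finrank ℝ E)
  have hball : ∫⁻ y in Metric.ball (0 : E) 1, ‖rieszKernel a y‖ₑ < ∞ := by
    simp only [← ofReal_norm, norm_rieszKernel ha', ENNReal.ofReal_mul (norm_nonneg _)]
    rw [lintegral_const_mul' _ _ ENNReal.ofReal_ne_top]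
    exact ENNReal.mul_lt_top ENNReal.ofReal_lt_top
      (lintegral_ball_norm_rpow_neg_lt_top hn (by linarith))
  refine ⟨_, ?_, lintegral_mul_comp_sub_le (A := Metric.ball (0 : E) 1) measurableSet_ball
    ENNReal.ofReal_ne_top ENNReal.ofReal_ne_top (measurable_rieszKernel a).enorm (M := .ofReal γ)
    (fun x hx => ?_) fun x => (ofReal_norm (g x)).symm.trans_le (ENNReal.ofReal_le_ofReal (hM x))⟩
  · exact ENNReal.add_ne_top.2 ⟨ENNReal.mul_ne_top ENNReal.ofReal_ne_top hball.ne,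
      ENNReal.mul_ne_top ENNReal.ofReal_ne_top hg.2.ne⟩
  · rw [mem_ball_zero_iff, not_lt] at hx
    rw [← ofReal_norm, norm_rieszKernel ha']
    exact ENNReal.ofReal_le_ofReal (mul_le_of_le_one_right (norm_nonneg _)
      (Real.rpow_le_one_of_one_le_of_nonpos hx (by linarith)))

lemma integral_convolution_rieszKernel_mul {a : ℂ} (ha : 0 < a.re) (ha' : 2 * a.re < finrank ℝ E)
    {g : E → ℂ} (hg : Integrable g) {M : ℝ} (hM : ∀ x, ‖g x‖ ≤ M) (φ : SchwartzMap E ℂ) :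
    ∫ x, (g ⋆[.mul ℂ ℂ] rieszKernel a) x * φ x =
      ∫ ξ, (‖ξ‖ : ℂ) ^ (-(2 * a)) * 𝓕⁻ g ξ * 𝓕 φ ξ := by
  obtain ⟨B, hB, hgB⟩ := exists_lintegral_mul_rieszKernel_le ha ha' hg hM
  have hφ : Integrable fun ξ => (‖ξ‖ : ℂ) ^ (2 * -a) * 𝓕 φ ξ := by
    have hmeas : Measurable fun ξ : E => (‖ξ‖ : ℂ) ^ (2 * -a) := by fun_prop
    refine (integrable_norm_sub_rpow_neg_mul (s := 2 * a.re) (by linarith) ha' (𝓕 φ).integrable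
      ((𝓕 φ).norm_le_seminorm ℝ) 0).mono' (hmeas.aestronglyMeasurable.mul (𝓕 φ).integrable.1)
      (ae_of_all _ fun ξ => ?_)
    rw [norm_mul, Complex.norm_cpow_eq_rpow_re_of_nonneg (norm_nonneg ξ) (by simp [ha.ne'])]
    simp
  rw [integral_convolution_mul hg.1 (measurable_rieszKernel a) (rieszKernel_neg a) hB hgB
    φ.integrable]
  simp only [← laplacianPow_neg_eq_convolution_rieszKernel ha ha' φ, laplacianPow]
  calc _ = ∫ ξ, 𝓕⁻ g ξ * ((‖ξ‖ : ℂ) ^ (2 * -a) * 𝓕 φ ξ) :=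
        (integral_fourierInv_mul_eq hg hφ).symm
    _ = _ := by
        refine integral_congr_ae (ae_of_all _ fun ξ => ?_)
        simp only [mul_neg]
        ring

lemma continuous_fourierInv {g : E → ℂ} (hg : Integrable g) : Continuous (𝓕⁻ g) := by
  rw [Real.fourierInv_eq_fourier_comp_neg]
  exact continuous_fourier hg.comp_neg

lemma eLpNorm_two_sq {α F : Type*} [MeasurableSpace α] {μ : Measure α} [NormedAddCommGroup F]
    (g : α → F) : eLpNorm g 2 μ ^ 2 = ∫⁻ x, ‖g x‖ₑ ^ 2 ∂μ := by
  simpa using eLpNorm_nnreal_pow_eq_lintegral (f := g) (μ := μ) (p := 2) two_ne_zero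

lemma enorm_cpow_mul_fourierInv_sq {a : ℂ} (ha : a.re ≠ 0) (g : E → ℂ) (ξ : E) :
    ‖(‖ξ‖ : ℂ) ^ (-(2 * a)) * 𝓕⁻ g ξ‖ₑ ^ 2 =
      ENNReal.ofReal (‖ξ‖ ^ (-(4 * a.re))) * ‖𝓕⁻ g ξ‖ₑ ^ 2 := by
  rw [enorm_mul, mul_pow, ← ofReal_norm, ← ENNReal.ofReal_pow (norm_nonneg _),
    Complex.norm_cpow_eq_rpow_re_of_nonneg (norm_nonneg ξ) (by simpa using ha),
    ← Real.rpow_natCast, ← Real.rpow_mul (norm_nonneg ξ)]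
  simp
  ring_nf

lemma lintegral_norm_rpow_mul_fourierInv_lt_top {s : ℝ} (hs : 0 ≤ s) (hs' : s < finrank ℝ E)
    {g : E → ℂ} (hg : Integrable g) (hg2 : MemLp g 2) :
    ∫⁻ ξ, ENNReal.ofReal (‖ξ‖ ^ (-s)) * ‖𝓕⁻ g ξ‖ₑ ^ 2 < ∞ := by
  have hFg : MemLp (𝓕⁻ g) 2 :=
    ⟨(continuous_fourierInv hg).aestronglyMeasurable, by
      rw [eLpNorm_two_fourierInv hg hg2]; exact hg2.2⟩
  have hFg_le (ξ : E) : ‖𝓕⁻ g ξ * 𝓕⁻ g ξ‖ ≤ (∫ x, ‖g x‖) ^ 2 := by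
    rw [norm_mul, ← sq, Real.fourierInv_eq_fourier_neg]
    gcongr
    exact VectorFourier.norm_fourierIntegral_le_integral_norm _ _ _ _ _
  have := (integrable_norm_sub_rpow_neg_mul hs hs' (hFg.integrable_mul hFg) hFg_le 0).2
  rw [hasFiniteIntegral_iff_enorm] at this
  simpa [enorm_mul, Real.enorm_eq_ofReal, Real.rpow_nonneg, ← sq] using this

lemma lintegral_convolution_rieszKernel_sq {a : ℂ} (ha : 0 < a.re) (ha' : 4 * a.re < finrank ℝ E)
    {g : E → ℂ} (hg : Integrable g) {M : ℝ} (hM : ∀ x, ‖g x‖ ≤ M) :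
    ∫⁻ x, ‖(g ⋆[.mul ℂ ℂ] rieszKernel a) x‖ₑ ^ 2 =
      ∫⁻ ξ, ENNReal.ofReal (‖ξ‖ ^ (-(4 * a.re))) * ‖𝓕⁻ g ξ‖ₑ ^ 2 := by
  have hg2 : MemLp g 2 := by
    simpa using memLp_of_memLp_of_norm_le one_pos one_le_two
      (by simpa using memLp_one_iff_integrable.2 hg) hM
  have hmeas : Measurable fun ξ : E => (‖ξ‖ : ℂ) ^ (-(2 * a)) := by fun_prop
  obtain ⟨B, hB, hgB⟩ := exists_lintegral_mul_rieszKernel_le ha (by linarith) hg hM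
  have hconv : MemLp (g ⋆[.mul ℂ ℂ] rieszKernel a) ∞ := by
    refine ⟨aestronglyMeasurable_convolution hg.1 (measurable_rieszKernel a), ?_⟩
    refine (essSup_le_of_ae_le B (ae_of_all _ fun x => ?_)).trans_lt hB.lt_top
    exact (enorm_convolution_le x).trans (hgB x)
  simp only [← enorm_cpow_mul_fourierInv_sq ha.ne', ← eLpNorm_two_sq]
  rw [eLpNorm_two_eq_of_integral_mul_fourier (hconv.locallyIntegrable le_top) ⟨?_, ?_⟩
    (integral_convolution_rieszKernel_mul ha (by linarith) hg hM)]
  · exact hmeas.aestronglyMeasurable.mul (continuous_fourierInv hg).aestronglyMeasurable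
  · refine (ENNReal.pow_lt_top_iff.1 ?_).resolve_right two_ne_zero
    rw [eLpNorm_two_sq]
    simp only [enorm_cpow_mul_fourierInv_sq ha.ne']
    exact lintegral_norm_rpow_mul_fourierInv_lt_top (by linarith) ha' hg hg2

lemma norm_rpow_neg_le_one_add [Nontrivial E] {s t : ℝ} (hs : 0 ≤ s) (hst : s ≤ t) :
    ∀ᵐ ξ : E, ‖ξ‖ ^ (-s) ≤ 1 + ‖ξ‖ ^ (-t) := by
  filter_upwards [ae_norm_sub_pos (0 : E)] with ξ hξ
  rw [zero_sub, norm_neg] at hξ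
  rcases le_total ‖ξ‖ 1 with h1 | h1
  · exact (Real.rpow_le_rpow_of_exponent_ge hξ h1 (neg_le_neg hst)).trans
      (le_add_of_nonneg_left zero_le_one)
  · exact (Real.rpow_le_one_of_one_le_of_nonpos h1 (neg_nonpos.2 hs)).trans
      (le_add_of_nonneg_right (by positivity))

lemma tendsto_lintegral_convolution_rieszKernel_sq [Nontrivial E] (u : ℝ) {g : E → ℂ}
    (hg : Integrable g) {M : ℝ} (hM : ∀ x, ‖g x‖ ≤ M) :
    Tendsto (fun δ : ℝ => ∫⁻ x, ‖(g ⋆[.mul ℂ ℂ] rieszKernel (δ - I * u)) x‖ₑ ^ 2) (𝓝[>] 0)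
      (𝓝 (∫⁻ x, ‖g x‖ₑ ^ 2)) := by
  have hn : (1 : ℝ) ≤ finrank ℝ E := by exact_mod_cast finrank_pos (R := ℝ) (M := E)
  have hg2 : MemLp g 2 := by
    simpa using memLp_of_memLp_of_norm_le one_pos one_le_two
      (by simpa using memLp_one_iff_integrable.2 hg) hM
  have hsmall : ∀ᶠ δ : ℝ in 𝓝[>] 0, δ ∈ Set.Ioo (0 : ℝ) (1 / 8) := Ioo_mem_nhdsGT (by norm_num)
  have hFg : Measurable (𝓕⁻ g) := (continuous_fourierInv hg).measurable
  have hlim : Tendsto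
      (fun δ : ℝ => ∫⁻ ξ, ENNReal.ofReal (‖ξ‖ ^ (-(4 * δ))) * ‖𝓕⁻ g ξ‖ₑ ^ 2)
      (𝓝[>] 0) (𝓝 (∫⁻ ξ, ‖𝓕⁻ g ξ‖ₑ ^ 2)) := by
    refine tendsto_lintegral_filter_of_dominated_convergence
      (fun ξ => ‖𝓕⁻ g ξ‖ₑ ^ 2 + ENNReal.ofReal (‖ξ‖ ^ (-(1 / 2) : ℝ)) * ‖𝓕⁻ g ξ‖ₑ ^ 2)
      (Eventually.of_forall fun δ => by fun_prop) ?_ ?_ ?_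
    · filter_upwards [hsmall] with δ hδ
      filter_upwards [norm_rpow_neg_le_one_add (E := E) (s := 4 * δ) (t := 1 / 2)
        (by linarith [hδ.1]) (by linarith [hδ.2])] with ξ hξ
      rw [← one_add_mul]
      gcongr
      rw [← ENNReal.ofReal_one, ← ENNReal.ofReal_add zero_le_one (by positivity)]
      exact ENNReal.ofReal_le_ofReal hξ
    · rw [lintegral_add_left (by fun_prop), ← eLpNorm_two_sq, eLpNorm_two_fourierInv hg hg2]
      exact ENNReal.add_ne_top.2 ⟨ENNReal.pow_ne_top hg2.2.ne,
        (lintegral_norm_rpow_mul_fourierInv_lt_top (by norm_num) (by linarith) hg hg2).ne⟩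
    · filter_upwards [ae_norm_sub_pos (0 : E)] with ξ hξ
      rw [zero_sub, norm_neg] at hξ
      have hcont : Continuous fun δ : ℝ => ENNReal.ofReal (‖ξ‖ ^ (-(4 * δ))) :=
        ENNReal.continuous_ofReal.comp
          (continuous_const.rpow (by fun_prop) fun _ => Or.inl hξ.ne')
      simpa using ENNReal.Tendsto.mul_const (b := ‖𝓕⁻ g ξ‖ₑ ^ 2)
        ((hcont.tendsto 0).mono_left nhdsWithin_le_nhds) (Or.inl (by simp))
  rw [← eLpNorm_two_sq, eLpNorm_two_fourierInv hg hg2, eLpNorm_two_sq] at hlim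
  refine hlim.congr' ?_
  filter_upwards [hsmall] with δ hδ
  have hre : ((δ : ℂ) - I * u).re = δ := by simp
  rw [lintegral_convolution_rieszKernel_sq (by rw [hre]; exact hδ.1)
    (by rw [hre]; linarith [hδ.2]) hg hM, hre]

/-! ### Hörmander condition for Riesz kernels -/

lemma norm_cpow_sub_cpow_le {w : ℂ} (hw : w.re ≤ 1) {m R ρ : ℝ} (hm : 0 < m) (hR : m ≤ R)
    (hρ : m ≤ ρ) : ‖(R : ℂ) ^ w - (ρ : ℂ) ^ w‖ ≤ ‖w‖ * m ^ (w.re - 1) * |R - ρ| := by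
  refine Convex.norm_image_sub_le_of_norm_hasDerivWithin_le (f := fun t : ℝ => (t : ℂ) ^ w)
    (f' := fun t : ℝ => w * (t : ℂ) ^ (w - 1)) (s := Set.Ici m) (fun t ht => ?_) (fun t ht => ?_)
    (convex_Ici m) hρ hR
  · have hderiv := (hasDerivAt_id (t : ℂ)).cpow_const (c := w)
      (by simp [hm.trans_le (Set.mem_Ici.1 ht)])
    rw [mul_one] at hderiv
    exact hderiv.comp_ofReal.hasDerivWithinAt
  · rw [norm_mul, Complex.norm_cpow_eq_rpow_re_of_pos (hm.trans_le ht), sub_re, one_re]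
    exact mul_le_mul_of_nonneg_left (Real.rpow_le_rpow_of_nonpos hm ht (by linarith))
      (norm_nonneg w)

lemma min_one_le_rpow {t ε : ℝ} (ht : 0 ≤ t) (hε0 : 0 ≤ ε) (hε1 : ε ≤ 1) : min 1 t ≤ t ^ ε := by
  rcases le_total 1 t with h | h
  · exact (min_le_left 1 t).trans (Real.one_le_rpow h hε0)
  · exact (min_le_right 1 t).trans (Real.self_le_rpow_of_le_one ht h hε1)

lemma norm_cpow_sub_cpow_le_rpow {w : ℂ} (hw : w.re ≤ 0) {ε d R ρ : ℝ} (hε0 : 0 ≤ ε)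
    (hε1 : ε ≤ 1) (hd : 0 < d) (hRρ : |R - ρ| ≤ d) (hρ : 2 * d ≤ ρ) :
    ‖(R : ℂ) ^ w - (ρ : ℂ) ^ w‖ ≤ 2 * 2 ^ (-w.re) * ρ ^ w.re * (‖w‖ * (d / ρ)) ^ ε := by
  have hρ0 : 0 < ρ := by linarith
  have hR : ρ / 2 ≤ R := by linarith [(abs_le.mp hRρ).1]
  have hhalf : (ρ / 2) ^ w.re = 2 ^ (-w.re) * ρ ^ w.re := by
    rw [Real.div_rpow hρ0.le zero_le_two, Real.rpow_neg zero_le_two, div_eq_inv_mul]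
  have htriv : ‖(R : ℂ) ^ w - (ρ : ℂ) ^ w‖ ≤ 2 * 2 ^ (-w.re) * ρ ^ w.re := by
    rw [mul_assoc, ← hhalf, two_mul]
    refine (norm_sub_le _ _).trans ?_
    rw [Complex.norm_cpow_eq_rpow_re_of_pos (by linarith),
      Complex.norm_cpow_eq_rpow_re_of_pos hρ0]
    exact add_le_add (Real.rpow_le_rpow_of_nonpos (by positivity) hR hw)
      (Real.rpow_le_rpow_of_nonpos (by positivity) (by linarith) hw)
  have hmvt : ‖(R : ℂ) ^ w - (ρ : ℂ) ^ w‖ ≤ 2 * 2 ^ (-w.re) * ρ ^ w.re * (‖w‖ * (d / ρ)) :=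
    calc _ ≤ ‖w‖ * (ρ / 2) ^ (w.re - 1) * |R - ρ| :=
          norm_cpow_sub_cpow_le (by linarith) (half_pos hρ0) hR (by linarith)
      _ ≤ ‖w‖ * (ρ / 2) ^ (w.re - 1) * d := by gcongr
      _ = _ := by
          rw [Real.rpow_sub_one (by positivity), hhalf]
          field_simp
  calc _ ≤ 2 * 2 ^ (-w.re) * ρ ^ w.re * min 1 (‖w‖ * (d / ρ)) := by
        rw [mul_min_of_nonneg _ _ (by positivity), mul_one]
        exact le_min htriv hmvt
    _ ≤ _ := by
        gcongr
        exact min_one_le_rpow (by positivity) hε0 hε1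

lemma rpow_neg_le_two_rpow_mul_one_add {τ p : ℝ} (hτ : 1 ≤ τ) (hp : 0 ≤ p) :
    τ ^ (-p) ≤ 2 ^ p * (1 + τ) ^ (-p) := by
  have hτ0 : 0 < τ := by linarith
  calc τ ^ (-p) = 2 ^ p * (2 * τ) ^ (-p) := by
        rw [Real.mul_rpow zero_le_two hτ0.le, ← mul_assoc, ← Real.rpow_add two_pos]
        simp
    _ ≤ _ := by
        gcongr 2 ^ p * ?_
        exact Real.rpow_le_rpow_of_nonpos (by positivity) (by linarith) (by linarith)

section

variable {E : Type*} [NormedAddCommGroup E] [InnerProductSpace ℝ E] [FiniteDimensional ℝ E]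
  [Nontrivial E]

lemma norm_rieszKernel_sub_sub_le {ε : ℝ} (hε0 : 0 ≤ ε) (hε1 : ε ≤ 1) {a : ℂ} (ha : 0 < a.re)
    (ha' : 2 * a.re ≤ 1) {d : ℝ} (hd : 0 < d) {x y : E} (hy : ‖y‖ ≤ d) (hx : 2 * d ≤ ‖x‖) :
    ‖rieszKernel a (x - y) - rieszKernel a x‖ ≤
      ‖rieszConst (finrank ℝ E) a‖ * (2 * 2 ^ finrank ℝ E) * ‖x‖ ^ (2 * a.re - finrank ℝ E) *
        ((finrank ℝ E + 2) * (1 + |a.im|) * (d / ‖x‖)) ^ ε := by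
  have hn : (1 : ℝ) ≤ finrank ℝ E := by exact_mod_cast finrank_pos (R := ℝ) (M := E)
  have hre : (2 * a - finrank ℝ E : ℂ).re = 2 * a.re - finrank ℝ E := by simp
  have hw : ‖2 * a - finrank ℝ E‖ ≤ (finrank ℝ E + 2) * (1 + |a.im|) := by
    have hnorm : ‖2 * a - finrank ℝ E‖ ≤ 2 * ‖a‖ + finrank ℝ E := by
      simpa using norm_sub_le (2 * a) (finrank ℝ E : ℂ)
    have := Complex.norm_le_abs_re_add_abs_im a
    rw [abs_of_pos ha] at this
    nlinarith [abs_nonneg a.im]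
  have hxy : |‖x - y‖ - ‖x‖| ≤ d := (abs_norm_sub_norm_le _ _).trans (by simpa using hy)
  rw [rieszKernel, rieszKernel, ← mul_sub, norm_mul, mul_assoc, mul_assoc, ← mul_assoc (2 * _)]
  gcongr
  refine (norm_cpow_sub_cpow_le_rpow (by rw [hre]; linarith) hε0 hε1 hd hxy hx).trans ?_
  rw [hre, ← Real.rpow_natCast]
  gcongr
  · exact one_le_two
  · linarith

lemma norm_rieszKernel_sub_sub_le_one_add {ε : ℝ} (hε0 : 0 < ε) (hε1 : ε ≤ 1) {a : ℂ}
    (ha : 0 < a.re) (ha' : 4 * a.re ≤ ε) {d : ℝ} (hd : 0 < d) {x y : E} (hy : ‖y‖ ≤ d)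
    (hx : 2 * d ≤ ‖x‖) :
    ‖rieszKernel a (x - y) - rieszKernel a x‖ ≤
      2 * 2 ^ finrank ℝ E * (finrank ℝ E + 2) ^ ε * 2 ^ (finrank ℝ E + ε / 2) *
        ‖rieszConst (finrank ℝ E) a‖ * (1 + |a.im|) ^ ε * d ^ (2 * a.re - finrank ℝ E) *
        (1 + ‖d⁻¹ • x‖) ^ (-(finrank ℝ E + ε / 2)) := by
  set n := finrank ℝ E
  set p : ℝ := n + ε / 2 with hp
  obtain ⟨τ, hτ⟩ : ∃ τ, τ = ‖x‖ / d := ⟨_, rfl⟩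
  have hτ2 : 2 ≤ τ := by rwa [hτ, le_div_iff₀ hd]
  have hτ0 : 0 < τ := by linarith
  have hxτ : ‖x‖ = d * τ := by rw [hτ]; field_simp
  have hdx : d / ‖x‖ = τ⁻¹ := by rw [hτ, inv_div]
  have hsmul : ‖d⁻¹ • x‖ = τ := by
    rw [norm_smul, norm_inv, Real.norm_of_nonneg hd.le, hτ, div_eq_inv_mul]
  have hdecay : τ ^ (2 * a.re - n - ε) ≤ 2 ^ p * (1 + τ) ^ (-p) :=
    (Real.rpow_le_rpow_of_exponent_le (by linarith) (by linarith)).trans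
      (rpow_neg_le_two_rpow_mul_one_add (by linarith) (by positivity))
  refine (norm_rieszKernel_sub_sub_le hε0.le hε1 ha (by linarith) hd hy hx).trans ?_
  rw [hdx, hsmul, hxτ]
  calc _ = 2 * 2 ^ n * (n + 2) ^ ε * ‖rieszConst n a‖ * (1 + |a.im|) ^ ε *
        d ^ (2 * a.re - n) * τ ^ (2 * a.re - n - ε) := by
          rw [Real.mul_rpow hd.le hτ0.le, Real.mul_rpow (by positivity) (by positivity),
            Real.mul_rpow (by positivity) (by positivity), Real.rpow_sub hτ0 _ ε,
            Real.inv_rpow hτ0.le]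
          ring
    _ ≤ 2 * 2 ^ n * (n + 2) ^ ε * ‖rieszConst n a‖ * (1 + |a.im|) ^ ε *
        d ^ (2 * a.re - n) * (2 ^ p * (1 + τ) ^ (-p)) := by gcongr
    _ = _ := by ring

variable [MeasurableSpace E] [BorelSpace E]

omit [Nontrivial E] in
lemma lintegral_one_add_norm_smul_rpow {p : ℝ} (hp : finrank ℝ E < p) {d : ℝ} (hd : 0 < d) :
    ∫⁻ x : E, ENNReal.ofReal ((1 + ‖d⁻¹ • x‖) ^ (-p)) =
      ENNReal.ofReal (d ^ finrank ℝ E * ∫ x : E, (1 + ‖x‖) ^ (-p)) := by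
  have hint : Integrable (fun x : E => (1 + ‖d⁻¹ • x‖) ^ (-p)) :=
    (integrable_one_add_norm hp).comp_smul (inv_ne_zero hd.ne')
  rw [← ofReal_integral_eq_lintegral_ofReal hint (ae_of_all _ fun x => by positivity),
    Measure.integral_comp_inv_smul_of_nonneg volume (fun x : E => (1 + ‖x‖) ^ (-p)) hd.le,
    smul_eq_mul]

variable (E) in
lemma exists_setLIntegral_rieszKernel_sub_sub_le {ε : ℝ} (hε0 : 0 < ε) (hε1 : ε ≤ 1) :
    ∃ C : ℝ, 0 < C ∧ ∀ a : ℂ, 0 < a.re → 4 * a.re ≤ ε → ∀ d : ℝ, 0 < d → ∀ y : E, ‖y‖ ≤ d →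
      ∫⁻ x in {x : E | 2 * d ≤ ‖x‖}, ‖rieszKernel a (x - y) - rieszKernel a x‖ₑ ≤
        ENNReal.ofReal
          (C * ‖rieszConst (finrank ℝ E) a‖ * (1 + |a.im|) ^ ε * d ^ (2 * a.re)) := by
  set n := finrank ℝ E
  set p : ℝ := n + ε / 2 with hp
  set J := ∫ x : E, (1 + ‖x‖) ^ (-p)
  have : 0 ≤ J := integral_nonneg fun x => by positivity
  set C₀ : ℝ := 2 * 2 ^ n * (n + 2) ^ ε * 2 ^ p
  refine ⟨C₀ * (J + 1), by positivity, fun a ha ha' d hd y hy => ?_⟩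
  set A := C₀ * ‖rieszConst n a‖ * (1 + |a.im|) ^ ε * d ^ (2 * a.re - n) with hA
  calc _ ≤ ∫⁻ x in {x : E | 2 * d ≤ ‖x‖}, ENNReal.ofReal (A * (1 + ‖d⁻¹ • x‖) ^ (-p)) := by
        refine setLIntegral_mono' (measurableSet_le measurable_const measurable_norm) fun x hx => ?_
        rw [← ofReal_norm]
        exact ENNReal.ofReal_le_ofReal
          (norm_rieszKernel_sub_sub_le_one_add hε0 hε1 ha ha' hd hy hx)
    _ ≤ ∫⁻ x : E, ENNReal.ofReal (A * (1 + ‖d⁻¹ • x‖) ^ (-p)) := setLIntegral_le_lintegral _ _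
    _ = ENNReal.ofReal (A * (d ^ n * J)) := by
        simp only [ENNReal.ofReal_mul (show 0 ≤ A by positivity)]
        rw [lintegral_const_mul' _ _ ENNReal.ofReal_ne_top,
          lintegral_one_add_norm_smul_rpow (by rw [hp]; linarith) hd]
    _ ≤ _ := by
        refine ENNReal.ofReal_le_ofReal ?_
        calc A * (d ^ n * J)
            = C₀ * J * ‖rieszConst n a‖ * (1 + |a.im|) ^ ε * d ^ (2 * a.re) := by
              rw [hA, Real.rpow_sub hd, Real.rpow_natCast]
              field_simp
          _ ≤ _ := by
              gcongr
              linarith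

end

/-! ### Calderón–Zygmund decomposition -/

section StoppingFamily

variable {α ι : Type*} [MeasurableSpace α] {μ : Measure α} {f : α → ℂ} {l P : ℝ≥0∞}
  {Q : ι → Set α}

/-- The measure-theoretic properties of the family of stopping cubes `Q` of `f` at height `l`: the
cubes are disjoint, the average of `‖f‖` over each of them lies between `l` and `P * l`, and
`‖f‖ ≤ l` off their union. -/
structure IsStoppingFamily (μ : Measure α) (f : α → ℂ) (l P : ℝ≥0∞) (Q : ι → Set α) : Prop where
  measurableSet (i : ι) : MeasurableSet (Q i)
  pairwise_disjoint : Pairwise (Function.onFun Disjoint Q)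
  measure_ne_zero (i : ι) : μ (Q i) ≠ 0
  measure_ne_top (i : ι) : μ (Q i) ≠ ∞
  mul_measure_le (i : ι) : l * μ (Q i) ≤ ∫⁻ x in Q i, ‖f x‖ₑ ∂μ
  setLIntegral_le (i : ι) : ∫⁻ x in Q i, ‖f x‖ₑ ∂μ ≤ P * l * μ (Q i)
  enorm_le (x : α) : x ∉ ⋃ i, Q i → ‖f x‖ₑ ≤ l

open Classical in
/-- The good part of `f` with respect to a family `Q` of disjoint sets: on each `Q i` the function
is replaced by its average. -/
noncomputable def goodPart (μ : Measure α) (f : α → ℂ) (Q : ι → Set α) (x : α) : ℂ :=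
  if h : ∃ i, x ∈ Q i then ⨍ y in Q h.choose, f y ∂μ else f x

lemma goodPart_of_mem (hQ : Pairwise (Function.onFun Disjoint Q)) {i : ι} {x : α} (hx : x ∈ Q i) :
    goodPart μ f Q x = ⨍ y in Q i, f y ∂μ := by
  have h : ∃ j, x ∈ Q j := ⟨i, hx⟩
  have hi : h.choose = i := by
    by_contra hne
    exact Set.disjoint_left.1 (hQ hne) h.choose_spec hx
  rw [goodPart, dif_pos h, hi]

lemma goodPart_of_notMem {x : α} (hx : x ∉ ⋃ i, Q i) : goodPart μ f Q x = f x :=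
  dif_neg (by simpa using hx)

lemma measurable_goodPart [Countable ι] (hQ : Pairwise (Function.onFun Disjoint Q))
    (hQm : ∀ i, MeasurableSet (Q i)) (hf : Measurable f) : Measurable (goodPart μ f Q) := by
  intro s hs
  have hpre : goodPart μ f Q ⁻¹' s =
      (f ⁻¹' s ∩ (⋃ i, Q i)ᶜ) ∪ ⋃ i, Q i ∩ {_x | ⨍ y in Q i, f y ∂μ ∈ s} := by
    ext x
    by_cases hx : x ∈ ⋃ i, Q i
    · obtain ⟨i, hi⟩ := Set.mem_iUnion.1 hx
      have hj (j : ι) (hj : x ∈ Q j) : goodPart μ f Q x = ⨍ y in Q j, f y ∂μ :=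
        goodPart_of_mem hQ hj
      simp only [Set.mem_preimage, Set.mem_union, Set.mem_inter_iff, Set.mem_compl_iff, hx,
        not_true_eq_false, and_false, false_or, Set.mem_iUnion, Set.mem_ofPred_eq]
      exact ⟨fun h => ⟨i, hi, hj i hi ▸ h⟩, fun ⟨j, hjx, h⟩ => hj j hjx ▸ h⟩
    · have hx' : ∀ i, x ∉ Q i := by simpa using hx
      simp [goodPart_of_notMem hx, hx']
  rw [hpre]
  exact ((hf hs).inter (MeasurableSet.iUnion hQm).compl).union
    (MeasurableSet.iUnion fun i => (hQm i).inter (MeasurableSet.const _))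

namespace IsStoppingFamily

lemma enorm_goodPart_le (h : IsStoppingFamily μ f l P Q) (hP : 1 ≤ P) (x : α) :
    ‖goodPart μ f Q x‖ₑ ≤ P * l := by
  by_cases hx : x ∈ ⋃ i, Q i
  · obtain ⟨i, hi⟩ := Set.mem_iUnion.1 hx
    have hpos : 0 < μ.real (Q i) := ENNReal.toReal_pos (h.measure_ne_zero i) (h.measure_ne_top i)
    rw [goodPart_of_mem h.pairwise_disjoint hi, setAverage_eq, enorm_smul,
      Real.enorm_eq_ofReal (inv_nonneg.2 hpos.le), ENNReal.ofReal_inv_of_pos hpos, measureReal_def,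
      ENNReal.ofReal_toReal (h.measure_ne_top i), ENNReal.inv_mul_le_iff (h.measure_ne_zero i)
        (h.measure_ne_top i), mul_comm]
    exact (enorm_integral_le_lintegral_enorm _).trans (h.setLIntegral_le i)
  · rw [goodPart_of_notMem hx]
    exact (h.enorm_le x hx).trans (le_mul_of_one_le_left zero_le hP)

variable [Countable ι]

lemma mul_measure_iUnion_le (h : IsStoppingFamily μ f l P Q) :
    l * μ (⋃ i, Q i) ≤ ∫⁻ x in ⋃ i, Q i, ‖f x‖ₑ ∂μ := by
  rw [measure_iUnion h.pairwise_disjoint h.measurableSet,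
    lintegral_iUnion h.measurableSet h.pairwise_disjoint, ← ENNReal.tsum_mul_left]
  exact ENNReal.tsum_le_tsum h.mul_measure_le

lemma measure_iUnion_lt_top (h : IsStoppingFamily μ f l P Q) (hl : l ≠ 0) (hf : Integrable f μ) :
    μ (⋃ i, Q i) < ∞ := by
  have : l * μ (⋃ i, Q i) < ∞ :=
    h.mul_measure_iUnion_le.trans_lt ((setLIntegral_le_lintegral _ _).trans_lt hf.2)
  exact ENNReal.lt_top_of_mul_ne_top_right this.ne hl

lemma measure_iUnion_le (h : IsStoppingFamily μ f l P Q) (hl : l ≠ 0) (hl' : l ≠ ∞)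
    (hf : Integrable f μ) :
    μ (⋃ i, Q i) ≤ 2 * l⁻¹ * ∫⁻ x in {x | l / 2 < ‖f x‖ₑ}, ‖f x‖ₑ ∂μ := by
  set U := ⋃ i, Q i
  set V := {x | l / 2 < ‖f x‖ₑ}
  have hsplit : l / 2 * μ U + l / 2 * μ U ≤ l / 2 * μ U + ∫⁻ x in V, ‖f x‖ₑ ∂μ :=
    calc _ = l * μ U := by rw [← add_mul, ENNReal.add_halves]
      _ ≤ ∫⁻ x in U, ‖f x‖ₑ ∂μ := h.mul_measure_iUnion_le
      _ ≤ ∫⁻ x in U \ V, ‖f x‖ₑ ∂μ + ∫⁻ x in V, ‖f x‖ₑ ∂μ :=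
          (lintegral_mono_set (Set.sdiff_union_self.symm ▸ Set.subset_union_left)).trans
            (lintegral_union_le _ _ _)
      _ ≤ _ := by
          gcongr
          calc _ ≤ ∫⁻ _ in U \ V, l / 2 ∂μ :=
                setLIntegral_mono measurable_const fun x hx => not_lt.1 hx.2
            _ ≤ l / 2 * μ U := by
                rw [setLIntegral_const]
                gcongr
                exact Set.sdiff_subset
  have hhalf : l / 2 * μ U ≤ ∫⁻ x in V, ‖f x‖ₑ ∂μ :=
    (ENNReal.add_le_add_iff_left (ENNReal.mul_ne_top (ENNReal.div_ne_top hl' two_ne_zero)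
      (h.measure_iUnion_lt_top hl hf).ne)).1 hsplit
  have hinv : 2 * l⁻¹ * (l / 2) = 1 := by
    rw [mul_assoc, ENNReal.div_eq_inv_mul, mul_left_comm l⁻¹, ENNReal.inv_mul_cancel hl hl',
      mul_one, ENNReal.mul_inv_cancel two_ne_zero ENNReal.ofNat_ne_top]
  calc μ U = 2 * l⁻¹ * (l / 2 * μ U) := by rw [← mul_assoc, hinv, one_mul]
    _ ≤ _ := by gcongr

lemma integrable_goodPart (h : IsStoppingFamily μ f l P Q) (hP : 1 ≤ P) (hP' : P ≠ ∞) (hl : l ≠ 0)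
    (hl' : l ≠ ∞) (hfm : Measurable f) (hf : Integrable f μ) : Integrable (goodPart μ f Q) μ := by
  have hU := MeasurableSet.iUnion h.measurableSet
  refine ⟨(measurable_goodPart h.pairwise_disjoint h.measurableSet hfm).aestronglyMeasurable, ?_⟩
  rw [hasFiniteIntegral_iff_enorm, ← lintegral_add_compl _ hU]
  refine ENNReal.add_lt_top.2 ⟨?_, ?_⟩
  · refine (lintegral_mono fun x => h.enorm_goodPart_le hP x).trans_lt ?_
    rw [setLIntegral_const]
    exact ENNReal.mul_lt_top (ENNReal.mul_lt_top hP'.lt_top hl'.lt_top)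
      (h.measure_iUnion_lt_top hl hf)
  · rw [setLIntegral_congr_fun hU.compl fun x hx => by rw [goodPart_of_notMem hx]]
    exact (setLIntegral_le_lintegral _ _).trans_lt hf.2

omit [Countable ι] in
lemma setIntegral_sub_goodPart (h : IsStoppingFamily μ f l P Q) (i : ι) :
    ∫ x in Q i, (f x - goodPart μ f Q x) ∂μ = 0 := by
  have : IsFiniteMeasure (μ.restrict (Q i)) := ⟨by simpa using (h.measure_ne_top i).lt_top⟩
  rw [← integral_sub_average (μ.restrict (Q i)) f]
  exact setIntegral_congr_fun (h.measurableSet i) fun x hx => by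
    simp only [goodPart_of_mem h.pairwise_disjoint hx]

lemma lintegral_sub_goodPart_le (h : IsStoppingFamily μ f l P Q) (hP : 1 ≤ P) :
    ∫⁻ x, ‖f x - goodPart μ f Q x‖ₑ ∂μ ≤ 2 * (P * l) * μ (⋃ i, Q i) := by
  have hsupp : Function.support (fun x => ‖f x - goodPart μ f Q x‖ₑ) ⊆ ⋃ i, Q i := by
    refine Function.support_subset_iff'.2 fun x hx => ?_
    rw [goodPart_of_notMem hx, sub_self, enorm_zero]
  rw [← setLIntegral_eq_of_support_subset hsupp, lintegral_iUnion h.measurableSet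
    h.pairwise_disjoint, measure_iUnion h.pairwise_disjoint h.measurableSet,
    ← ENNReal.tsum_mul_left]
  refine ENNReal.tsum_le_tsum fun i => ?_
  calc _ ≤ ∫⁻ x in Q i, (‖f x‖ₑ + P * l) ∂μ :=
        lintegral_mono fun x => enorm_sub_le.trans (by gcongr; exact h.enorm_goodPart_le hP x)
    _ = (∫⁻ x in Q i, ‖f x‖ₑ ∂μ) + P * l * μ (Q i) := by
        rw [lintegral_add_right _ measurable_const, setLIntegral_const]
    _ ≤ P * l * μ (Q i) + P * l * μ (Q i) := by
        gcongr
        exact h.setLIntegral_le i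
    _ = _ := by ring

lemma lintegral_goodPart_sq_le (h : IsStoppingFamily μ f l P Q) (hP : 1 ≤ P) :
    ∫⁻ x, ‖goodPart μ f Q x‖ₑ ^ 2 ∂μ ≤
      ∫⁻ x in {x | ‖f x‖ₑ ≤ l}, ‖f x‖ₑ ^ 2 ∂μ + (P * l) ^ 2 * μ (⋃ i, Q i) := by
  have hU := MeasurableSet.iUnion h.measurableSet
  rw [← lintegral_add_compl _ hU, add_comm]
  gcongr ?_ + ?_
  · rw [setLIntegral_congr_fun hU.compl fun x hx => by rw [goodPart_of_notMem hx]]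
    exact lintegral_mono_set fun x hx => h.enorm_le x hx
  · rw [← setLIntegral_const]
    gcongr with x
    exact h.enorm_goodPart_le hP x

end IsStoppingFamily

end StoppingFamily

/-! ### Dyadic cubes -/

section DyadicCubes

variable {E : Type*} [NormedAddCommGroup E] [InnerProductSpace ℝ E] [FiniteDimensional ℝ E]

/-- The index of the dyadic cube of side length `2 ^ (-k)` which contains `x`; coordinates refer to
the standard orthonormal basis of `E`. -/
noncomputable def dyadicIndex (k : ℤ) (x : E) : Fin (finrank ℝ E) → ℤ :=
  fun i => ⌊(stdOrthonormalBasis ℝ E).repr x i * 2 ^ k⌋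

/-- The half-open dyadic cube of side length `2 ^ (-k)` with corner `2 ^ (-k) • m`. -/
def dyadicCube (k : ℤ) (m : Fin (finrank ℝ E) → ℤ) : Set E :=
  dyadicIndex k ⁻¹' {m}

/-- The corner of the cube `dyadicCube k m` with smallest coordinates, which serves as its
centre. -/
noncomputable def dyadicCorner (k : ℤ) (m : Fin (finrank ℝ E) → ℤ) : E :=
  (stdOrthonormalBasis ℝ E).repr.symm (.toLp 2 fun i => m i * 2 ^ (-k))

variable (E) in
/-- The diameter of a dyadic cube of side length `2 ^ (-k)`. -/
noncomputable def dyadicDiam (k : ℤ) : ℝ :=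
  √(finrank ℝ E) * 2 ^ (-k)

lemma dyadicDiam_pos [Nontrivial E] (k : ℤ) : 0 < dyadicDiam E k := by
  have : 0 < finrank ℝ E := finrank_pos
  unfold dyadicDiam
  positivity

omit [FiniteDimensional ℝ E] in
lemma dyadicDiam_le_of_le {j k : ℤ} (hjk : j ≤ k) : dyadicDiam E k ≤ dyadicDiam E j := by
  unfold dyadicDiam
  gcongr
  norm_num

lemma mem_dyadicCube_iff {k : ℤ} {m : Fin (finrank ℝ E) → ℤ} {x : E} :
    x ∈ dyadicCube k m ↔ ∀ i, (stdOrthonormalBasis ℝ E).repr x i ∈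
      Set.Ico ((m i : ℝ) * 2 ^ (-k)) ((m i + 1) * 2 ^ (-k)) := by
  have h2 : (0 : ℝ) < 2 ^ k := by positivity
  simp only [dyadicCube, dyadicIndex, Set.mem_preimage, Set.mem_singleton_iff, funext_iff,
    Int.floor_eq_iff, Set.mem_Ico, zpow_neg, ← div_eq_mul_inv, div_le_iff₀ h2, lt_div_iff₀ h2]

lemma dyadicCorner_mem (k : ℤ) (m : Fin (finrank ℝ E) → ℤ) :
    (dyadicCorner k m : E) ∈ dyadicCube k m := by
  refine mem_dyadicCube_iff.2 fun i => ?_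
  have h2 : (0 : ℝ) < 2 ^ (-k) := by positivity
  simp only [dyadicCorner, LinearIsometryEquiv.apply_symm_apply]
  exact ⟨le_rfl, by nlinarith⟩

lemma norm_sub_le_dyadicDiam {k : ℤ} {m : Fin (finrank ℝ E) → ℤ} {x y : E}
    (hx : x ∈ dyadicCube k m) (hy : y ∈ dyadicCube k m) : ‖x - y‖ ≤ dyadicDiam E k := by
  have h2 : (0 : ℝ) < 2 ^ (-k) := by positivity
  rw [mem_dyadicCube_iff] at hx hy
  have hcoord (i : Fin (finrank ℝ E)) :
      ‖(stdOrthonormalBasis ℝ E).repr (x - y) i‖ ^ 2 ≤ (2 ^ (-k)) ^ 2 := by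
    refine pow_le_pow_left₀ (norm_nonneg _) ?_ 2
    obtain ⟨hx1, hx2⟩ := hx i
    obtain ⟨hy1, hy2⟩ := hy i
    rw [map_sub, PiLp.sub_apply, Real.norm_eq_abs, abs_le]
    constructor <;> linarith
  rw [← LinearIsometryEquiv.norm_map (stdOrthonormalBasis ℝ E).repr, EuclideanSpace.norm_eq]
  calc _ ≤ √(∑ _i : Fin (finrank ℝ E), (2 ^ (-k)) ^ 2) :=
        Real.sqrt_le_sqrt (Finset.sum_le_sum fun i _ => hcoord i)
    _ = dyadicDiam E k := by
        rw [Finset.sum_const, Finset.card_univ, Fintype.card_fin, nsmul_eq_mul,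
          Real.sqrt_mul (by positivity), Real.sqrt_sq h2.le, dyadicDiam]

lemma dyadicIndex_eq_of_le {j k : ℤ} (hjk : j ≤ k) {x y : E}
    (h : dyadicIndex k x = dyadicIndex k y) : dyadicIndex j x = dyadicIndex j y := by
  obtain ⟨N, rfl⟩ := Int.le.dest hjk
  have hdiv (t : ℝ) : t * 2 ^ j = t * 2 ^ (j + (N : ℤ)) / ((2 ^ N : ℕ) : ℝ) := by
    rw [zpow_add₀ two_ne_zero, zpow_natCast]
    push_cast
    field_simp
  ext i
  have hi := congrFun h i
  simp only [dyadicIndex] at hi ⊢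
  rw [hdiv, hdiv, Int.floor_div_natCast, Int.floor_div_natCast, hi]

variable [MeasurableSpace E] [BorelSpace E]

lemma measurableSet_dyadicCube (k : ℤ) (m : Fin (finrank ℝ E) → ℤ) :
    MeasurableSet (dyadicCube k m : Set E) := by
  refine (measurable_pi_lambda _ fun i => Int.measurable_floor.comp ?_) (measurableSet_singleton m)
  fun_prop

lemma volume_dyadicCube (k : ℤ) (m : Fin (finrank ℝ E) → ℤ) :
    volume (dyadicCube k m : Set E) = ENNReal.ofReal (2 ^ (-k)) ^ finrank ℝ E := by
  have hcube : (dyadicCube k m : Set E) = (stdOrthonormalBasis ℝ E).repr ⁻¹'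
      ((MeasurableEquiv.toLp 2 (Fin (finrank ℝ E) → ℝ)).symm ⁻¹'
        Set.univ.pi fun i => Set.Ico ((m i : ℝ) * 2 ^ (-k)) ((m i + 1) * 2 ^ (-k))) := by
    ext x
    simp [mem_dyadicCube_iff]
  have hpi : MeasurableSet (Set.univ.pi fun i =>
      Set.Ico ((m i : ℝ) * 2 ^ (-k)) ((m i + 1) * 2 ^ (-k))) :=
    MeasurableSet.univ_pi fun i => measurableSet_Ico
  have hsub (i : Fin (finrank ℝ E)) : ((m i : ℝ) + 1) * 2 ^ (-k) - m i * 2 ^ (-k) = 2 ^ (-k) := by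
    ring
  rw [hcube, (stdOrthonormalBasis ℝ E).measurePreserving_repr.measure_preimage
    ((MeasurableEquiv.measurable _) hpi).nullMeasurableSet,
    (EuclideanSpace.volume_preserving_symm_measurableEquiv_toLp _).measure_preimage
      hpi.nullMeasurableSet, Real.volume_pi_Ico]
  simp only [hsub, Finset.prod_const, Finset.card_univ, Fintype.card_fin]

lemma volume_dyadicCube_ne_zero (k : ℤ) (m : Fin (finrank ℝ E) → ℤ) :
    volume (dyadicCube k m : Set E) ≠ 0 := by
  rw [volume_dyadicCube]
  exact pow_ne_zero _ (ENNReal.ofReal_pos.2 (by positivity)).ne'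

lemma volume_dyadicCube_ne_top (k : ℤ) (m : Fin (finrank ℝ E) → ℤ) :
    volume (dyadicCube k m : Set E) ≠ ∞ := by
  rw [volume_dyadicCube]
  exact ENNReal.pow_ne_top ENNReal.ofReal_ne_top

lemma volume_dyadicCube_sub_one (k : ℤ) (m m' : Fin (finrank ℝ E) → ℤ) :
    volume (dyadicCube (k - 1) m : Set E) =
      2 ^ finrank ℝ E * volume (dyadicCube k m' : Set E) := by
  rw [volume_dyadicCube, volume_dyadicCube, ← mul_pow, neg_sub, sub_eq_add_neg,
    zpow_add₀ two_ne_zero, zpow_one, ENNReal.ofReal_mul zero_le_two, ENNReal.ofReal_ofNat]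

lemma volume_ball_dyadicCorner [Nontrivial E] (k : ℤ) (m : Fin (finrank ℝ E) → ℤ) :
    volume (Metric.ball (dyadicCorner k m : E) (2 * dyadicDiam E k)) =
      ENNReal.ofReal ((2 * √(finrank ℝ E)) ^ finrank ℝ E) * volume (Metric.ball (0 : E) 1) *
        volume (dyadicCube k m : Set E) := by
  rw [Measure.addHaar_ball _ _ (by unfold dyadicDiam; positivity), volume_dyadicCube, dyadicDiam,
    ← mul_assoc, mul_pow, ENNReal.ofReal_mul (by positivity),
    ENNReal.ofReal_pow (p := 2 ^ (-k)) (by positivity), mul_right_comm]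

/-! ### Stopping cubes -/

variable {f : E → ℂ} {l : ℝ≥0∞}

/-- The pairs `(k, m)` for which the average of `‖f‖` over `dyadicCube k m` exceeds `l`. -/
def heavyCubes (f : E → ℂ) (l : ℝ≥0∞) : Set (ℤ × (Fin (finrank ℝ E) → ℤ)) :=
  {q | l * volume (dyadicCube q.1 q.2 : Set E) < ∫⁻ x in dyadicCube q.1 q.2, ‖f x‖ₑ}

/-- The maximal heavy cubes: no larger dyadic cube that contains a stopping cube is heavy. -/
def stoppingCubes (f : E → ℂ) (l : ℝ≥0∞) : Set (ℤ × (Fin (finrank ℝ E) → ℤ)) :=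
  {q ∈ heavyCubes f l | ∀ j < q.1, ∀ x ∈ dyadicCube q.1 q.2, (j, dyadicIndex j x) ∉ heavyCubes f l}

lemma exists_le_of_mem_heavyCubes [Nontrivial E] (hl : l ≠ 0) (hf : Integrable f) :
    ∃ k₀, ∀ q ∈ heavyCubes f l, k₀ ≤ q.1 := by
  have hfl : (∫⁻ x, ‖f x‖ₑ) / l ≠ ∞ := ENNReal.div_ne_top hf.2.ne hl
  obtain ⟨N, hN⟩ := ENNReal.exists_nat_gt hfl
  refine ⟨-N, fun q hq => le_of_not_gt fun hlt => ?_⟩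
  have hheavy : l * volume (dyadicCube q.1 q.2 : Set E) < ∫⁻ x, ‖f x‖ₑ :=
    lt_of_lt_of_le hq (setLIntegral_le_lintegral _ _)
  have hvol : (N : ℝ≥0∞) ≤ volume (dyadicCube q.1 q.2 : Set E) := by
    have hpow : (N : ℝ) ≤ 2 ^ (-q.1) :=
      calc (N : ℝ) ≤ 2 ^ (N : ℤ) := by exact_mod_cast Nat.lt_two_pow_self.le
        _ ≤ 2 ^ (-q.1) := zpow_le_zpow_right₀ one_le_two (by lia)
    have hone : (1 : ℝ) ≤ 2 ^ (-q.1) := one_le_zpow₀ one_le_two (by lia)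
    rw [volume_dyadicCube]
    calc (N : ℝ≥0∞) = ENNReal.ofReal N := (ENNReal.ofReal_natCast N).symm
      _ ≤ ENNReal.ofReal (2 ^ (-q.1)) := ENNReal.ofReal_le_ofReal hpow
      _ ≤ _ := le_self_pow₀ (ENNReal.one_le_ofReal.2 hone) finrank_pos.ne'
  have hvol0 := volume_dyadicCube_ne_zero q.1 q.2 (E := E)
  exact hheavy.not_ge (mul_comm l _ ▸
    (ENNReal.div_le_iff_le_mul (.inl hl) (.inr hvol0)).1 (hN.le.trans hvol))

lemma eq_of_mem_stoppingCubes {q q' : ℤ × (Fin (finrank ℝ E) → ℤ)} (hq : q ∈ stoppingCubes f l)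
    (hq' : q' ∈ stoppingCubes f l) {x : E} (hx : x ∈ dyadicCube q.1 q.2)
    (hx' : x ∈ dyadicCube q'.1 q'.2) : q = q' := by
  have hindex : dyadicIndex q.1 x = q.2 := hx
  have hindex' : dyadicIndex q'.1 x = q'.2 := hx'
  rcases lt_trichotomy q.1 q'.1 with hlt | heq | hgt
  · exact absurd (hindex ▸ hq.1) (hq'.2 _ hlt x hx')
  · exact Prod.ext heq (by rw [← hindex, ← hindex', heq])
  · exact absurd (hindex' ▸ hq'.1) (hq.2 _ hgt x hx)

lemma exists_mem_stoppingCubes [Nontrivial E] (hl : l ≠ 0) (hf : Integrable f) {k : ℤ} {x : E}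
    (h : (k, dyadicIndex k x) ∈ heavyCubes f l) :
    ∃ q ∈ stoppingCubes f l, x ∈ dyadicCube q.1 q.2 := by
  obtain ⟨k₀, hk₀⟩ := exists_le_of_mem_heavyCubes hl hf
  obtain ⟨j, hj, hmin⟩ := Int.exists_least_of_bdd
    (P := fun k => (k, dyadicIndex k x) ∈ heavyCubes f l) ⟨k₀, fun k hk => hk₀ _ hk⟩ ⟨k, h⟩
  refine ⟨(j, dyadicIndex j x), ⟨hj, fun i hi y hy hheavy => (hmin i ?_).not_gt hi⟩, rfl⟩
  rwa [← dyadicIndex_eq_of_le (le_of_lt hi) hy]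

lemma exists_mem_heavyCubes (hf : Continuous f) {x : E} (h : l < ‖f x‖ₑ) :
    ∃ k, (k, dyadicIndex k x) ∈ heavyCubes f l := by
  obtain ⟨l', hll', hl'⟩ := exists_between h
  obtain ⟨ρ, hρ, hball⟩ :=
    Metric.mem_nhds_iff.1 ((isOpen_lt continuous_const hf.enorm).mem_nhds hl')
  have hdiam : Tendsto (fun j : ℕ => dyadicDiam E j) atTop (𝓝 0) := by
    simpa [dyadicDiam] using (tendsto_inv_atTop_zero.comp
      (tendsto_pow_atTop_atTop_of_one_lt one_lt_two)).const_mul √(finrank ℝ E : ℝ)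
  obtain ⟨j, hj⟩ := (hdiam.eventually_lt_const hρ).exists
  set R : Set E := dyadicCube j (dyadicIndex j x)
  have hR (y : E) (hy : y ∈ R) : l' ≤ ‖f y‖ₑ :=
    (hball (mem_ball_iff_norm.2 ((norm_sub_le_dyadicDiam hy rfl).trans_lt hj))).le
  refine ⟨j, ?_⟩
  calc l * volume R < l' * volume R :=
        (ENNReal.mul_lt_mul_iff_left (volume_dyadicCube_ne_zero _ _)
          (volume_dyadicCube_ne_top _ _)).2 hll'
    _ = ∫⁻ _ in R, l' := by rw [setLIntegral_const]
    _ ≤ ∫⁻ y in R, ‖f y‖ₑ := setLIntegral_mono' (measurableSet_dyadicCube _ _) hR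

lemma setLIntegral_le_of_mem_stoppingCubes {q : ℤ × (Fin (finrank ℝ E) → ℤ)}
    (hq : q ∈ stoppingCubes f l) :
    ∫⁻ x in dyadicCube q.1 q.2, ‖f x‖ₑ ≤
      2 ^ finrank ℝ E * l * volume (dyadicCube q.1 q.2 : Set E) := by
  set c : E := dyadicCorner q.1 q.2
  have hc : c ∈ dyadicCube q.1 q.2 := dyadicCorner_mem _ _
  have hparent : (dyadicCube q.1 q.2 : Set E) ⊆ dyadicCube (q.1 - 1) (dyadicIndex (q.1 - 1) c) :=
    fun y hy => dyadicIndex_eq_of_le (by lia) (Eq.trans hy (Eq.symm hc))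
  calc ∫⁻ x in dyadicCube q.1 q.2, ‖f x‖ₑ
      ≤ ∫⁻ x in dyadicCube (q.1 - 1) (dyadicIndex (q.1 - 1) c), ‖f x‖ₑ :=
        lintegral_mono_set hparent
    _ ≤ l * volume (dyadicCube (q.1 - 1) (dyadicIndex (q.1 - 1) c)) :=
        not_lt.1 (hq.2 (q.1 - 1) (by lia) c hc)
    _ = 2 ^ finrank ℝ E * l * volume (dyadicCube q.1 q.2 : Set E) := by
        rw [volume_dyadicCube_sub_one _ _ q.2, mul_left_comm, mul_assoc]

/-- The stopping cubes of `f` at height `l`, as a family of sets. -/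
def stoppingFamily (f : E → ℂ) (l : ℝ≥0∞) (q : stoppingCubes f l) : Set E :=
  dyadicCube q.1.1 q.1.2

lemma isStoppingFamily_stoppingFamily [Nontrivial E] (hl : l ≠ 0) (hfc : Continuous f)
    (hf : Integrable f) : IsStoppingFamily volume f l (2 ^ finrank ℝ E) (stoppingFamily f l) where
  measurableSet _ := measurableSet_dyadicCube _ _
  pairwise_disjoint q q' hne := Set.disjoint_left.2 fun _ hx hx' =>
    hne (Subtype.ext (eq_of_mem_stoppingCubes q.2 q'.2 hx hx'))
  measure_ne_zero _ := volume_dyadicCube_ne_zero _ _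
  measure_ne_top _ := volume_dyadicCube_ne_top _ _
  mul_measure_le q := le_of_lt q.2.1
  setLIntegral_le q := setLIntegral_le_of_mem_stoppingCubes q.2
  enorm_le x hx := by
    by_contra! hlt
    obtain ⟨k, hk⟩ := exists_mem_heavyCubes hfc hlt
    obtain ⟨q, hq, hxq⟩ := exists_mem_stoppingCubes hl hf hk
    exact hx (Set.mem_iUnion.2 ⟨⟨q, hq⟩, hxq⟩)

/-- The union of balls around the stopping cubes with twice their diameter as radius. -/
def dilatedStoppingSet (f : E → ℂ) (l : ℝ≥0∞) : Set E :=
  ⋃ q : stoppingCubes f l, Metric.ball (dyadicCorner q.1.1 q.1.2) (2 * dyadicDiam E q.1.1)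

lemma measurableSet_dilatedStoppingSet : MeasurableSet (dilatedStoppingSet f l) :=
  MeasurableSet.iUnion fun _ => measurableSet_ball

lemma exists_volume_dilatedStoppingSet_le (E : Type*) [NormedAddCommGroup E]
    [InnerProductSpace ℝ E] [FiniteDimensional ℝ E] [MeasurableSpace E] [BorelSpace E]
    [Nontrivial E] : ∃ K : ℝ≥0∞, K ≠ ∞ ∧ ∀ (f : E → ℂ) (l : ℝ≥0∞), l ≠ 0 → Continuous f →
      Integrable f → volume (dilatedStoppingSet f l) ≤ K * volume (⋃ q, stoppingFamily f l q) := by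
  refine ⟨_, ENNReal.mul_ne_top (ENNReal.ofReal_ne_top (r := (2 * √(finrank ℝ E)) ^ finrank ℝ E))
    (measure_ball_lt_top (μ := volume) (x := (0 : E)) (r := 1)).ne, fun f l hl hfc hf => ?_⟩
  have h := isStoppingFamily_stoppingFamily hl hfc hf
  rw [measure_iUnion h.pairwise_disjoint h.measurableSet, ← ENNReal.tsum_mul_left]
  exact (measure_iUnion_le _).trans
    (ENNReal.tsum_le_tsum fun q => (volume_ball_dyadicCorner q.1.1 q.1.2).le)

end DyadicCubes

/-! ### Calderón–Zygmund estimates for convolutions -/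

section BadPart

variable {G ι : Type*} [AddCommGroup G] [MeasurableSpace G] {μ : Measure G} [Countable ι]
  {b k : G → ℂ} {Q : ι → Set G} {c : ι → G}

/- The cancellation of `b` on `Q i` allows one to subtract the constant `k (x - c i)` from the
kernel there. -/
lemma enorm_convolution_le_tsum (hQm : ∀ i, MeasurableSet (Q i))
    (hQ : Pairwise (Function.onFun Disjoint Q)) (hb : Integrable b μ)
    (hb0 : ∀ x ∉ ⋃ i, Q i, b x = 0) (hbQ : ∀ i, ∫ x in Q i, b x ∂μ = 0) {x : G}
    (hbk : ConvolutionExistsAt b k x (.mul ℂ ℂ) μ) :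
    ‖(b ⋆[.mul ℂ ℂ, μ] k) x‖ₑ ≤
      ∑' i, ∫⁻ y in Q i, ‖b y‖ₑ * ‖k (x - y) - k (x - c i)‖ₑ ∂μ := by
  have hint : Integrable (fun y => b y * k (x - y)) μ := hbk
  have hsupp : ∫ y, b y * k (x - y) ∂μ = ∫ y in ⋃ i, Q i, b y * k (x - y) ∂μ :=
    (setIntegral_eq_integral_of_forall_compl_eq_zero fun y hy => by rw [hb0 y hy, zero_mul]).symm
  have hcancel (i : ι) : ∫ y in Q i, b y * k (x - y) ∂μ =
      ∫ y in Q i, b y * (k (x - y) - k (x - c i)) ∂μ := by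
    simp_rw [mul_sub]
    rw [integral_sub hint.integrableOn (hb.mul_const _).integrableOn, integral_mul_const, hbQ i,
      zero_mul, sub_zero]
  change ‖∫ y, b y * k (x - y) ∂μ‖ₑ ≤ _
  rw [hsupp, integral_iUnion hQm hQ hint.integrableOn]
  refine enorm_tsum_le_tsum_enorm.trans (ENNReal.tsum_le_tsum fun i => ?_)
  rw [hcancel i]
  simpa only [enorm_mul] using enorm_integral_le_lintegral_enorm
    (μ := μ.restrict (Q i)) fun y => b y * (k (x - y) - k (x - c i))

lemma setLIntegral_enorm_sub_sub_le [MeasurableAdd G] [μ.IsAddRightInvariant] {S T : Set G}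
    (k : G → ℂ) {c : G} (hS : ∀ x ∈ S, x - c ∈ T) (hSm : MeasurableSet S) (hT : MeasurableSet T)
    (y : G) : ∫⁻ x in S, ‖k (x - y) - k (x - c)‖ₑ ∂μ ≤
      ∫⁻ x in T, ‖k (x - (y - c)) - k x‖ₑ ∂μ := by
  rw [← lintegral_indicator hSm, ← lintegral_indicator hT,
    ← lintegral_sub_right_eq_self (μ := μ) (T.indicator _) c]
  refine lintegral_mono fun x => Set.indicator_apply_le' (fun hx => ?_) fun _ => zero_le
  rw [Set.indicator_of_mem (hS x hx), sub_sub_sub_cancel_right]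

variable [MeasurableSub₂ G] [SFinite μ]

lemma setLIntegral_enorm_convolution_le (hQm : ∀ i, MeasurableSet (Q i))
    (hQ : Pairwise (Function.onFun Disjoint Q)) (hbm : Measurable b) (hb : Integrable b μ)
    (hb0 : ∀ x ∉ ⋃ i, Q i, b x = 0) (hbQ : ∀ i, ∫ x in Q i, b x ∂μ = 0) (hk : Measurable k)
    (hbk : ConvolutionExists b k (.mul ℂ ℂ) μ) {S : Set G} {H : ℝ≥0∞}
    (hH : ∀ i, ∀ y ∈ Q i, ∫⁻ x in S, ‖k (x - y) - k (x - c i)‖ₑ ∂μ ≤ H) :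
    ∫⁻ x in S, ‖(b ⋆[.mul ℂ ℂ, μ] k) x‖ₑ ∂μ ≤ H * ∫⁻ x, ‖b x‖ₑ ∂μ := by
  have hmeas (i : ι) :
      Measurable fun p : G × G => ‖b p.2‖ₑ * ‖k (p.1 - p.2) - k (p.1 - c i)‖ₑ := by
    have : Measurable fun p : G × G => k (p.1 - c i) := hk.comp (measurable_fst.sub_const _)
    exact (hbm.comp measurable_snd).enorm.mul ((hk.comp measurable_sub).sub this).enorm
  have hpiece (i : ι) : ∫⁻ x in S, ∫⁻ y in Q i, ‖b y‖ₑ * ‖k (x - y) - k (x - c i)‖ₑ ∂μ ∂μ ≤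
      H * ∫⁻ y in Q i, ‖b y‖ₑ ∂μ := by
    rw [lintegral_lintegral_swap (hmeas i).aemeasurable, ← lintegral_const_mul _ hbm.enorm]
    refine setLIntegral_mono' (hQm i) fun y hy => ?_
    rw [lintegral_const_mul' _ _ enorm_ne_top, mul_comm]
    gcongr
    exact hH i y hy
  calc ∫⁻ x in S, ‖(b ⋆[.mul ℂ ℂ, μ] k) x‖ₑ ∂μ
      ≤ ∫⁻ x in S, ∑' i, ∫⁻ y in Q i, ‖b y‖ₑ * ‖k (x - y) - k (x - c i)‖ₑ ∂μ ∂μ :=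
        lintegral_mono fun x => enorm_convolution_le_tsum hQm hQ hb hb0 hbQ (hbk x)
    _ = ∑' i, ∫⁻ x in S, ∫⁻ y in Q i, ‖b y‖ₑ * ‖k (x - y) - k (x - c i)‖ₑ ∂μ ∂μ :=
        lintegral_tsum fun i => (hmeas i).lintegral_prod_right'.aemeasurable
    _ ≤ ∑' i, H * ∫⁻ y in Q i, ‖b y‖ₑ ∂μ := ENNReal.tsum_le_tsum hpiece
    _ = H * ∫⁻ x in ⋃ i, Q i, ‖b x‖ₑ ∂μ := by
        rw [ENNReal.tsum_mul_left, lintegral_iUnion hQm hQ]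
    _ ≤ H * ∫⁻ x, ‖b x‖ₑ ∂μ := by
        gcongr
        exact Measure.restrict_le_self

end BadPart

lemma measure_lt_enorm_add_le {α : Type*} [MeasurableSpace α] {μ : Measure α} {F G : α → ℂ}
    (hF : AEStronglyMeasurable F μ) (hG : AEStronglyMeasurable G μ) {S : Set α}
    (hS : MeasurableSet S) {L : ℝ≥0∞} (hL : L ≠ 0) (hL' : L ≠ ∞) :
    μ {x | 2 * L < ‖F x + G x‖ₑ} ≤
      (L ^ 2)⁻¹ * ∫⁻ x, ‖F x‖ₑ ^ 2 ∂μ + μ S + L⁻¹ * ∫⁻ x in Sᶜ, ‖G x‖ₑ ∂μ := by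
  have hsub : {x | 2 * L < ‖F x + G x‖ₑ} ⊆
      {x | L ^ 2 ≤ ‖F x‖ₑ ^ 2} ∪ S ∪ {x | L ≤ ‖G x‖ₑ} ∩ Sᶜ := by
    intro x hx
    by_cases hxS : x ∈ S
    · exact .inl (.inr hxS)
    rcases le_or_gt L ‖F x‖ₑ with hFx | hFx
    · exact .inl (.inl (pow_le_pow_left₀ zero_le hFx 2))
    · refine .inr ⟨show L ≤ ‖G x‖ₑ from not_lt.1 fun hGx => ?_, hxS⟩
      have hx' : 2 * L < ‖F x‖ₑ + ‖G x‖ₑ := lt_of_lt_of_le hx (enorm_add_le _ _)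
      exact (ENNReal.add_lt_add hFx hGx).not_gt (two_mul L ▸ hx')
  refine (measure_mono hsub).trans ((measure_union_le _ _).trans (add_le_add
    ((measure_union_le _ _).trans (add_le_add_left ?_ _)) ?_))
  · rw [← ENNReal.div_eq_inv_mul]
    exact meas_ge_le_lintegral_div (hF.enorm.pow_const 2) (pow_ne_zero 2 hL)
      (ENNReal.pow_ne_top hL')
  · rw [← Measure.restrict_apply' hS.compl, ← ENNReal.div_eq_inv_mul]
    exact meas_ge_le_lintegral_div hG.enorm.restrict hL hL'

section RieszKernel

variable {E : Type*} [NormedAddCommGroup E] [InnerProductSpace ℝ E] [FiniteDimensional ℝ E]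
  [MeasurableSpace E] [BorelSpace E] {f : E → ℂ} {l : ℝ≥0∞}

lemma convolutionExists_rieszKernel {a : ℂ} (ha : 0 < a.re) (ha' : 2 * a.re < finrank ℝ E)
    {g : E → ℂ} (hg : Integrable g) {M : ℝ} (hM : ∀ x, ‖g x‖ ≤ M) :
    ConvolutionExists g (rieszKernel a) (.mul ℂ ℂ) := by
  obtain ⟨B, hB, hgB⟩ := exists_lintegral_mul_rieszKernel_le ha ha' hg hM
  exact fun x => convolutionExistsAt_of_lintegral_ne_top hg.1 (measurable_rieszKernel a)
    (ne_top_of_le_ne_top hB (hgB x))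

variable [Nontrivial E]

lemma norm_goodPart_stoppingFamily_le (hl : l ≠ 0) (hl' : l ≠ ∞) (hfc : Continuous f)
    (hf : Integrable f) (x : E) : ‖goodPart volume f (stoppingFamily f l) x‖ ≤
      (2 ^ finrank ℝ E * l).toReal := by
  rw [← toReal_enorm]
  exact ENNReal.toReal_mono (ENNReal.mul_ne_top (ENNReal.pow_ne_top ENNReal.ofNat_ne_top) hl')
    ((isStoppingFamily_stoppingFamily hl hfc hf).enorm_goodPart_le
      (one_le_pow₀ one_le_two) x)

lemma setLIntegral_enorm_bad_convolution_rieszKernel_le (hl : l ≠ 0) (hfc : Continuous f)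
    (hf : Integrable f) {a : ℂ} (hg : Integrable (goodPart volume f (stoppingFamily f l)))
    (hbk : ConvolutionExists (f - goodPart volume f (stoppingFamily f l)) (rieszKernel a)
      (.mul ℂ ℂ)) {H : ℝ≥0∞}
    (hH : ∀ q ∈ stoppingCubes f l, ∀ y : E, ‖y‖ ≤ dyadicDiam E q.1 →
      ∫⁻ x in {x | 2 * dyadicDiam E q.1 ≤ ‖x‖}, ‖rieszKernel a (x - y) - rieszKernel a x‖ₑ ≤ H) :
    ∫⁻ x in (dilatedStoppingSet f l)ᶜ,
        ‖((f - goodPart volume f (stoppingFamily f l)) ⋆[.mul ℂ ℂ] rieszKernel a) x‖ₑ ≤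
      H * (2 * (2 ^ finrank ℝ E * l) * volume (⋃ q, stoppingFamily f l q)) := by
  have h := isStoppingFamily_stoppingFamily hl hfc hf
  refine (setLIntegral_enorm_convolution_le (c := fun q => dyadicCorner q.1.1 q.1.2)
    h.measurableSet h.pairwise_disjoint
    (hfc.measurable.sub
      (measurable_goodPart h.pairwise_disjoint h.measurableSet hfc.measurable))
    (hf.sub hg) (fun x hx => by rw [Pi.sub_apply, goodPart_of_notMem hx, sub_self])
    h.setIntegral_sub_goodPart (measurable_rieszKernel a) hbk (H := H) fun q y hy => ?_).trans ?_
  · refine (setLIntegral_enorm_sub_sub_le (S := (dilatedStoppingSet f l)ᶜ)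
      (T := {x | 2 * dyadicDiam E q.1.1 ≤ ‖x‖}) (rieszKernel a) (fun x hx => ?_)
      measurableSet_dilatedStoppingSet.compl (measurableSet_le measurable_const measurable_norm)
      y).trans (hH q q.2 _ (norm_sub_le_dyadicDiam hy (dyadicCorner_mem _ _)))
    by_contra hlt
    exact hx (Set.mem_iUnion.2 ⟨q, mem_ball_iff_norm.2 (not_le.1 hlt)⟩)
  · gcongr
    exact h.lintegral_sub_goodPart_le (one_le_pow₀ one_le_two)

lemma integrable_goodPart_stoppingFamily (hl : l ≠ 0) (hl' : l ≠ ∞) (hfc : Continuous f)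
    (hf : Integrable f) : Integrable (goodPart volume f (stoppingFamily f l)) :=
  (isStoppingFamily_stoppingFamily hl hfc hf).integrable_goodPart (one_le_pow₀ one_le_two)
    (ENNReal.pow_ne_top ENNReal.ofNat_ne_top) hl hl' hfc.measurable hf

lemma volume_lt_enorm_convolution_rieszKernel_le (hl : l ≠ 0) (hl' : l ≠ ∞) (hfc : Continuous f)
    (hf : Integrable f) {M : ℝ} (hM : ∀ x, ‖f x‖ ≤ M) {a : ℂ} (ha : 0 < a.re)
    (ha' : 2 * a.re < finrank ℝ E) {H : ℝ≥0∞}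
    (hH : ∀ q ∈ stoppingCubes f l, ∀ y : E, ‖y‖ ≤ dyadicDiam E q.1 →
      ∫⁻ x in {x | 2 * dyadicDiam E q.1 ≤ ‖x‖}, ‖rieszKernel a (x - y) - rieszKernel a x‖ₑ ≤ H)
    {L : ℝ≥0∞} (hL : L ≠ 0) (hL' : L ≠ ∞) :
    volume {x | 2 * L < ‖(f ⋆[.mul ℂ ℂ] rieszKernel a) x‖ₑ} ≤
      (L ^ 2)⁻¹ *
          (∫⁻ x, ‖(goodPart volume f (stoppingFamily f l) ⋆[.mul ℂ ℂ] rieszKernel a) x‖ₑ ^ 2)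
        + volume (dilatedStoppingSet f l)
        + L⁻¹ * (H * (2 * (2 ^ finrank ℝ E * l) * volume (⋃ q, stoppingFamily f l q))) := by
  have hg := integrable_goodPart_stoppingFamily hl hl' hfc hf
  have hgM := norm_goodPart_stoppingFamily_le hl hl' hfc hf
  set g := goodPart volume f (stoppingFamily f l)
  have hgk := convolutionExists_rieszKernel ha ha' hg hgM
  have hbk : ConvolutionExists (f - g) (rieszKernel a) (.mul ℂ ℂ) :=
    convolutionExists_rieszKernel ha ha' (hf.sub hg) fun x =>
      (norm_sub_le _ _).trans (add_le_add (hM x) (hgM x))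
  have hsplit : f ⋆[.mul ℂ ℂ] rieszKernel a =
      g ⋆[.mul ℂ ℂ] rieszKernel a + (f - g) ⋆[.mul ℂ ℂ] rieszKernel a := by
    rw [← hgk.add_distrib hbk, add_sub_cancel]
  rw [hsplit]
  refine (measure_lt_enorm_add_le (aestronglyMeasurable_convolution hg.1 (measurable_rieszKernel a))
    (aestronglyMeasurable_convolution (hf.sub hg).1 (measurable_rieszKernel a))
    (measurableSet_dilatedStoppingSet (f := f) (l := l)) hL hL').trans ?_
  gcongr
  exact setLIntegral_enorm_bad_convolution_rieszKernel_le hl hfc hf hg hbk hH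

end RieszKernel

/-! ### Weak type bounds for imaginary powers -/

lemma measure_le_of_tendsto_of_eventually_mem {α ι : Type*} [MeasurableSpace α] {μ : Measure α}
    {L : Filter ι} [L.IsCountablyGenerated] [L.NeBot] {A : ι → Set α} {B : Set α}
    {R : ι → ℝ≥0∞} {R₀ : ℝ≥0∞} (hB : ∀ x ∈ B, ∀ᶠ i in L, x ∈ A i) (hR : Tendsto R L (𝓝 R₀))
    (hA : ∀ᶠ i in L, μ (A i) ≤ R i) : μ B ≤ R₀ := by
  obtain ⟨S, hS⟩ := L.exists_antitone_basis
  have hsub : B ⊆ ⋃ k, ⋂ i ∈ S k, A i := fun x hx => by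
    obtain ⟨k, hk⟩ := hS.eventually_iff.1 (hB x hx)
    exact Set.mem_iUnion.2 ⟨k, Set.mem_iInter₂.2 fun i hi => hk.2 hi⟩
  have hmono : Monotone fun k => ⋂ i ∈ S k, A i := fun j k hjk =>
    Set.biInter_subset_biInter_left (hS.antitone hjk)
  refine (measure_mono hsub).trans ?_
  rw [hmono.measure_iUnion]
  refine iSup_le fun k => ge_of_tendsto hR ?_
  filter_upwards [hA, hS.mem k] with i hi hik
  exact (measure_mono (Set.biInter_subset_of_mem hik)).trans hi

lemma measure_lt_enorm_le_of_tendsto {α ι : Type*} [MeasurableSpace α] {μ : Measure α}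
    {L : Filter ι} [L.IsCountablyGenerated] [L.NeBot] {T : ι → α → ℂ} {T₀ : α → ℂ} {t : ℝ≥0∞}
    {R : ι → ℝ≥0∞} {R₀ : ℝ≥0∞} (hT : ∀ x, Tendsto (fun i => T i x) L (𝓝 (T₀ x)))
    (hR : Tendsto R L (𝓝 R₀)) (hTR : ∀ᶠ i in L, μ {x | t < ‖T i x‖ₑ} ≤ R i) :
    μ {x | t < ‖T₀ x‖ₑ} ≤ R₀ :=
  measure_le_of_tendsto_of_eventually_mem
    (fun x hx => (hT x).enorm.eventually_const_lt hx) hR hTR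

lemma tendsto_rieszConst_sub_I_mul {n : ℕ} (hn : 0 < n) (u : ℝ) :
    Tendsto (fun δ : ℝ => rieszConst n (δ - I * u)) (𝓝[>] 0) (𝓝 (rieszConst n (-(I * u)))) := by
  have hcont : ContinuousAt (rieszConst n) (-(I * u)) := continuousAt_rieszConst (by simpa using hn)
  have hδ : Continuous fun δ : ℝ => (δ : ℂ) - I * u := by fun_prop
  exact hcont.tendsto.comp ((hδ.tendsto' 0 _ (by simp)).mono_left nhdsWithin_le_nhds)

lemma weakType_constants_le {A C G H K P V W X Y l : ℝ≥0∞} (hl : l ≠ 0) (hl' : l ≠ ∞) (hA : 1 ≤ A)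
    (hA' : A ≠ ∞) (hG : G ≤ X + (P * l) ^ 2 * V) (hW : W ≤ K * V) (hH : H ≤ C * A)
    (hV : V ≤ 2 * l⁻¹ * Y) :
    ((A * l) ^ 2)⁻¹ * G + W + (A * l)⁻¹ * (H * (2 * (P * l) * V)) ≤
      (1 + 2 * (P ^ 2 + K + 2 * C * P)) * ((l ^ 2)⁻¹ * X + l⁻¹ * Y) := by
  have hA0 : A ≠ 0 := (one_pos.trans_le hA).ne'
  have hll : l⁻¹ * l = 1 := ENNReal.inv_mul_cancel hl hl'
  have hAA : A⁻¹ * A = 1 := ENNReal.inv_mul_cancel hA0 hA'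
  have hgood : ((A * l) ^ 2)⁻¹ * G ≤ (l ^ 2)⁻¹ * X + P ^ 2 * V := by
    calc ((A * l) ^ 2)⁻¹ * G ≤ (l ^ 2)⁻¹ * (X + (P * l) ^ 2 * V) := by
          gcongr
          exact le_mul_of_one_le_left' hA
      _ = (l ^ 2)⁻¹ * X + (l⁻¹ * l) ^ 2 * (P ^ 2 * V) := by
          rw [ENNReal.inv_pow]; ring
      _ = _ := by rw [hll, one_pow, one_mul]
  have hbad : (A * l)⁻¹ * (H * (2 * (P * l) * V)) ≤ 2 * C * P * V := by
    calc (A * l)⁻¹ * (H * (2 * (P * l) * V)) ≤ (A * l)⁻¹ * (C * A * (2 * (P * l) * V)) := by gcongr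
      _ = (A⁻¹ * A) * (l⁻¹ * l) * (2 * C * P * V) := by
          rw [ENNReal.mul_inv (.inl hA0) (.inl hA')]; ring
      _ = _ := by rw [hll, hAA, one_mul, one_mul]
  calc _ ≤ (l ^ 2)⁻¹ * X + P ^ 2 * V + K * V + 2 * C * P * V := by gcongr
    _ = (l ^ 2)⁻¹ * X + (P ^ 2 + K + 2 * C * P) * V := by ring
    _ ≤ (l ^ 2)⁻¹ * X + (P ^ 2 + K + 2 * C * P) * (2 * l⁻¹ * Y) := by gcongr
    _ = 1 * ((l ^ 2)⁻¹ * X) + 2 * (P ^ 2 + K + 2 * C * P) * (l⁻¹ * Y) := by ring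
    _ ≤ _ := by
      rw [mul_add (1 + _)]
      gcongr
      · exact le_self_add
      · exact le_add_self

lemma exists_norm_rieszConst_mul_rpow_le {n : ℕ} {s ε : ℝ} (hε : n / 2 + ε ≤ s) :
    ∃ C : ℝ, 0 < C ∧ ∀ u : ℝ,
      ‖rieszConst n (-(I * u))‖ * (1 + |u|) ^ ε ≤ C * (1 + |u|) ^ s := by
  obtain ⟨C, hC, hbound⟩ := exists_norm_rieszConst_le n
  refine ⟨C, hC, fun u => ?_⟩
  have hu : 1 ≤ 1 + |u| := le_add_of_nonneg_right (abs_nonneg u)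
  calc ‖rieszConst n (-(I * u))‖ * (1 + |u|) ^ ε
      ≤ C * (1 + |u|) ^ (n / 2 : ℝ) * (1 + |u|) ^ ε := by gcongr; exact hbound u
    _ = C * (1 + |u|) ^ (n / 2 + ε) := by rw [mul_assoc, ← Real.rpow_add (by linarith)]
    _ ≤ C * (1 + |u|) ^ s :=
        mul_le_mul_of_nonneg_left (Real.rpow_le_rpow_of_exponent_le hu hε) hC.le

variable {E : Type*} [NormedAddCommGroup E] [InnerProductSpace ℝ E] [FiniteDimensional ℝ E]
  [MeasurableSpace E] [BorelSpace E] [Nontrivial E]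

lemma tendsto_laplacianPow_I_mul_sub (u : ℝ) (f : SchwartzMap E ℂ) (x : E) :
    Tendsto (fun δ : ℝ => laplacianPow (-(δ - I * u)) f x) (𝓝[>] 0)
      (𝓝 (laplacianPow (I * u) f x)) := by
  have hn : (1 : ℝ) ≤ finrank ℝ E := by exact_mod_cast finrank_pos (R := ℝ) (M := E)
  have hsing : Integrable fun ξ : E => ‖0 - ξ‖ ^ (-(1 / 2) : ℝ) * ‖𝓕 f ξ‖ :=
    integrable_norm_sub_rpow_neg_mul (by norm_num) (by linarith) (𝓕 f).integrable
      ((𝓕 f).norm_le_seminorm ℝ) 0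
  simp only [laplacianPow, Real.fourierInv_eq]
  refine tendsto_integral_filter_of_dominated_convergence
    (fun ξ => ‖𝓕 f ξ‖ + ‖0 - ξ‖ ^ (-(1 / 2) : ℝ) * ‖𝓕 f ξ‖) ?_ ?_
    ((𝓕 f).integrable.norm.add hsing) ?_
  · refine .of_forall fun δ => ?_
    have hchar : Continuous fun ξ : E => Real.fourierChar ⟪ξ, x⟫ := by fun_prop
    exact hchar.aestronglyMeasurable.smul ((Measurable.aestronglyMeasurable (by fun_prop)).mul
      (continuous_fourier f.integrable).aestronglyMeasurable)
  · filter_upwards [Ioo_mem_nhdsGT (show (0 : ℝ) < 1 / 4 by norm_num)] with δ hδ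
    filter_upwards [ae_norm_sub_pos (0 : E)] with ξ hξ
    rw [zero_sub, norm_neg] at hξ ⊢
    rw [Circle.norm_smul, norm_mul, Complex.norm_cpow_eq_rpow_re_of_pos hξ, ← one_add_mul,
      SchwartzMap.fourier_coe]
    gcongr
    have hre : (2 * -((δ : ℂ) - I * u)).re = -(2 * δ) := by simp
    rw [hre]
    rcases le_total 1 ‖ξ‖ with h1 | h1
    · exact (Real.rpow_le_one_of_one_le_of_nonpos h1 (by linarith [hδ.1])).trans
        (le_add_of_nonneg_right (by positivity))
    · exact (Real.rpow_le_rpow_of_exponent_ge hξ h1 (by linarith [hδ.2])).trans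
        (le_add_of_nonneg_left zero_le_one)
  · filter_upwards [Measure.ae_ne volume (0 : E)] with ξ hξ
    have hcont : Continuous fun δ : ℝ => (‖ξ‖ : ℂ) ^ (2 * -((δ : ℂ) - I * u)) :=
      .const_cpow (by fun_prop) (.inl (by simpa using hξ))
    have hlim := (hcont.tendsto 0).mono_left (nhdsWithin_le_nhds (s := Set.Ioi 0))
    rw [ofReal_zero, zero_sub, neg_neg] at hlim
    exact (hlim.mul_const _).const_smul _

lemma tendsto_convolution_rieszKernel (u : ℝ) (f : SchwartzMap E ℂ) (x : E) :
    Tendsto (fun δ : ℝ => (f ⋆[.mul ℂ ℂ] rieszKernel (δ - I * u)) x) (𝓝[>] 0)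
      (𝓝 (laplacianPow (I * u) f x)) := by
  have hn : (1 : ℝ) ≤ finrank ℝ E := by exact_mod_cast finrank_pos (R := ℝ) (M := E)
  refine (tendsto_laplacianPow_I_mul_sub u f x).congr' ?_
  filter_upwards [Ioo_mem_nhdsGT (show (0 : ℝ) < 1 / 2 by norm_num)] with δ hδ
  have hre : ((δ : ℂ) - I * u).re = δ := by simp
  exact laplacianPow_neg_eq_convolution_rieszKernel (by rw [hre]; exact hδ.1)
    (by rw [hre]; linarith [hδ.2]) f x

variable (E) in
lemma exists_volume_lt_enorm_laplacianPow_I_mul_le {ε : ℝ} (hε0 : 0 < ε) (hε1 : ε ≤ 1) :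
    ∃ C : ℝ, 0 < C ∧ ∀ (u : ℝ) (f : SchwartzMap E ℂ) (l L : ℝ≥0∞), l ≠ 0 → l ≠ ∞ →
      L ≠ 0 → L ≠ ∞ → volume {x | 2 * L < ‖laplacianPow (I * u) f x‖ₑ} ≤
        (L ^ 2)⁻¹ * (∫⁻ x, ‖goodPart volume f (stoppingFamily f l) x‖ₑ ^ 2)
          + volume (dilatedStoppingSet f l)
          + L⁻¹ * (ENNReal.ofReal (C * ‖rieszConst (finrank ℝ E) (-(I * u))‖ * (1 + |u|) ^ ε) *
              (2 * (2 ^ finrank ℝ E * l) * volume (⋃ q, stoppingFamily f l q))) := by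
  have hn : (1 : ℝ) ≤ finrank ℝ E := by exact_mod_cast finrank_pos (R := ℝ) (M := E)
  obtain ⟨C, hC, hkernel⟩ := exists_setLIntegral_rieszKernel_sub_sub_le E hε0 hε1
  refine ⟨C, hC, fun u f l L hl hl' hL hL' => ?_⟩
  obtain ⟨k₀, hk₀⟩ := exists_le_of_mem_heavyCubes hl f.integrable
  have hfam := isStoppingFamily_stoppingFamily hl f.continuous f.integrable
  have hre (δ : ℝ) : ((δ : ℂ) - I * u).re = δ := by simp
  have him (δ : ℝ) : |((δ : ℂ) - I * u).im| = |u| := by simp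
  set H : ℝ → ℝ≥0∞ := fun δ => ENNReal.ofReal
    (C * ‖rieszConst (finrank ℝ E) (δ - I * u)‖ * (1 + |u|) ^ ε * dyadicDiam E k₀ ^ (2 * δ))
  have hlim : Tendsto H (𝓝[>] 0) (𝓝 (ENNReal.ofReal
      (C * ‖rieszConst (finrank ℝ E) (-(I * u))‖ * (1 + |u|) ^ ε))) := by
    have hD : Tendsto (fun δ : ℝ => dyadicDiam E k₀ ^ (2 * δ)) (𝓝[>] 0) (𝓝 1) := by
      have hcont : Continuous fun δ : ℝ => dyadicDiam E k₀ ^ (2 * δ) :=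
        .rpow continuous_const (by fun_prop) fun _ => .inl (dyadicDiam_pos k₀).ne'
      exact (hcont.tendsto' 0 _ (by simp)).mono_left nhdsWithin_le_nhds
    simpa only [mul_one] using
      ENNReal.tendsto_ofReal ((((tendsto_rieszConst_sub_I_mul
        (finrank_pos (R := ℝ) (M := E)) u).norm.const_mul C).mul_const _).mul hD)
  refine measure_lt_enorm_le_of_tendsto (tendsto_convolution_rieszKernel u f)
    (((ENNReal.Tendsto.const_mul (tendsto_lintegral_convolution_rieszKernel_sq u
      (integrable_goodPart_stoppingFamily hl hl' f.continuous f.integrable)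
      (norm_goodPart_stoppingFamily_le hl hl' f.continuous f.integrable))
        (.inr (by simpa))).add_const _).add
      (ENNReal.Tendsto.const_mul (ENNReal.Tendsto.mul_const hlim (.inr ?_)) (.inr (by simpa)))) ?_
  · exact ENNReal.mul_ne_top (by finiteness) (hfam.measure_iUnion_lt_top hl f.integrable).ne
  · filter_upwards [Ioo_mem_nhdsGT (show 0 < ε / 4 by positivity)] with δ hδ
    refine volume_lt_enorm_convolution_rieszKernel_le hl hl' f.continuous f.integrable
      (f.norm_le_seminorm ℝ) (by rw [hre]; exact hδ.1) (by rw [hre]; linarith [hδ.2])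
      (fun q hq y hy => ?_) hL hL'
    refine (hkernel _ (by rw [hre]; exact hδ.1) (by rw [hre]; linarith [hδ.2]) _
      (dyadicDiam_pos q.1) y hy).trans (ENNReal.ofReal_le_ofReal ?_)
    rw [hre, him]
    gcongr
    · exact (dyadicDiam_pos _).le
    · linarith [hδ.1]
    · exact dyadicDiam_le_of_le (hk₀ q hq.1)

variable (E) in
theorem exists_weakType_laplacianPow_I_mul {s : ℝ} (hs : finrank ℝ E / 2 < s) :
    ∃ K ≠ ∞, ∀ (u : ℝ) (f : SchwartzMap E ℂ) (l : ℝ≥0∞), l ≠ 0 → l ≠ ∞ →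
      volume {x | 2 * (.ofReal ((1 + |u|) ^ s) * l) < ‖laplacianPow (I * u) f x‖ₑ} ≤
        K * ((l ^ 2)⁻¹ * (∫⁻ x in {x | ‖f x‖ₑ ≤ l}, ‖f x‖ₑ ^ 2) +
          l⁻¹ * ∫⁻ x in {x | l / 2 < ‖f x‖ₑ}, ‖f x‖ₑ) := by
  set n := finrank ℝ E
  set ε := min 1 (s - n / 2)
  obtain ⟨C, hC, hweak⟩ := exists_volume_lt_enorm_laplacianPow_I_mul_le E (ε := ε)
    (lt_min one_pos (sub_pos.2 hs)) (min_le_left _ _)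
  obtain ⟨C', hC', hconst⟩ := exists_norm_rieszConst_mul_rpow_le (n := n) (s := s) (ε := ε)
    (by linarith [min_le_right 1 (s - n / 2)])
  obtain ⟨K, hK, hdilated⟩ := exists_volume_dilatedStoppingSet_le E
  refine ⟨1 + 2 * ((2 ^ n) ^ 2 + K + 2 * .ofReal (C * C') * 2 ^ n), by finiteness,
    fun u f l hl hl' => ?_⟩
  have hfam := isStoppingFamily_stoppingFamily hl f.continuous f.integrable
  set A := ENNReal.ofReal ((1 + |u|) ^ s) with hA
  have hu : 1 ≤ 1 + |u| := le_add_of_nonneg_right (abs_nonneg u)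
  have hs0 : 0 ≤ s := (by positivity : (0 : ℝ) ≤ n / 2).trans hs.le
  have hA1 : 1 ≤ A := ENNReal.one_le_ofReal.2 (Real.one_le_rpow hu hs0)
  have hA0 : A ≠ 0 := (one_pos.trans_le hA1).ne'
  refine (hweak u f l (A * l) hl hl' (mul_ne_zero hA0 hl) (by finiteness)).trans
    (weakType_constants_le hl hl' hA1 ENNReal.ofReal_ne_top
      (hfam.lintegral_goodPart_sq_le (one_le_pow₀ one_le_two))
      (hdilated f l hl f.continuous f.integrable) ?_ (hfam.measure_iUnion_le hl hl' f.integrable))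
  rw [hA, ← ENNReal.ofReal_mul (by positivity)]
  refine ENNReal.ofReal_le_ofReal ?_
  rw [mul_assoc, mul_assoc]
  exact mul_le_mul_of_nonneg_left (hconst u) hC.le

/-! ### Marcinkiewicz interpolation -/

lemma lintegral_mul_setLIntegral_swap {α β : Type*} [MeasurableSpace α] [MeasurableSpace β]
    {μ : Measure α} {ν : Measure β} [SFinite μ] [SFinite ν] {S : Set (α × β)}
    (hS : MeasurableSet S) {φ : α → ℝ≥0∞} {ψ : β → ℝ≥0∞} (hφ : Measurable φ)
    (hψ : Measurable ψ) :
    ∫⁻ x, φ x * ∫⁻ y in {y | (x, y) ∈ S}, ψ y ∂ν ∂μ =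
      ∫⁻ y, ψ y * ∫⁻ x in {x | (x, y) ∈ S}, φ x ∂μ ∂ν := by
  have hSx (x : α) : MeasurableSet {y | (x, y) ∈ S} := measurable_prodMk_left hS
  have hSy (y : β) : MeasurableSet {x | (x, y) ∈ S} := measurable_prodMk_right hS
  calc ∫⁻ x, φ x * ∫⁻ y in {y | (x, y) ∈ S}, ψ y ∂ν ∂μ
      = ∫⁻ x, ∫⁻ y, S.indicator (fun p => φ p.1 * ψ p.2) (x, y) ∂ν ∂μ := by
        refine lintegral_congr fun x => ?_
        rw [← lintegral_const_mul _ hψ, ← lintegral_indicator (hSx x)]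
        rfl
    _ = ∫⁻ y, ∫⁻ x, S.indicator (fun p => φ p.1 * ψ p.2) (x, y) ∂μ ∂ν :=
        lintegral_lintegral_swap
          (((hφ.comp measurable_fst).mul (hψ.comp measurable_snd)).indicator hS).aemeasurable
    _ = _ := by
        refine lintegral_congr fun y => ?_
        rw [mul_comm, ← lintegral_mul_const _ hφ, ← lintegral_indicator (hSy y)]
        rfl

lemma sq_mul_setLIntegral_rpow_le {r : ℝ} (hr : r < 2) (y : ℝ≥0∞) :
    y ^ 2 * ∫⁻ t in {t | y ≤ .ofReal t}, .ofReal (t ^ (r - 3)) ∂volume.restrict (Set.Ioi 0) ≤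
      .ofReal (1 / (2 - r)) * y ^ r := by
  rcases eq_or_ne y 0 with rfl | hy0
  · simp
  rcases eq_or_ne y ∞ with rfl | hy
  · simp
  lift y to NNReal using hy
  have hy : (0 : ℝ) < y := NNReal.coe_pos.2 (pos_iff_ne_zero.2 (by simpa using hy0))
  have hset : {t : ℝ | (y : ℝ≥0∞) ≤ .ofReal t} = Set.Ici (y : ℝ) := by
    ext t
    exact ENNReal.coe_le_coe.trans (Real.le_toNNReal_iff_coe_le' hy)
  have hint : ∫⁻ t in Set.Ioi (y : ℝ), .ofReal (t ^ (r - 3)) =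
      .ofReal (1 / (2 - r) * y ^ (r - 2)) := by
    rw [← ofReal_integral_eq_lintegral_ofReal (integrableOn_Ioi_rpow_of_lt (by linarith) hy),
      integral_Ioi_rpow_of_lt (by linarith) hy]
    · rw [show r - 3 + 1 = -(2 - r) by ring, neg_div_neg_eq, neg_sub, one_div_mul_eq_div]
    · filter_upwards [ae_restrict_mem measurableSet_Ioi] with t ht
      exact Real.rpow_nonneg (hy.trans ht).le _
  calc _ ≤ (y : ℝ≥0∞) ^ 2 * ∫⁻ t in Set.Ioi (y : ℝ), .ofReal (t ^ (r - 3)) := by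
        rw [hset, ← restrict_Ioi_eq_restrict_Ici]
        gcongr
        exact Measure.restrict_le_self
    _ = .ofReal (1 / (2 - r)) * (y : ℝ≥0∞) ^ r := by
        rw [hint, ← ENNReal.ofReal_coe_nnreal, ENNReal.ofReal_rpow_of_pos hy,
          ← ENNReal.ofReal_pow hy.le, ← ENNReal.ofReal_mul (by positivity),
          ← ENNReal.ofReal_mul' (by positivity), mul_left_comm, ← Real.rpow_natCast,
          ← Real.rpow_add hy]
        norm_num

lemma mul_setLIntegral_rpow_le {r : ℝ} (hr : 1 < r) (y : ℝ≥0∞) :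
    y * ∫⁻ t in {t | .ofReal t / 2 < y}, .ofReal (t ^ (r - 2)) ∂volume.restrict (Set.Ioi 0) ≤
      .ofReal (2 ^ (r - 1) / (r - 1)) * y ^ r := by
  rcases eq_or_ne y 0 with rfl | hy0
  · simp
  rcases eq_or_ne y ∞ with rfl | hy
  · rw [ENNReal.top_rpow_of_pos (by linarith), ENNReal.mul_top]
    · exact le_top
    · have := sub_pos.2 hr
      simpa using by positivity
  lift y to NNReal using hy
  have hy : (0 : ℝ) < y := NNReal.coe_pos.2 (pos_iff_ne_zero.2 (by simpa using hy0))
  have hset : {t : ℝ | .ofReal t / 2 < (y : ℝ≥0∞)} ∩ Set.Ioi 0 ⊆ Set.Ioc 0 (2 * (y : ℝ)) := by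
    rintro t ⟨ht, ht0⟩
    refine ⟨ht0, ?_⟩
    by_contra! hlt
    refine (show ENNReal.ofReal t / 2 < y from ht).not_ge ?_
    rw [ENNReal.le_div_iff_mul_le (by simp) (by simp), ← ENNReal.ofReal_coe_nnreal,
      ← ENNReal.ofReal_ofNat, ← ENNReal.ofReal_mul hy.le, mul_comm]
    exact ENNReal.ofReal_le_ofReal hlt.le
  have hint : ∫⁻ t in Set.Ioc 0 (2 * (y : ℝ)), .ofReal (t ^ (r - 2)) =
      .ofReal ((2 * y) ^ (r - 1) / (r - 1)) := by
    have hion : IntegrableOn (fun t : ℝ => t ^ (r - 2)) (Set.Ioc 0 (2 * y)) :=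
      (intervalIntegrable_iff_integrableOn_Ioc_of_le (by positivity)).1
        (intervalIntegral.intervalIntegrable_rpow' (by linarith))
    rw [← ofReal_integral_eq_lintegral_ofReal hion,
      ← intervalIntegral.integral_of_le (by positivity), integral_rpow (.inl (by linarith)),
      show r - 2 + 1 = r - 1 by ring, Real.zero_rpow (by linarith), sub_zero]
    filter_upwards [ae_restrict_mem measurableSet_Ioc] with t ht
    exact Real.rpow_nonneg ht.1.le _
  calc _ ≤ (y : ℝ≥0∞) * ∫⁻ t in Set.Ioc 0 (2 * (y : ℝ)), .ofReal (t ^ (r - 2)) := by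
        rw [Measure.restrict_restrict (measurableSet_lt (by fun_prop) measurable_const)]
        gcongr
    _ = .ofReal (2 ^ (r - 1) / (r - 1)) * (y : ℝ≥0∞) ^ r := by
        rw [hint, ← ENNReal.ofReal_coe_nnreal, ENNReal.ofReal_rpow_of_pos hy,
          ← ENNReal.ofReal_mul hy.le, ← ENNReal.ofReal_mul' (by positivity),
          Real.mul_rpow zero_le_two hy.le, Real.rpow_sub_one hy.ne']
        field_simp

lemma lintegral_rpow_mul_setLIntegral_sq_le {α : Type*} [MeasurableSpace α] {μ : Measure α}
    [SFinite μ] {r : ℝ} (hr : r < 2) {f : α → ℝ≥0∞} (hf : Measurable f) :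
    ∫⁻ t in Set.Ioi 0, .ofReal (t ^ (r - 3)) * (∫⁻ x in {x | f x ≤ .ofReal t}, f x ^ 2 ∂μ) ≤
      .ofReal (1 / (2 - r)) * ∫⁻ x, f x ^ r ∂μ := by
  rw [← lintegral_const_mul' _ _ ENNReal.ofReal_ne_top]
  exact (lintegral_mul_setLIntegral_swap (S := {p : ℝ × α | f p.2 ≤ .ofReal p.1})
    (measurableSet_le (by fun_prop) (by fun_prop)) (by fun_prop) (hf.pow_const 2)).trans_le
    (lintegral_mono fun x => sq_mul_setLIntegral_rpow_le hr _)

lemma lintegral_rpow_mul_setLIntegral_le {α : Type*} [MeasurableSpace α] {μ : Measure α}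
    [SFinite μ] {r : ℝ} (hr : 1 < r) {f : α → ℝ≥0∞} (hf : Measurable f) :
    ∫⁻ t in Set.Ioi 0, .ofReal (t ^ (r - 2)) * (∫⁻ x in {x | .ofReal t / 2 < f x}, f x ∂μ) ≤
      .ofReal (2 ^ (r - 1) / (r - 1)) * ∫⁻ x, f x ^ r ∂μ := by
  rw [← lintegral_const_mul' _ _ ENNReal.ofReal_ne_top]
  exact (lintegral_mul_setLIntegral_swap (S := {p : ℝ × α | .ofReal p.1 / 2 < f p.2})
    (measurableSet_lt (by fun_prop) (by fun_prop)) (by fun_prop) hf).trans_le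
    (lintegral_mono fun x => mul_setLIntegral_rpow_le hr _)

lemma inv_ofReal_pow_mul_ofReal_rpow {t : ℝ} (ht : 0 < t) (k : ℕ) (p : ℝ) :
    (ENNReal.ofReal t ^ k)⁻¹ * .ofReal (t ^ p) = .ofReal (t ^ (p - k)) := by
  rw [Real.rpow_sub ht p, div_eq_inv_mul, Real.rpow_natCast, ENNReal.ofReal_mul (by positivity),
    ENNReal.ofReal_inv_of_pos (pow_pos ht k), ENNReal.ofReal_pow ht.le]

theorem lintegral_rpow_le_of_weakType {α β : Type*} [MeasurableSpace α] [MeasurableSpace β]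
    {μ : Measure α} {ν : Measure β} [SFinite μ] {r : ℝ} (hr : 1 < r) (hr2 : r < 2)
    {f : α → ℝ≥0∞} (hf : Measurable f) {g : β → ℝ} (hg : AEMeasurable g ν) (hg0 : ∀ y, 0 ≤ g y)
    {K : ℝ≥0∞} (hK : K ≠ ∞)
    (h : ∀ l : ℝ≥0∞, l ≠ 0 → l ≠ ∞ → ν {y | l < .ofReal (g y)} ≤
      K * ((l ^ 2)⁻¹ * (∫⁻ x in {x | f x ≤ l}, f x ^ 2 ∂μ) +
        l⁻¹ * ∫⁻ x in {x | l / 2 < f x}, f x ∂μ)) :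
    ∫⁻ y, .ofReal (g y) ^ r ∂ν ≤
      .ofReal r * (K * (.ofReal (1 / (2 - r)) + .ofReal (2 ^ (r - 1) / (r - 1)))) *
        ∫⁻ x, f x ^ r ∂μ := by
  have hr0 : 0 < r := by linarith
  have hlevel (t : ℝ) (ht : 0 < t) : ν {y | t < g y} * .ofReal (t ^ (r - 1)) ≤
      K * (.ofReal (t ^ (r - 3)) * (∫⁻ x in {x | f x ≤ .ofReal t}, f x ^ 2 ∂μ) +
        .ofReal (t ^ (r - 2)) * ∫⁻ x in {x | .ofReal t / 2 < f x}, f x ∂μ) := by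
    have hset : {y | t < g y} = {y | ENNReal.ofReal t < .ofReal (g y)} := by
      ext y
      exact (ENNReal.ofReal_lt_ofReal_iff_of_nonneg ht.le).symm
    rw [hset, show r - 3 = r - 1 - (2 : ℕ) by norm_num; ring,
      show r - 2 = r - 1 - (1 : ℕ) by norm_num; ring, ← inv_ofReal_pow_mul_ofReal_rpow ht,
      ← inv_ofReal_pow_mul_ofReal_rpow ht, pow_one]
    refine (mul_le_mul_left (h _ (by simpa using ht) ENNReal.ofReal_ne_top) _).trans_eq ?_
    ring
  have hmono : Monotone fun t : ℝ => ∫⁻ x in {x | f x ≤ .ofReal t}, f x ^ 2 ∂μ := fun t t' htt =>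
    lintegral_mono_set fun x hx => le_trans hx (ENNReal.ofReal_le_ofReal htt)
  calc ∫⁻ y, .ofReal (g y) ^ r ∂ν
      = .ofReal r * ∫⁻ t in Set.Ioi 0, ν {y | t < g y} * .ofReal (t ^ (r - 1)) := by
        rw [← lintegral_rpow_eq_lintegral_meas_lt_mul ν (ae_of_all _ hg0) hg hr0]
        exact lintegral_congr fun y => ENNReal.ofReal_rpow_of_nonneg (hg0 y) hr0.le
    _ ≤ .ofReal r * ∫⁻ t in Set.Ioi 0, K *
          (.ofReal (t ^ (r - 3)) * (∫⁻ x in {x | f x ≤ .ofReal t}, f x ^ 2 ∂μ) +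
            .ofReal (t ^ (r - 2)) * ∫⁻ x in {x | .ofReal t / 2 < f x}, f x ∂μ) := by
        gcongr 1
        exact setLIntegral_mono' measurableSet_Ioi hlevel
    _ ≤ .ofReal r * (K * (.ofReal (1 / (2 - r)) * (∫⁻ x, f x ^ r ∂μ) +
          .ofReal (2 ^ (r - 1) / (r - 1)) * ∫⁻ x, f x ^ r ∂μ)) := by
        have hmeas : Measurable fun t : ℝ => ENNReal.ofReal (t ^ (r - 3)) *
            ∫⁻ x in {x | f x ≤ .ofReal t}, f x ^ 2 ∂μ := .mul (by fun_prop) hmono.measurable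
        rw [lintegral_const_mul' _ _ hK, lintegral_add_left hmeas]
        gcongr
        · exact lintegral_rpow_mul_setLIntegral_sq_le hr2 hf
        · exact lintegral_rpow_mul_setLIntegral_le hr hf
    _ = _ := by ring

/-! ### Strong type bounds for imaginary powers -/

section StrongType

lemma enorm_integral_mul_le {α : Type*} [MeasurableSpace α] {μ : Measure α} {p q : ℝ≥0∞}
    [p.HolderConjugate q] {f g : α → ℂ} (hf : AEStronglyMeasurable f μ)
    (hg : AEStronglyMeasurable g μ) :
    ‖∫ x, f x * g x ∂μ‖ₑ ≤ eLpNorm f p μ * eLpNorm g q μ := by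
  refine (enorm_integral_le_lintegral_enorm _).trans ?_
  have hsmul : (fun x => f x * g x) = f • g := rfl
  rw [← eLpNorm_one_eq_lintegral_enorm, hsmul]
  exact eLpNorm_smul_le_mul_eLpNorm hg hf

variable (E : Type*) [NormedAddCommGroup E] [InnerProductSpace ℝ E] [FiniteDimensional ℝ E]
  [MeasurableSpace E] [BorelSpace E] [Nontrivial E]

lemma exists_eLpNorm_laplacianPow_I_mul_le_of_lt_two {s r : ℝ} (hs : (finrank ℝ E : ℝ) / 2 < s)
    (hr : 1 < r) (hr2 : r < 2) :
    ∃ K ≠ ∞, ∀ (u : ℝ) (f : SchwartzMap E ℂ),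
      eLpNorm (laplacianPow (I * u) f) (.ofReal r) ≤
        K * .ofReal ((1 + |u|) ^ s) * eLpNorm f (.ofReal r) := by
  have hr0 : 0 < r := by linarith
  obtain ⟨K, hK, hweak⟩ := exists_weakType_laplacianPow_I_mul E hs
  set c := ENNReal.ofReal r * (K * (.ofReal (1 / (2 - r)) + .ofReal (2 ^ (r - 1) / (r - 1))))
  have hc : c ≠ ∞ := by finiteness
  refine ⟨2 * c ^ (1 / r), by finiteness, fun u f => ?_⟩
  set A := (1 + |u|) ^ s
  have hA : 0 < A := by positivity
  obtain ⟨G, hGc, hTG⟩ : ∃ G : E → ℂ, Continuous G ∧ laplacianPow (I * u) f = (2 * A) • G :=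
    ⟨_, (continuous_laplacianPow_I_mul u f).const_smul (2 * A)⁻¹,
      (smul_inv_smul₀ (by positivity) _).symm⟩
  have henorm : ‖2 * A‖ₑ = 2 * .ofReal A := by
    rw [Real.enorm_of_nonneg (by positivity), ENNReal.ofReal_mul zero_le_two, ENNReal.ofReal_ofNat]
  have hG : eLpNorm G (.ofReal r) ^ r ≤ c * eLpNorm f (.ofReal r) ^ r := by
    rw [eLpNorm_ofReal_rpow hr0, eLpNorm_ofReal_rpow hr0]
    simp_rw [← ofReal_norm (G _)]
    refine lintegral_rpow_le_of_weakType hr hr2 f.continuous.enorm.measurable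
      hGc.norm.aemeasurable (fun x => norm_nonneg _) hK fun l hl0 hl =>
      (measure_mono fun x hx => ?_).trans (hweak u f l hl0 hl)
    have hx : l < ‖G x‖ₑ := (show l < .ofReal ‖G x‖ from hx).trans_eq (ofReal_norm _)
    change _ < ‖laplacianPow (I * u) f x‖ₑ
    rw [hTG, Pi.smul_apply, enorm_smul, henorm, ← mul_assoc]
    exact ENNReal.mul_lt_mul_right (by simpa using hA) (by finiteness) hx
  rw [hTG, eLpNorm_const_smul, henorm, mul_right_comm 2 (c ^ (1 / r)), mul_assoc (2 * _)]
  gcongr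
  rw [← ENNReal.rpow_le_rpow_iff hr0, ENNReal.mul_rpow_of_nonneg _ _ hr0.le,
    ← ENNReal.rpow_mul, one_div_mul_cancel hr0.ne', ENNReal.rpow_one]
  exact hG

theorem exists_eLpNorm_laplacianPow_I_mul_le {s r : ℝ} (hs : (finrank ℝ E : ℝ) / 2 < s)
    (hr : 1 < r) :
    ∃ K ≠ ∞, ∀ (u : ℝ) (f : SchwartzMap E ℂ),
      eLpNorm (laplacianPow (I * u) f) (.ofReal r) ≤
        K * .ofReal ((1 + |u|) ^ s) * eLpNorm f (.ofReal r) := by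
  rcases lt_trichotomy r 2 with hr2 | rfl | hr2
  · exact exists_eLpNorm_laplacianPow_I_mul_le_of_lt_two E hs hr hr2
  · refine ⟨1, ENNReal.one_ne_top, fun u f => ?_⟩
    have hs0 : 0 ≤ s := by linarith [show (0 : ℝ) ≤ finrank ℝ E / 2 by positivity]
    have hA : 1 ≤ ENNReal.ofReal ((1 + |u|) ^ s) :=
      ENNReal.one_le_ofReal.2 (Real.one_le_rpow (by linarith [abs_nonneg u]) hs0)
    rw [ENNReal.ofReal_ofNat, eLpNorm_two_laplacianPow_I_mul, one_mul]
    exact le_mul_of_one_le_left zero_le hA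
  · obtain ⟨q, hrq⟩ : ∃ q, r.HolderConjugate q := ⟨_, .conjExponent hr⟩
    have hq2 : q < 2 := by
      rw [hrq.conjugate_eq, div_lt_iff₀ hrq.sub_one_pos]
      linarith
    obtain ⟨K, hK, hb⟩ := exists_eLpNorm_laplacianPow_I_mul_le_of_lt_two E hs hrq.symm.lt hq2
    refine ⟨K, hK, fun u f => ?_⟩
    have hT (φ : SchwartzMap E ℂ) : AEStronglyMeasurable (laplacianPow (I * u) φ) :=
      (continuous_laplacianPow_I_mul u φ).aestronglyMeasurable
    have hT2 : MemLp (laplacianPow (I * u) f) (.ofReal 2) :=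
      ⟨hT f, by
        rw [ENNReal.ofReal_ofNat, eLpNorm_two_laplacianPow_I_mul]
        exact (f.memLp 2 volume).eLpNorm_lt_top⟩
    have hTr : MemLp (laplacianPow (I * u) f) (.ofReal r) :=
      memLp_of_memLp_of_norm_le two_pos hr2.le hT2 (norm_laplacianPow_I_mul_le u f)
    refine eLpNorm_le_of_schwartz hrq hTr fun φ => ?_
    calc ‖∫ x, laplacianPow (I * u) f x * φ x‖ₑ = ‖∫ x, f x * laplacianPow (I * u) φ x‖ₑ := by
          rw [integral_laplacianPow_I_mul_mul]
      _ ≤ eLpNorm f (.ofReal r) * eLpNorm (laplacianPow (I * u) φ) (.ofReal q) := by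
          have := hrq.ennrealOfReal
          exact enorm_integral_mul_le f.continuous.aestronglyMeasurable (hT φ)
      _ ≤ eLpNorm f (.ofReal r) * (K * .ofReal ((1 + |u|) ^ s) * eLpNorm φ (.ofReal q)) := by
          gcongr
          exact hb u φ
      _ = _ := by rw [mul_left_comm, ← mul_assoc]

end StrongType

/-! ### Subordination to imaginary powers -/

section Minkowski

variable {α : Type*} [MeasurableSpace α] {μ : Measure α}

lemma rpow_lintegral_mul_le {r : ℝ} (hr : 1 < r) {w v : α → ℝ≥0∞} (hw : AEMeasurable w μ)
    (hv : AEMeasurable v μ) :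
    (∫⁻ a, w a * v a ∂μ) ^ r ≤ (∫⁻ a, w a ∂μ) ^ (r - 1) * ∫⁻ a, w a * v a ^ r ∂μ := by
  have hr0 : 0 < r := by linarith
  have hr1 : 0 ≤ 1 - 1 / r := by rw [sub_nonneg, div_le_one hr0]; exact hr.le
  have hsplit (a : α) : w a * v a = w a ^ (1 - 1 / r) * (w a * v a ^ r) ^ (1 / r) := by
    rw [ENNReal.mul_rpow_of_nonneg _ _ (by positivity), ← mul_assoc,
      ← ENNReal.rpow_add_of_nonneg _ _ hr1 (by positivity), sub_add_cancel, ENNReal.rpow_one,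
      ← ENNReal.rpow_mul, mul_one_div_cancel hr0.ne', ENNReal.rpow_one]
  calc (∫⁻ a, w a * v a ∂μ) ^ r
      ≤ ((∫⁻ a, w a ∂μ) ^ (1 - 1 / r) * (∫⁻ a, w a * v a ^ r ∂μ) ^ (1 / r)) ^ r := by
        gcongr
        simp_rw [hsplit]
        exact ENNReal.lintegral_mul_norm_pow_le hw (hw.mul (hv.pow_const r)) hr1 (by positivity)
          (by ring)
    _ = _ := by
        rw [ENNReal.mul_rpow_of_nonneg _ _ hr0.le, ← ENNReal.rpow_mul, ← ENNReal.rpow_mul,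
          one_div_mul_cancel hr0.ne', ENNReal.rpow_one, sub_mul, one_div_mul_cancel hr0.ne',
          one_mul]

lemma lintegral_rpow_lintegral_mul_le [SFinite μ] {β : Type*} [MeasurableSpace β] {ν : Measure β}
    [SFinite ν] {r : ℝ} (hr : 1 < r) {w : α → ℝ≥0∞} (hw : AEMeasurable w μ)
    {V : α → β → ℝ≥0∞} (hV : Measurable (Function.uncurry V)) {B : ℝ≥0∞}
    (hB : ∀ a, ∫⁻ b, V a b ^ r ∂ν ≤ B) :
    ∫⁻ b, (∫⁻ a, w a * V a b ∂μ) ^ r ∂ν ≤ (∫⁻ a, w a ∂μ) ^ r * B := by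
  have hwV : AEMeasurable (Function.uncurry fun a b => w a * V a b ^ r) (μ.prod ν) :=
    hw.comp_fst.mul (hV.pow_const r).aemeasurable
  calc ∫⁻ b, (∫⁻ a, w a * V a b ∂μ) ^ r ∂ν
      ≤ ∫⁻ b, (∫⁻ a, w a ∂μ) ^ (r - 1) * ∫⁻ a, w a * V a b ^ r ∂μ ∂ν :=
        lintegral_mono fun b => rpow_lintegral_mul_le hr hw hV.of_uncurry_right.aemeasurable
    _ = (∫⁻ a, w a ∂μ) ^ (r - 1) * ∫⁻ a, w a * ∫⁻ b, V a b ^ r ∂ν ∂μ := by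
        have hinner : AEMeasurable (fun b => ∫⁻ a, w a * V a b ^ r ∂μ) ν := hwV.lintegral_prod_left'
        rw [lintegral_const_mul'' _ hinner, ← lintegral_lintegral_swap hwV]
        congr 1
        exact lintegral_congr fun a => lintegral_const_mul _ (hV.of_uncurry_left.pow_const r)
    _ ≤ (∫⁻ a, w a ∂μ) ^ (r - 1) * ∫⁻ a, w a * B ∂μ := by
        gcongr with a
        exact hB a
    _ = _ := by
        rw [lintegral_mul_const'' _ hw, ← mul_assoc]
        congr 1
        nth_rw 2 [← ENNReal.rpow_one (∫⁻ a, w a ∂μ)]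
        rw [← ENNReal.rpow_add_of_nonneg _ _ (by linarith) zero_le_one, sub_add_cancel]

end Minkowski

section Subordination

lemma ofReal_mul_sq_cpow {t y : ℝ} (ht : 0 < t) (hy : 0 < y) (w : ℂ) :
    ((t * y ^ 2 : ℝ) : ℂ) ^ w = (t : ℂ) ^ w * (y : ℂ) ^ (2 * w) := by
  rw [ofReal_mul, Complex.mul_cpow_ofReal_nonneg ht.le (by positivity), sq, ofReal_mul,
    Complex.mul_cpow_ofReal_nonneg hy.le hy.le, ← Complex.cpow_add _ _ (by exact_mod_cast hy.ne'),
    two_mul]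

variable {E : Type*} [NormedAddCommGroup E] [InnerProductSpace ℝ E] [FiniteDimensional ℝ E]
  [MeasurableSpace E] [BorelSpace E]

lemma stronglyMeasurable_laplacianPow_I_mul (f : SchwartzMap E ℂ) :
    StronglyMeasurable fun p : ℝ × E => laplacianPow (I * p.1) f p.2 := by
  simp only [laplacianPow, Real.fourierInv_eq', smul_eq_mul, ← SchwartzMap.fourier_coe]
  have hmeas : StronglyMeasurable fun q : (ℝ × E) × E => cexp (↑(2 * Real.pi * ⟪q.2, q.1.2⟫) * I) *
      ((‖q.2‖ : ℂ) ^ (2 * (I * (q.1.1 : ℂ))) * (𝓕 f) q.2) :=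
    (Measurable.mul (Continuous.measurable (by fun_prop))
      (.mul (by fun_prop) ((𝓕 f).continuous.measurable.comp measurable_snd))).stronglyMeasurable
  exact hmeas.integral_prod_right'

lemma integral_mul_fourier_mul_cexp_eq_fourierInv (m : E → ℂ) (f : E → ℂ) (x : E) :
    ∫ ξ, m ξ * 𝓕 f ξ * cexp (2 * Real.pi * I * (⟪x, ξ⟫ : ℝ)) =
      𝓕⁻ (fun ξ => m ξ * 𝓕 f ξ) x := by
  rw [Real.fourierInv_eq']
  refine integral_congr_ae (ae_of_all _ fun ξ => ?_)
  dsimp only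
  rw [smul_eq_mul, mul_comm, real_inner_comm]
  push_cast
  ring_nf

lemma lintegral_rpow_lintegral_laplacianPow_le {s r : ℝ} (hr : 1 < r) {K : ℝ≥0∞}
    {f : SchwartzMap E ℂ} (hK : ∀ u : ℝ, eLpNorm (laplacianPow (I * u) f) (.ofReal r) ≤
      K * .ofReal ((1 + |u|) ^ s) * eLpNorm f (.ofReal r)) {h : ℝ → ℂ}
    (hh : AEStronglyMeasurable h) :
    ∫⁻ x, (∫⁻ u : ℝ, ‖h u‖ₑ * ‖laplacianPow (I * u) f x‖ₑ) ^ r ≤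
      (∫⁻ u : ℝ, .ofReal ((1 + |u|) ^ s) * ‖h u‖ₑ) ^ r *
        (K * eLpNorm f (.ofReal r)) ^ r := by
  have hr0 : 0 < r := by linarith
  set A : ℝ → ℝ≥0∞ := fun u => .ofReal ((1 + |u|) ^ s)
  have hA0 (u : ℝ) : A u ≠ 0 := (ENNReal.ofReal_pos.2 (by positivity)).ne'
  have hAtop (u : ℝ) : A u ≠ ∞ := ENNReal.ofReal_ne_top
  have hAm : Measurable A := by fun_prop
  have hsplit (x : E) (u : ℝ) : ‖h u‖ₑ * ‖laplacianPow (I * u) f x‖ₑ =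
      A u * ‖h u‖ₑ * ((A u)⁻¹ * ‖laplacianPow (I * u) f x‖ₑ) := by
    rw [mul_comm (A u), mul_assoc, ← mul_assoc (A u), ENNReal.mul_inv_cancel (hA0 u) (hAtop u),
      one_mul]
  simp_rw [hsplit]
  refine lintegral_rpow_lintegral_mul_le hr (hAm.aemeasurable.mul hh.enorm)
    ((hAm.comp measurable_fst).inv.mul (stronglyMeasurable_laplacianPow_I_mul f).enorm) fun u => ?_
  simp_rw [ENNReal.mul_rpow_of_nonneg _ _ hr0.le]
  rw [lintegral_const_mul' _ _ (by simp [hA0 u, hr0.le]), ← eLpNorm_ofReal_rpow hr0,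
    ← ENNReal.mul_rpow_of_nonneg _ _ hr0.le, ← ENNReal.mul_rpow_of_nonneg K _ hr0.le]
  refine ENNReal.rpow_le_rpow ?_ hr0.le
  calc (A u)⁻¹ * eLpNorm (laplacianPow (I * u) f) (.ofReal r) volume
      ≤ (A u)⁻¹ * (K * A u * eLpNorm f (.ofReal r) volume) := by gcongr; exact hK u
    _ = (A u)⁻¹ * A u * (K * eLpNorm f (.ofReal r) volume) := by ring
    _ = K * eLpNorm f (.ofReal r) volume := by
      rw [ENNReal.inv_mul_cancel (hA0 u) (hAtop u), one_mul]

variable [Nontrivial E]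

lemma fourierInv_mul_fourier_eq_integral_laplacianPow {F h : ℝ → ℂ} (hh : Integrable h)
    (hF : ∀ l : ℝ, 0 < l → F l = ∫ u : ℝ, h u * (l : ℂ) ^ (I * (u : ℂ))) {t : ℝ} (ht : 0 < t)
    (f : SchwartzMap E ℂ) (x : E) :
    𝓕⁻ (fun ξ => F (t * ‖ξ‖ ^ 2) * 𝓕 (f : E → ℂ) ξ) x =
      ∫ u : ℝ, h u * (t : ℂ) ^ (I * (u : ℂ)) * laplacianPow (I * u) f x := by
  set k : E → ℝ → ℂ := fun ξ u => h u * (t : ℂ) ^ (I * (u : ℂ)) *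
    (cexp (↑(2 * Real.pi * ⟪ξ, x⟫) * I) * ((‖ξ‖ : ℂ) ^ (2 * (I * (u : ℂ))) * 𝓕 (f : E → ℂ) ξ))
  have hk : Integrable (Function.uncurry k) (volume.prod volume) := by
    refine ((𝓕 f).integrable.mul_prod hh).mono ?_ (ae_of_all _ fun p => ?_)
    · exact .mul (.mul hh.1.comp_snd (Measurable.aestronglyMeasurable (by fun_prop)))
        (.mul (Continuous.aestronglyMeasurable (by fun_prop))
          (.mul (Measurable.aestronglyMeasurable (by fun_prop))
            (SchwartzMap.fourier_coe f ▸ (𝓕 f).continuous.aestronglyMeasurable).comp_fst))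
    · have ht1 : ‖(t : ℂ) ^ (I * (p.2 : ℂ))‖ = 1 := by
        rw [Complex.norm_cpow_eq_rpow_re_of_pos ht]
        simp
      simp only [k, Function.uncurry, norm_mul, Complex.norm_exp_ofReal_mul_I, ht1, mul_one,
        one_mul, SchwartzMap.fourier_coe]
      rw [mul_comm _ ‖h p.2‖]
      gcongr
      exact mul_le_of_le_one_left (norm_nonneg _) (norm_norm_cpow_two_mul_I_mul_le p.2 p.1)
  calc 𝓕⁻ (fun ξ => F (t * ‖ξ‖ ^ 2) * 𝓕 (f : E → ℂ) ξ) x = ∫ ξ, ∫ u, k ξ u := by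
        rw [Real.fourierInv_eq']
        refine integral_congr_ae ?_
        filter_upwards [Measure.ae_ne volume (0 : E)] with ξ hξ
        have hξ := norm_pos_iff.2 hξ
        rw [hF _ (by positivity), ← integral_mul_const, ← integral_smul]
        refine integral_congr_ae (ae_of_all _ fun u => ?_)
        simp only [k, ofReal_mul_sq_cpow ht hξ, smul_eq_mul]
        ring
    _ = ∫ u, ∫ ξ, k ξ u := integral_integral_swap hk
    _ = _ := by
        refine integral_congr_ae (ae_of_all _ fun u => ?_)
        simp only [k, laplacianPow, Real.fourierInv_eq', smul_eq_mul]
        exact integral_const_mul _ _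

lemma enorm_fourierInv_mul_fourier_le {F h : ℝ → ℂ} (hh : Integrable h)
    (hF : ∀ l : ℝ, 0 < l → F l = ∫ u : ℝ, h u * (l : ℂ) ^ (I * (u : ℂ))) {t : ℝ} (ht : 0 < t)
    (f : SchwartzMap E ℂ) (x : E) :
    ‖𝓕⁻ (fun ξ => F (t * ‖ξ‖ ^ 2) * 𝓕 (f : E → ℂ) ξ) x‖ₑ ≤
      ∫⁻ u : ℝ, ‖h u‖ₑ * ‖laplacianPow (I * u) f x‖ₑ := by
  rw [fourierInv_mul_fourier_eq_integral_laplacianPow hh hF ht]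
  refine (enorm_integral_le_lintegral_enorm _).trans_eq (lintegral_congr fun u => ?_)
  rw [enorm_mul, enorm_mul, ← ofReal_norm ((t : ℂ) ^ _),
    Complex.norm_cpow_eq_rpow_re_of_pos ht]
  simp

end Subordination

section Weight

lemma integrable_of_integrable_one_add_abs_rpow_mul_norm {s : ℝ} (hs : 0 ≤ s) {h : ℝ → ℂ}
    (hm : AEStronglyMeasurable h) (hint : Integrable fun u : ℝ => (1 + |u|) ^ s * ‖h u‖) :
    Integrable h := by
  refine hint.mono' hm (ae_of_all _ fun u => le_mul_of_one_le_left (norm_nonneg _) ?_)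
  exact Real.one_le_rpow (by linarith [abs_nonneg u]) hs

lemma lintegral_one_add_abs_rpow_mul_enorm {s : ℝ} {h : ℝ → ℂ}
    (hint : Integrable fun u : ℝ => (1 + |u|) ^ s * ‖h u‖) :
    ∫⁻ u : ℝ, .ofReal ((1 + |u|) ^ s) * ‖h u‖ₑ = .ofReal (∫ u : ℝ, (1 + |u|) ^ s * ‖h u‖) := by
  rw [ofReal_integral_eq_lintegral_ofReal hint (ae_of_all _ fun u => by positivity)]
  refine lintegral_congr fun u => ?_
  rw [ENNReal.ofReal_mul (by positivity), ofReal_norm]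

end Weight

end MellinMaximal

theorem mellin_maximal_Lr_bound_general {E : Type*} [NormedAddCommGroup E] [InnerProductSpace ℝ E]
    [FiniteDimensional ℝ E] [MeasurableSpace E] [BorelSpace E] [Nontrivial E] {s r : ℝ}
    (hs : (Module.finrank ℝ E : ℝ) / 2 < s) (hr : 1 < r) :
    ∃ C : ℝ, 0 < C ∧ ∀ (F : ℝ → ℂ) (h : ℝ → ℂ), AEStronglyMeasurable h →
      Integrable (fun u : ℝ => (1 + |u|) ^ s * ‖h u‖) →
      (∀ l : ℝ, 0 < l → F l = ∫ u : ℝ, h u * (l : ℂ) ^ (I * (u : ℂ))) →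
      ∀ f : SchwartzMap E ℂ,
        (∫⁻ x, (⨆ (t : ℝ) (_ : 0 < t), (‖∫ ξ : E, F (t * ‖ξ‖ ^ 2) * 𝓕 (⇑f) ξ *
            cexp (2 * Real.pi * I * (⟪x, ξ⟫ : ℝ))‖₊ : ℝ≥0∞)) ^ r) ^ (1 / r) ≤
          .ofReal (C * ∫ u : ℝ, (1 + |u|) ^ s * ‖h u‖) * eLpNorm f (.ofReal r) := by
  obtain ⟨K, hK, hbound⟩ := MellinMaximal.exists_eLpNorm_laplacianPow_I_mul_le E hs hr
  refine ⟨K.toReal + 1, by positivity, fun F h hm hint hF f => ?_⟩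
  have hr0 : 0 < r := by linarith
  have hs0 : 0 ≤ s := le_trans (by positivity) hs.le
  have hh := MellinMaximal.integrable_of_integrable_one_add_abs_rpow_mul_norm hs0 hm hint
  have hKC : K ≤ .ofReal (K.toReal + 1) :=
    (ENNReal.le_ofReal_iff_toReal_le hK (by positivity)).2 (by simp)
  set A := ∫ u : ℝ, (1 + |u|) ^ s * ‖h u‖
  calc (∫⁻ x, (⨆ (t : ℝ) (_ : 0 < t), (‖∫ ξ : E, F (t * ‖ξ‖ ^ 2) * 𝓕 (⇑f) ξ *
            cexp (2 * Real.pi * I * (⟪x, ξ⟫ : ℝ))‖₊ : ℝ≥0∞)) ^ r) ^ (1 / r)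
      ≤ (∫⁻ x, (∫⁻ u : ℝ, ‖h u‖ₑ * ‖MellinMaximal.laplacianPow (I * u) f x‖ₑ) ^ r) ^ (1 / r) := by
        gcongr with x
        refine iSup₂_le fun t ht => ?_
        rw [MellinMaximal.integral_mul_fourier_mul_cexp_eq_fourierInv]
        exact MellinMaximal.enorm_fourierInv_mul_fourier_le hh hF ht f x
    _ ≤ (.ofReal A ^ r * (K * eLpNorm f (.ofReal r) volume) ^ r) ^ (1 / r) := by
        rw [← MellinMaximal.lintegral_one_add_abs_rpow_mul_enorm hint]
        gcongr
        exact MellinMaximal.lintegral_rpow_lintegral_laplacianPow_le hr (fun u => hbound u f) hm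
    _ = K * .ofReal A * eLpNorm f (.ofReal r) volume := by
        rw [← ENNReal.mul_rpow_of_nonneg _ _ hr0.le, ← ENNReal.rpow_mul,
          mul_one_div_cancel hr0.ne', ENNReal.rpow_one, ← mul_assoc, mul_comm K]
    _ ≤ .ofReal ((K.toReal + 1) * A) * eLpNorm f (.ofReal r) volume := by
        rw [ENNReal.ofReal_mul (by positivity)]
        gcongr

theorem mellin_maximal_Lr_bound (n : ℕ) (hn : 1 ≤ n) (s r : ℝ)
    (hs : (n : ℝ) / 2 < s) (hr : 1 < r) :
    ∃ C : ℝ, 0 < C ∧ ∀ (F : ℝ → ℂ) (h : ℝ → ℂ), Measurable h →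
      Integrable (fun u : ℝ => (1 + |u|) ^ s * ‖h u‖) →
      (∃ M : ℝ, ∀ l : ℝ, 0 < l → ‖F l‖ ≤ M) →
      (∀ l : ℝ, 0 < l → F l = ∫ u : ℝ, h u * (l : ℂ) ^ (Complex.I * (u : ℂ))) →
      ∀ f : SchwartzMap (EuclideanSpace ℝ (Fin n)) ℂ,
        (∫⁻ x, (⨆ (t : ℝ) (_ : 0 < t),
            (‖∫ ξ : EuclideanSpace ℝ (Fin n), F (t * ‖ξ‖ ^ 2) * 𝓕 (⇑f) ξ *
                Complex.exp (2 * Real.pi * Complex.I * (⟪x, ξ⟫ : ℝ))‖₊ : ℝ≥0∞)) ^ r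
            ∂volume) ^ (1 / r)
          ≤ ENNReal.ofReal (C * ∫ u : ℝ, (1 + |u|) ^ s * ‖h u‖) *
              eLpNorm f (ENNReal.ofReal r) volume := by
  have : Nonempty (Fin n) := ⟨⟨0, hn⟩⟩
  obtain ⟨C, hC, H⟩ := mellin_maximal_Lr_bound_general (E := EuclideanSpace ℝ (Fin n))
    (by rwa [finrank_euclideanSpace_fin]) hr
  exact ⟨C, hC, fun F h hm hint _ hF f => H F h hm.aestronglyMeasurable hint hF f⟩
end

section
/- Let n ≥ 1 be an integer and r > 0. Suppose F : ℝ → ℂ has the form F(λ) = ∫_{−r}^{r} G(t) cos(λ t) dt for some integrable function G on [−r, r] (so F is even, bounded and continuous). Then for every x₀ ∈ ℝⁿ, every s > 0 and every Schwartz function f on ℝⁿ with f(y) = 0 whenever |y − x₀| > s, the function x ↦ ∫_{ℝⁿ} F(2π|ξ|) f̂(ξ) e^{2πi⟨x,ξ⟩} dξ vanishes at every x with |x − x₀| > s + r. -/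
open MeasureTheory Complex Filter
open scoped FourierTransform RealInnerProductSpace ENNReal Topology

/-!
The multiplier `cos (2π|ξ|t)` solves the wave equation in time `t`. For an orthonormal basis `b` it
is the bounded pointwise limit of `T_N (∏ i, cos (2π (t / N) ⟪ξ, b i⟫))`, with `T_N` the Chebyshev
polynomial: if `cos θ` is that product, then `N θ → 2π|ξ||t|` by Pythagoras, and
`T_N (cos θ) = cos (N θ)`. Each approximation is a trigonometric polynomial, hence acts by
translations, and the displacements have `b i`-component at most `|t|`. Taking `b i` in the
direction of `x - x₀` bounds the speed by `1`, and integrating against `G` over `|t| ≤ r` gives the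
multiplier `F`.
-/

open Polynomial (aeval)
open Polynomial.Chebyshev (T)
open scoped BoundedContinuousFunction

section ChebyshevAsymptotics

variable {α ι : Type*} {l : Filter α} {w : α → ℝ}

lemma tendsto_one_of_tendsto_mul_one_sub (hw : Tendsto w l atTop) {c : α → ℝ} {a : ℝ}
    (h : Tendsto (fun x ↦ w x * (1 - c x)) l (𝓝 a)) : Tendsto c l (𝓝 1) := by
  have hsub : Tendsto (fun x ↦ 1 - c x) l (𝓝 0) := by
    refine (h.div_atTop hw).congr' ?_
    filter_upwards [hw.eventually_ne_atTop 0] with x hx using mul_div_cancel_left₀ _ hx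
  simpa using hsub.const_sub 1

lemma tendsto_mul_one_sub_prod (hw : Tendsto w l atTop) {c : ι → α → ℝ} {a : ι → ℝ} (u : Finset ι)
    (h : ∀ i ∈ u, Tendsto (fun x ↦ w x * (1 - c i x)) l (𝓝 (a i))) :
    Tendsto (fun x ↦ w x * (1 - ∏ i ∈ u, c i x)) l (𝓝 (∑ i ∈ u, a i)) := by
  classical
  induction u using Finset.induction_on with
  | empty => simpa using! tendsto_const_nhds
  | insert i u hi ih =>
    have hci := h i (u.mem_insert_self i)
    have hlim := hci.add <| (tendsto_one_of_tendsto_mul_one_sub hw hci).mul <|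
      ih fun j hj ↦ h j (Finset.mem_insert_of_mem hj)
    rw [Finset.sum_insert hi, ← one_mul (∑ i ∈ u, a i)]
    refine hlim.congr fun x ↦ ?_
    rw [Finset.prod_insert hi]
    ring

lemma one_sub_cos_eq_sq_div_two_mul_sinc_sq (θ : ℝ) :
    1 - Real.cos θ = θ ^ 2 / 2 * Real.sinc (θ / 2) ^ 2 := by
  rcases eq_or_ne θ 0 with rfl | hθ
  · simp
  · rw [Real.sinc_of_ne_zero (by positivity), div_pow, Real.sin_sq_eq_half_sub]
    field_simp

lemma tendsto_sq_mul_one_sub_cos_div (a : ℝ) :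
    Tendsto (fun N : ℕ ↦ (N : ℝ) ^ 2 * (1 - Real.cos (a / N))) atTop (𝓝 (a ^ 2 / 2)) := by
  have hsinc : Tendsto (fun N : ℕ ↦ Real.sinc (a / N / 2) ^ 2) atTop (𝓝 1) := by
    have harg : Tendsto (fun N : ℕ ↦ a / N / 2) atTop (𝓝 0) := by
      simpa using (tendsto_const_div_atTop_nhds_zero_nat a).div_const 2
    simpa using ((Real.continuous_sinc.tendsto 0).comp harg).pow 2
  have hlim := hsinc.const_mul (a ^ 2 / 2)
  rw [mul_one] at hlim
  refine hlim.congr' ?_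
  filter_upwards [eventually_ne_atTop 0] with N hN
  rw [one_sub_cos_eq_sq_div_two_mul_sinc_sq]
  field_simp

lemma tendsto_mul_of_tendsto_sq_mul_one_sub_cos (hw : Tendsto w l atTop) {θ : α → ℝ}
    (hθ : ∀ x, θ x ∈ Set.Icc 0 Real.pi) {L : ℝ} (hL : 0 ≤ L)
    (h : Tendsto (fun x ↦ w x ^ 2 * (1 - Real.cos (θ x))) l (𝓝 (L ^ 2 / 2))) :
    Tendsto (fun x ↦ w x * θ x) l (𝓝 L) := by
  have hθ_zero : Tendsto θ l (𝓝 0) := by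
    have hcos := tendsto_one_of_tendsto_mul_one_sub ((tendsto_pow_atTop two_ne_zero).comp hw) h
    have harccos := (Real.continuous_arccos.tendsto 1).comp hcos
    rw [Real.arccos_one] at harccos
    exact harccos.congr fun x ↦ Real.arccos_cos (hθ x).1 (hθ x).2
  have hsinc : Tendsto (fun x ↦ Real.sinc (θ x / 2) ^ 2) l (𝓝 1) := by
    have harg : Tendsto (fun x ↦ θ x / 2) l (𝓝 0) := by simpa using hθ_zero.div_const 2
    simpa using ((Real.continuous_sinc.tendsto 0).comp harg).pow 2
  have hsq : Tendsto (fun x ↦ (w x * θ x) ^ 2) l (𝓝 (L ^ 2)) := by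
    have hquot := (h.const_mul 2).div hsinc one_ne_zero
    rw [div_one, mul_div_cancel₀ _ two_ne_zero] at hquot
    refine hquot.congr' ?_
    filter_upwards [hsinc.eventually_ne one_ne_zero] with x hx
    have hx' : Real.sinc (θ x / 2) ≠ 0 := pow_ne_zero_iff two_ne_zero |>.1 hx
    rw [Pi.div_apply, one_sub_cos_eq_sq_div_two_mul_sinc_sq]
    field_simp
  have hsqrt := hsq.sqrt
  rw [Real.sqrt_sq hL] at hsqrt
  refine hsqrt.congr' ?_
  filter_upwards [hw.eventually_ge_atTop 0] with x hx
  exact Real.sqrt_sq (mul_nonneg hx (hθ x).1)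

lemma tendsto_chebyshevT_eval {c : ℕ → ℝ} (hc : ∀ N, |c N| ≤ 1) {L : ℝ}
    (h : Tendsto (fun N : ℕ ↦ (N : ℝ) ^ 2 * (1 - c N)) atTop (𝓝 (L ^ 2 / 2))) :
    Tendsto (fun N : ℕ ↦ (T ℝ N).eval (c N)) atTop (𝓝 (Real.cos L)) := by
  have hcos (N : ℕ) : Real.cos (Real.arccos (c N)) = c N :=
    Real.cos_arccos (abs_le.1 (hc N)).1 (abs_le.1 (hc N)).2
  have hangle : Tendsto (fun N : ℕ ↦ (N : ℝ) * Real.arccos (c N)) atTop (𝓝 |L|) := by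
    refine tendsto_mul_of_tendsto_sq_mul_one_sub_cos tendsto_natCast_atTop_atTop
      (fun N ↦ ⟨Real.arccos_nonneg _, Real.arccos_le_pi _⟩) (abs_nonneg L) ?_
    simpa only [hcos, sq_abs] using h
  rw [← Real.cos_abs L]
  refine ((Real.continuous_cos.tendsto _).comp hangle).congr fun N ↦ ?_
  rw [Function.comp_apply, ← hcos N, Polynomial.Chebyshev.T_real_cos, hcos N, Int.cast_natCast]

end ChebyshevAsymptotics

section TrigonometricPolynomials

variable {E : Type*} [NormedAddCommGroup E] [InnerProductSpace ℝ E]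

/-- The plane wave `ξ ↦ exp (2πi⟪ξ, τ⟫)` of frequency `τ`. -/
noncomputable def planeWave (τ : E) : E →ᵇ ℂ :=
  BoundedContinuousFunction.char Real.continuous_fourierChar (L := innerₗ E) continuous_inner τ

lemma planeWave_apply (τ ξ : E) : planeWave τ ξ = 𝐞 ⟪ξ, τ⟫ := rfl

/-- Trigonometric polynomials on `E` whose frequencies `τ` lie in the slab `|⟪τ, ω⟫| ≤ R`.
Multiplication by such a function on the Fourier side moves supports by at most `R` in the
direction `ω`. -/
noncomputable def slabTrigPoly (ω : E) (R : ℝ) : Submodule ℂ (E →ᵇ ℂ) :=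
  Submodule.span ℂ (planeWave '' {τ | |⟪τ, ω⟫| ≤ R})

lemma planeWave_add (τ σ : E) : planeWave (τ + σ) = planeWave τ * planeWave σ :=
  BoundedContinuousFunction.char_add_eq_mul τ σ

lemma planeWave_mem_slabTrigPoly {ω τ : E} {R : ℝ} (h : |⟪τ, ω⟫| ≤ R) :
    planeWave τ ∈ slabTrigPoly ω R :=
  Submodule.subset_span ⟨τ, h, rfl⟩

lemma slabTrigPoly_mono (ω : E) : Monotone (slabTrigPoly ω) := fun _ _ h ↦
  Submodule.span_mono (Set.image_mono fun _ hτ ↦ le_trans hτ h)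

instance slabTrigPoly_gradedMonoid (ω : E) : SetLike.GradedMonoid (slabTrigPoly ω) where
  one_mem := by
    have hzero : planeWave (0 : E) = 1 := BoundedContinuousFunction.char_zero_eq_one
    exact hzero ▸ planeWave_mem_slabTrigPoly (by simp)
  mul_mem R R' g g' hg hg' := by
    have hmul := Submodule.mul_mem_mul hg hg'
    rw [slabTrigPoly, slabTrigPoly, Submodule.span_mul_span] at hmul
    refine Submodule.span_mono ?_ hmul
    rintro _ ⟨_, ⟨τ, hτ, rfl⟩, _, ⟨σ, hσ, rfl⟩, rfl⟩
    refine ⟨τ + σ, ?_, planeWave_add τ σ⟩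
    calc |⟪τ + σ, ω⟫| = |⟪τ, ω⟫ + ⟪σ, ω⟫| := by rw [inner_add_left]
      _ ≤ |⟪τ, ω⟫| + |⟪σ, ω⟫| := abs_add_le _ _
      _ ≤ R + R' := add_le_add hτ hσ

lemma aeval_mem_slabTrigPoly {ω : E} {R : ℝ} (hR : 0 ≤ R) {g : E →ᵇ ℂ} (hg : g ∈ slabTrigPoly ω R)
    (p : Polynomial ℂ) : aeval g p ∈ slabTrigPoly ω (p.natDegree * R) := by
  rw [Polynomial.aeval_eq_sum_range]
  refine Submodule.sum_mem _ fun k hk ↦ Submodule.smul_mem _ _ ?_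
  refine slabTrigPoly_mono ω ?_ (SetLike.pow_mem_graded k hg)
  rw [nsmul_eq_mul]
  gcongr
  exact Finset.mem_range_succ_iff.1 hk

/-- The standing wave `ξ ↦ cos (2π⟪ξ, τ⟫)`, a multiplier averaging the translations by `±τ`. -/
noncomputable def cosWave (τ : E) : E →ᵇ ℂ :=
  (2⁻¹ : ℂ) • (planeWave τ + planeWave (-τ))

lemma cosWave_apply (τ ξ : E) : cosWave τ ξ = (Real.cos (2 * Real.pi * ⟪ξ, τ⟫) : ℝ) := by
  simp only [cosWave, smul_add, BoundedContinuousFunction.coe_add,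
    BoundedContinuousFunction.coe_smul, Pi.add_apply, planeWave_apply, Real.fourierChar_apply,
    inner_neg_right, mul_neg, neg_mul, ofReal_neg, ofReal_mul, ofReal_ofNat, smul_eq_mul,
    ofReal_cos, Complex.cos]
  ring

lemma cosWave_mem_slabTrigPoly (ω τ : E) : cosWave τ ∈ slabTrigPoly ω |⟪τ, ω⟫| :=
  Submodule.smul_mem _ _ <| Submodule.add_mem _ (planeWave_mem_slabTrigPoly le_rfl)
    (planeWave_mem_slabTrigPoly (by rw [inner_neg_left, abs_neg]))

lemma exists_orthonormalBasis_apply_eq [FiniteDimensional ℝ E] {ω : E} (hω : ‖ω‖ = 1) :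
    ∃ (u : Finset E) (b : OrthonormalBasis u ℝ E) (i₀ : u), b i₀ = ω := by
  have hortho : Orthonormal ℝ ((↑) : ({ω} : Set E) → E) := by
    simp [orthonormal_subsingleton_iff, hω]
  obtain ⟨u, b, hu, hb⟩ := hortho.exists_orthonormalBasis_extension
  exact ⟨u, b, ⟨ω, hu rfl⟩, by rw [hb]⟩

variable {ι : Type*} [Fintype ι]

/-- The symbol after `N` steps of length `t / N` of the explicit time-stepping scheme
`u (k + 1) = 2 c u k - u (k - 1)` for the wave equation, where `c` is the product of the averages
of the translations by `±(t / N) b i`. -/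
noncomputable def waveApprox (b : OrthonormalBasis ι ℝ E) (t : ℝ) (N : ℕ) : E →ᵇ ℂ :=
  aeval (∏ i, cosWave ((t / N) • b i)) (T ℂ N)

lemma waveApprox_apply (b : OrthonormalBasis ι ℝ E) (t : ℝ) (N : ℕ) (ξ : E) :
    waveApprox b t N ξ =
      ((T ℝ N).eval (∏ i, Real.cos (2 * Real.pi * t * ⟪b i, ξ⟫ / N)) : ℝ) := by
  let evalHom : (E →ᵇ ℂ) →ₐ[ℂ] ℂ :=
    (ContinuousMap.evalAlgHom ℂ ℂ ξ).comp (BoundedContinuousFunction.toContinuousMapₐ ℂ)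
  have hstep : evalHom (∏ i, cosWave ((t / N) • b i)) =
      (∏ i, Real.cos (2 * Real.pi * t * ⟪b i, ξ⟫ / N) : ℝ) := by
    rw [map_prod, Complex.ofReal_prod]
    refine Finset.prod_congr rfl fun i _ ↦ (cosWave_apply _ ξ).trans ?_
    rw [real_inner_smul_right, real_inner_comm]
    ring_nf
  have heval := Polynomial.aeval_algHom_apply evalHom (∏ i, cosWave ((t / N) • b i)) (T ℂ N)
  rw [hstep, Polynomial.Chebyshev.aeval_T] at heval
  exact heval.symm.trans (Polynomial.Chebyshev.algebraMap_eval_T (R := ℝ) _ _).symm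

lemma abs_prod_cos_le_one (a : ι → ℝ) : |∏ i, Real.cos (a i)| ≤ 1 := by
  rw [Finset.abs_prod]
  exact Finset.prod_le_one (fun _ _ ↦ abs_nonneg _) fun _ _ ↦ Real.abs_cos_le_one _

lemma norm_waveApprox_apply_le_one (b : OrthonormalBasis ι ℝ E) (t : ℝ) (N : ℕ) (ξ : E) :
    ‖waveApprox b t N ξ‖ ≤ 1 := by
  rw [waveApprox_apply, Complex.norm_real]
  exact Polynomial.Chebyshev.abs_eval_T_real_le_one N (abs_prod_cos_le_one _)

lemma tendsto_waveApprox (b : OrthonormalBasis ι ℝ E) (t : ℝ) (ξ : E) :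
    Tendsto (fun N : ℕ ↦ waveApprox b t N ξ) atTop
      (𝓝 (Real.cos (2 * Real.pi * ‖ξ‖ * t) : ℝ)) := by
  simp only [waveApprox_apply]
  refine (Complex.continuous_ofReal.tendsto _).comp <|
    tendsto_chebyshevT_eval (fun N ↦ abs_prod_cos_le_one _) ?_
  have hsum : (2 * Real.pi * ‖ξ‖ * t) ^ 2 / 2 = ∑ i, (2 * Real.pi * t * ⟪b i, ξ⟫) ^ 2 / 2 := by
    simp only [mul_pow _ ⟪_, ξ⟫, ← Finset.sum_div, ← Finset.mul_sum, b.sum_sq_inner_right]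
    ring
  rw [hsum]
  exact tendsto_mul_one_sub_prod
    ((tendsto_pow_atTop two_ne_zero).comp tendsto_natCast_atTop_atTop) _
    fun i _ ↦ tendsto_sq_mul_one_sub_cos_div _

lemma sum_abs_inner_smul_basis (b : OrthonormalBasis ι ℝ E) (a : ℝ) (i₀ : ι) :
    ∑ i, |⟪a • b i, b i₀⟫| = |a| := by
  classical
  simp [real_inner_smul_left, b.inner_eq_ite, apply_ite abs]

lemma waveApprox_mem_slabTrigPoly (b : OrthonormalBasis ι ℝ E) (i₀ : ι) (t : ℝ) (N : ℕ) :
    waveApprox b t N ∈ slabTrigPoly (b i₀) |t| := by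
  have hstep : ∏ i, cosWave ((t / N) • b i) ∈ slabTrigPoly (b i₀) |t / N| := by
    rw [← sum_abs_inner_smul_basis b (t / N) i₀]
    exact SetLike.prod_mem_graded _ _ _ fun i _ ↦ cosWave_mem_slabTrigPoly _ _
  refine slabTrigPoly_mono _ ?_ (aeval_mem_slabTrigPoly (abs_nonneg _) hstep (T ℂ N))
  calc ((T ℂ N).natDegree : ℝ) * |t / N| = N * (|t| / N) := by
        rw [Polynomial.Chebyshev.natDegree_T, Int.natAbs_natCast, abs_div, Nat.abs_cast]
    _ = |t| * (N / N) := mul_div_left_comm _ _ _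
    _ ≤ |t| := mul_le_of_le_one_right (abs_nonneg t) (div_self_le_one _)

end TrigonometricPolynomials

section FiniteSpeed

variable {E V : Type*} [NormedAddCommGroup E] [InnerProductSpace ℝ E] [FiniteDimensional ℝ E]
  [MeasurableSpace E] [BorelSpace E] [NormedAddCommGroup V] [NormedSpace ℂ V]

lemma fourierInv_eq_integral_planeWave_smul (φ : E → V) (x : E) :
    𝓕⁻ φ x = ∫ ξ, planeWave x ξ • φ ξ :=
  Real.fourierInv_eq φ x

lemma fourierInv_planeWave_smul (τ x : E) (φ : E → V) :
    𝓕⁻ (fun ξ ↦ planeWave τ ξ • φ ξ) x = 𝓕⁻ φ (x + τ) := by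
  simp only [fourierInv_eq_integral_planeWave_smul, smul_smul, planeWave_add,
    BoundedContinuousFunction.mul_apply]

lemma integrable_boundedContinuousFunction_smul {φ : E → V} (hφ : Integrable φ) (g : E →ᵇ ℂ) :
    Integrable (fun ξ ↦ g ξ • φ ξ) :=
  hφ.bdd_smul ‖g‖ g.continuous.aestronglyMeasurable (.of_forall g.norm_coe_le_norm)

lemma fourierInv_smul_eq_zero_of_mem_slabTrigPoly {φ : E → V} (hφ : Integrable φ) {ω : E} {a R : ℝ}
    (hsupp : ∀ y, a < ⟪y, ω⟫ → 𝓕⁻ φ y = 0) {g : E →ᵇ ℂ} (hg : g ∈ slabTrigPoly ω R) {x : E}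
    (hx : a + R < ⟪x, ω⟫) : 𝓕⁻ (fun ξ ↦ g ξ • φ ξ) x = 0 := by
  have hint (g : E →ᵇ ℂ) : Integrable (fun ξ ↦ planeWave x ξ • g ξ • φ ξ) :=
    integrable_boundedContinuousFunction_smul
      (integrable_boundedContinuousFunction_smul hφ g) (planeWave x)
  induction hg using Submodule.span_induction with
  | mem g hg =>
    obtain ⟨τ, hτ, rfl⟩ := hg
    rw [fourierInv_planeWave_smul]
    refine hsupp _ ?_
    have hτ' : |⟪τ, ω⟫| ≤ R := hτ
    rw [inner_add_left]
    linarith [(abs_le.1 hτ').1]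
  | zero => simp [fourierInv_eq_integral_planeWave_smul]
  | add g₁ g₂ _ _ ih₁ ih₂ =>
    rw [fourierInv_eq_integral_planeWave_smul] at ih₁ ih₂ ⊢
    simp only [BoundedContinuousFunction.add_apply, add_smul, smul_add]
    rw [integral_add (hint g₁) (hint g₂), ih₁, ih₂, add_zero]
  | smul c g _ ih =>
    rw [fourierInv_eq_integral_planeWave_smul] at ih ⊢
    simp only [BoundedContinuousFunction.smul_apply, smul_assoc, smul_comm _ c]
    rw [integral_smul, ih, smul_zero]

lemma tendsto_fourierInv_smul {φ : E → V} (hφ : Integrable φ) {g : ℕ → E →ᵇ ℂ} {m : E → ℂ} {C : ℝ}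
    (hg : ∀ N ξ, ‖g N ξ‖ ≤ C) (hlim : ∀ ξ, Tendsto (fun N ↦ g N ξ) atTop (𝓝 (m ξ))) (x : E) :
    Tendsto (fun N ↦ 𝓕⁻ (fun ξ ↦ g N ξ • φ ξ) x) atTop (𝓝 (𝓕⁻ (fun ξ ↦ m ξ • φ ξ) x)) := by
  simp only [Real.fourierInv_eq]
  refine tendsto_integral_of_dominated_convergence (fun ξ ↦ C * ‖φ ξ‖) (fun N ↦ ?_)
    (hφ.norm.const_mul C) (fun N ↦ .of_forall fun ξ ↦ ?_)
    (.of_forall fun ξ ↦ ((hlim ξ).smul_const _).const_smul _)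
  · exact (integrable_boundedContinuousFunction_smul
      (integrable_boundedContinuousFunction_smul hφ (g N)) (planeWave x)).aestronglyMeasurable
  · rw [Circle.norm_smul, norm_smul]
    gcongr
    exact hg N ξ

theorem fourierInv_cos_norm_smul_eq_zero_of_halfSpace {φ : E → V} (hφ : Integrable φ) {ω : E}
    (hω : ‖ω‖ = 1) {a : ℝ} (hsupp : ∀ y, a < ⟪y, ω⟫ → 𝓕⁻ φ y = 0) {t : ℝ} {x : E}
    (hx : a + |t| < ⟪x, ω⟫) :
    𝓕⁻ (fun ξ ↦ (Real.cos (2 * Real.pi * ‖ξ‖ * t) : ℂ) • φ ξ) x = 0 := by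
  obtain ⟨u, b, i₀, rfl⟩ := exists_orthonormalBasis_apply_eq hω
  have hlim := tendsto_fourierInv_smul hφ (norm_waveApprox_apply_le_one b t)
    (tendsto_waveApprox b t) x
  refine tendsto_nhds_unique hlim (tendsto_const_nhds.congr fun N ↦ ?_)
  exact (fourierInv_smul_eq_zero_of_mem_slabTrigPoly hφ hsupp
    (waveApprox_mem_slabTrigPoly b i₀ t N) hx).symm

theorem fourierInv_cos_norm_smul_eq_zero {φ : E → V} (hφ : Integrable φ) {x₀ : E} {s : ℝ}
    (hs : 0 ≤ s) (hsupp : ∀ y, s < ‖y - x₀‖ → 𝓕⁻ φ y = 0) {t : ℝ} {x : E}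
    (hx : s + |t| < ‖x - x₀‖) :
    𝓕⁻ (fun ξ ↦ (Real.cos (2 * Real.pi * ‖ξ‖ * t) : ℂ) • φ ξ) x = 0 := by
  have hpos : 0 < ‖x - x₀‖ := (by positivity : 0 ≤ s + |t|).trans_lt hx
  set ω : E := ‖x - x₀‖⁻¹ • (x - x₀) with hω_def
  have hω : ‖ω‖ = 1 := by
    rw [hω_def, norm_smul, norm_inv, norm_norm, inv_mul_cancel₀ hpos.ne']
  have hxω : ⟪x - x₀, ω⟫ = ‖x - x₀‖ := by
    rw [hω_def, real_inner_smul_right, real_inner_self_eq_norm_sq]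
    field_simp
  refine fourierInv_cos_norm_smul_eq_zero_of_halfSpace hφ hω (a := ⟪x₀, ω⟫ + s)
    (fun y hy ↦ hsupp y ?_) ?_
  · calc s < ⟪y - x₀, ω⟫ := by rw [inner_sub_left]; linarith
      _ ≤ ‖y - x₀‖ * ‖ω‖ := real_inner_le_norm _ _
      _ = ‖y - x₀‖ := by rw [hω, mul_one]
  · rw [inner_sub_left] at hxω
    linarith

lemma fourierInv_integral {α : Type*} [MeasurableSpace α] {μ : Measure α} [SFinite μ]
    {K : α → E → V} (hK : Integrable (Function.uncurry K) (μ.prod volume)) (x : E) :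
    𝓕⁻ (fun ξ ↦ ∫ t, K t ξ ∂μ) x = ∫ t, 𝓕⁻ (K t) x ∂μ := by
  have hint : Integrable (Function.uncurry fun t ξ ↦ planeWave x ξ • K t ξ) (μ.prod volume) :=
    hK.bdd_smul ‖planeWave x‖
      (planeWave x).continuous.aestronglyMeasurable.comp_snd
      (.of_forall fun p ↦ (planeWave x).norm_coe_le_norm p.2)
  simp only [fourierInv_eq_integral_planeWave_smul, ← integral_smul]
  exact (integral_integral_swap hint).symm

lemma fourierInv_const_smul (c : ℂ) (φ : E → V) (x : E) :
    𝓕⁻ (fun ξ ↦ c • φ ξ) x = c • 𝓕⁻ φ x := by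
  simp only [fourierInv_eq_integral_planeWave_smul, smul_comm _ c, integral_smul]

theorem finite_speed_of_propagation_multiplier_general [CompleteSpace V] {μ : Measure ℝ} [SFinite μ]
    {r : ℝ} {G : ℝ → ℂ} (hG : IntegrableOn G (Set.Icc (-r) r) μ) {F : ℝ → ℂ}
    (hF : ∀ l : ℝ, F l = ∫ t in Set.Icc (-r) r, G t * Real.cos (l * t) ∂μ)
    {φ : E → V} (hφ : Integrable φ) {x₀ : E} {s : ℝ} (hs : 0 ≤ s)
    (hsupp : ∀ y, s < ‖y - x₀‖ → 𝓕⁻ φ y = 0) {x : E} (hx : s + r < ‖x - x₀‖) :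
    𝓕⁻ (fun ξ ↦ F (2 * Real.pi * ‖ξ‖) • φ ξ) x = 0 := by
  let K (t : ℝ) (ξ : E) : V := G t • (Real.cos (2 * Real.pi * ‖ξ‖ * t) : ℂ) • φ ξ
  have hK : Integrable (Function.uncurry K) ((μ.restrict (Set.Icc (-r) r)).prod volume) := by
    have hcos : Continuous fun p : ℝ × E ↦ (Real.cos (2 * Real.pi * ‖p.2‖ * p.1) : ℂ) := by fun_prop
    refine ((hG.smul_prod hφ).bdd_smul 1 hcos.aestronglyMeasurable (.of_forall fun p ↦ ?_)).congr
      (.of_forall fun p ↦ smul_comm _ (G p.1) (φ p.2))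
    rw [Complex.norm_real]
    exact Real.abs_cos_le_one _
  have hF_smul (ξ : E) : F (2 * Real.pi * ‖ξ‖) • φ ξ = ∫ t in Set.Icc (-r) r, K t ξ ∂μ := by
    simp only [K, hF, ← integral_smul_const, mul_smul]
  have hK_zero (t : ℝ) (ht : t ∈ Set.Icc (-r) r) : 𝓕⁻ (K t) x = 0 := by
    have hxt : s + |t| < ‖x - x₀‖ := by linarith [abs_le.2 ht]
    rw [fourierInv_const_smul, fourierInv_cos_norm_smul_eq_zero hφ hs hsupp hxt, smul_zero]
  simp only [hF_smul]
  rw [fourierInv_integral hK]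
  exact setIntegral_eq_zero_of_forall_eq_zero hK_zero

end FiniteSpeed

theorem finite_speed_of_propagation_multiplier (n : ℕ) (hn : 1 ≤ n) (r : ℝ) (hr : 0 < r)
    (G : ℝ → ℂ) (hG : IntegrableOn G (Set.Icc (-r) r))
    (F : ℝ → ℂ)
    (hF : ∀ l : ℝ, F l = ∫ t in Set.Icc (-r) r, G t * Complex.cos ((l : ℂ) * (t : ℂ)))
    (x₀ : EuclideanSpace ℝ (Fin n)) (s : ℝ) (hs : 0 < s)
    (f : SchwartzMap (EuclideanSpace ℝ (Fin n)) ℂ)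
    (hf : ∀ y : EuclideanSpace ℝ (Fin n), s < ‖y - x₀‖ → f y = 0)
    (x : EuclideanSpace ℝ (Fin n)) (hx : s + r < ‖x - x₀‖) :
    ∫ ξ : EuclideanSpace ℝ (Fin n),
        F (2 * Real.pi * ‖ξ‖) * 𝓕 (⇑f) ξ *
          Complex.exp (2 * Real.pi * Complex.I * (⟪x, ξ⟫ : ℝ)) = 0 := by
  have hinv : 𝓕⁻ (𝓕 ⇑f) = ⇑f := by
    rw [← SchwartzMap.fourier_coe, ← SchwartzMap.fourierInv_coe,
      FourierTransform.fourierInv_fourier_eq]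
  have hvanish := finite_speed_of_propagation_multiplier_general hG
    (fun l ↦ by simpa using hF l) (φ := 𝓕 ⇑f) (𝓕 f).integrable hs.le (by rwa [hinv]) hx
  rw [Real.fourierInv_eq'] at hvanish
  rw [← hvanish]
  refine integral_congr_ae (.of_forall fun ξ ↦ ?_)
  simp only [real_inner_comm x ξ, ofReal_mul, ofReal_ofNat, smul_eq_mul]
  ring_nf
end
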